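/- There exists a function β' : ℕ × ℕ → ℕ (independent of the prime p) with the following property: for every prime p and every n×n m-sparse polynomial system G over ℂ_p, the number of isolated roots x = (x_1,…,x_n) ∈ ℂ_p^n of G satisfying |x_i − 1|_p ≤ 1/p for all i is at most β'(n,m). -/

import Mathlib

/-!
Write `x = 1 + p u` with `u` in the unit polydisc. Since
`(1 + p u) ^ a = ∑ j, a (a - 1) ⋯ (a - j + 1) / j! * p ^ j * u ^ j`, a monomial of a sparse system
is the value at `s = p` of a power series in `s` whose `j`-th coefficient is a polynomial in `u` and
in the exponent `a`, of degree `O(j)` and with denominator `j!`. The exponents are integers, hence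
lie in the unit ball, and each equation may be scaled so that its coefficients do too. Replacing
exponents and coefficients by indeterminates gives one finite family of power series over a ring
`R`, of which all `m`-sparse systems are specializations `R → ℂ_p` that map a noetherian subring
`R₀` to the unit ball. The theorem becomes a uniform finiteness statement for such families.

In these series the coefficient of `s ^ k` has degree `O(k + 1)` and a denominator dividing
`(C k)!`. By Legendre's formula `v_p((C k)!) ≤ C k / (p - 1)`, so they can be evaluated at `s = p`
whenever `p > 2 C`, and one bound serves all large primes. For each of the finitely many remaining
primes one works over `ℤ_p` and allows no denominators: one writes `(1 + p u) ^ p = 1 + p² Y(u)` and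
`a = r + p q` with `r < p`, and uses that `p ^ j / j!` is a `p`-adic integer.

Uniform finiteness is proved by induction on the number of variables.

* As `R₀` is noetherian, the coefficients of all monomials (which are power series in `s`) are
  combinations, with controlled denominators, of those of bounded degree.
* For a given specialization either all coefficients vanish, and no zero is isolated, or, after one
  of finitely many rescalings of the variables by powers of a root of `s`, one coefficient of
  bounded degree strictly dominates all others. Dividing by it and replacing the small quotients by
  new indeterminates gives a family in which one series has a monomial as constant term in `s`.
* A linear change of variables makes this monomial monic in the first variable, and Weierstrass
  division replaces all series by polynomials in the first variable.
* The first variable is then eliminated. Near an isolated zero some minor of the matrix whose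
  rank computes the degree of the gcd is nonzero, and the minors bordering it, which are series in
  the other variables, have the projection of the zero as an isolated common zero. Each fibre of the
  projection has at most as many points as the degree in the first variable.
-/

open MvPolynomial Filter Topology

/-- The zero set in `F^n` of a `k`-tuple of `n`-variate polynomials. -/
def zeroSet {F : Type*} [CommSemiring F] {k n : ℕ}
    (G : Fin k → MvPolynomial (Fin n) F) : Set (Fin n → F) :=
  {x | ∀ i, MvPolynomial.eval x (G i) = 0}

/-- `ζ` is an isolated root of the system `G`: it is a root, and an isolated point of the
zero set of `G` in the metric topology. -/
def IsIsolatedRoot {F : Type*} [NormedField F] {k n : ℕ}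
    (G : Fin k → MvPolynomial (Fin n) F) (ζ : Fin n → F) : Prop :=
  ζ ∈ zeroSet G ∧ 𝓝[zeroSet G \ {ζ}] ζ = ⊥

/-- A `k × n` `m`-sparse polynomial system: all the `gᵢ` are nonzero and the union of their
supports has exactly `m` elements. -/
def IsSparseSystem {F : Type*} [CommSemiring F] {k n : ℕ}
    (G : Fin k → MvPolynomial (Fin n) F) (m : ℕ) : Prop :=
  (∀ i, G i ≠ 0) ∧ (Finset.univ.biUnion fun i => (G i).support).card = m

/-- The property that `β' : ℕ × ℕ → ℕ` bounds (independently of the prime `p`) the number of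
isolated roots `x ∈ ℂ_pⁿ` of an `n × n` `m`-sparse polynomial system over `ℂ_p` satisfying
`|xᵢ - 1|_p ≤ 1/p` for all `i`.  Here `Cp` ranges over all fields satisfying the
characterizing axioms of `ℂ_p`. -/
def LipshitzBound (β' : ℕ × ℕ → ℕ) : Prop :=
  ∀ (p : ℕ) (_ : Fact p.Prime)
    (Cp : Type) (_ : NormedField Cp) (_ : IsUltrametricDist Cp)
    (_ : CompleteSpace Cp) (_ : IsAlgClosed Cp) (_ : Algebra ℚ_[p] Cp)
    (_ : Isometry (algebraMap ℚ_[p] Cp))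
    (_ : Dense {x : Cp | IsAlgebraic ℚ_[p] x})
    (n m : ℕ) (G : Fin n → MvPolynomial (Fin n) Cp), IsSparseSystem G m →
      {x : Fin n → Cp | IsIsolatedRoot G x ∧ ∀ i, ‖x i - 1‖ ≤ 1 / (p : ℝ)}.Finite ∧
      ({x : Fin n → Cp | IsIsolatedRoot G x ∧ ∀ i, ‖x i - 1‖ ≤ 1 / (p : ℝ)}.ncard : ℝ) ≤
        β' (n, m)

namespace Lipshitz

/-! ### Denominators -/

/-- A sequence of admissible denominators, submultiplicative with respect to divisibility. The
sequence `N ↦ N!` serves the large primes, the constant sequence `1` the others. -/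
structure DenomSeq where
  toFun : ℕ → ℕ
  map_zero' : toFun 0 = 1
  ne_zero' : ∀ N, toFun N ≠ 0
  mul_dvd' : ∀ M N, toFun M * toFun N ∣ toFun (M + N)

namespace DenomSeq

instance : CoeFun DenomSeq fun _ => ℕ → ℕ := ⟨toFun⟩

/-- The constant sequence `1`: no denominators are allowed. -/
protected def one : DenomSeq where
  toFun _ := 1
  map_zero' := rfl
  ne_zero' _ := one_ne_zero
  mul_dvd' _ _ := by simp

/-- The sequence `N ↦ N!`. -/
def factorial : DenomSeq where
  toFun := Nat.factorial
  map_zero' := Nat.factorial_zero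
  ne_zero' := Nat.factorial_ne_zero
  mul_dvd' := Nat.factorial_mul_factorial_dvd_factorial_add

variable (δ : DenomSeq)

@[simp] lemma map_zero : δ 0 = 1 := δ.map_zero'

lemma ne_zero (N : ℕ) : δ N ≠ 0 := δ.ne_zero' N

lemma mul_dvd (M N : ℕ) : δ M * δ N ∣ δ (M + N) := δ.mul_dvd' M N

lemma dvd_of_le {M N : ℕ} (h : M ≤ N) : δ M ∣ δ N := by
  obtain ⟨c, rfl⟩ := Nat.exists_eq_add_of_le h
  exact (Dvd.intro _ rfl).trans (δ.mul_dvd M c)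

lemma pow_dvd (N L : ℕ) : δ N ^ L ∣ δ (N * L) := by
  induction L with
  | zero => simp
  | succ L ih =>
    rw [pow_succ, Nat.mul_succ]
    exact (Nat.mul_dvd_mul_right ih _).trans (δ.mul_dvd _ _)

end DenomSeq

section WithDenom

variable {B : Type*} [CommRing B] (B₀ : Subring B) (δ : DenomSeq)

/-- The elements of `B` whose denominator with respect to `B₀` divides `δ N`. -/
def withDenom (N : ℕ) : Submodule B₀ B where
  carrier := {b | (δ N : B) * b ∈ B₀}
  zero_mem' := by simp
  add_mem' {a b} ha hb := by
    simpa only [Set.mem_ofPred_eq, mul_add] using B₀.add_mem ha hb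
  smul_mem' c b hb := by
    simpa only [Set.mem_ofPred_eq, Subring.smul_def, smul_eq_mul, mul_left_comm] using
      B₀.mul_mem c.2 hb

variable {B₀ δ}

lemma mem_withDenom {N : ℕ} {b : B} : b ∈ withDenom B₀ δ N ↔ (δ N : B) * b ∈ B₀ := Iff.rfl

lemma withDenom_mono {M N : ℕ} (h : M ≤ N) : withDenom B₀ δ M ≤ withDenom B₀ δ N := by
  intro b hb
  obtain ⟨c, hc⟩ := δ.dvd_of_le h
  rw [mem_withDenom, hc, Nat.cast_mul, mul_comm _ (c : B), mul_assoc]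
  exact B₀.mul_mem (natCast_mem _ _) hb

lemma mul_mem_withDenom {M N : ℕ} {a b : B} (ha : a ∈ withDenom B₀ δ M)
    (hb : b ∈ withDenom B₀ δ N) : a * b ∈ withDenom B₀ δ (M + N) := by
  obtain ⟨c, hc⟩ := δ.mul_dvd M N
  have expand : (δ (M + N) : B) * (a * b) = c * ((δ M * a) * (δ N * b)) := by
    rw [hc]; push_cast; ring
  rw [mem_withDenom, expand]
  exact B₀.mul_mem (natCast_mem _ _) (B₀.mul_mem ha hb)

lemma mem_withDenom_of_mem {N : ℕ} {b : B} (h : b ∈ B₀) : b ∈ withDenom B₀ δ N :=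
  B₀.mul_mem (natCast_mem _ _) h

@[simp] lemma mem_withDenom_zero {b : B} : b ∈ withDenom B₀ δ 0 ↔ b ∈ B₀ := by
  simp [mem_withDenom]

variable (B₀ δ) in
/-- The polynomials of degree at most `m` whose coefficients have denominator dividing `δ N`. -/
def polyWithDenom (σ : Type*) (N m : ℕ) : Submodule B₀ (MvPolynomial σ B) where
  carrier := {q | ∀ ν, coeff ν q ∈ withDenom B₀ δ N ∧ (coeff ν q ≠ 0 → ν.degree ≤ m)}
  zero_mem' ν := by simp
  add_mem' {p q} hp hq ν := by
    rw [coeff_add]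
    refine ⟨add_mem (hp ν).1 (hq ν).1, fun h => ?_⟩
    by_cases hν : coeff ν p = 0
    · exact (hq ν).2 (by simpa [hν] using h)
    · exact (hp ν).2 hν
  smul_mem' c q hq ν := by
    rw [coeff_smul]
    exact ⟨Submodule.smul_mem _ c (hq ν).1, fun h => (hq ν).2 fun h0 => h (by rw [h0, smul_zero])⟩

variable {σ : Type*}

lemma mem_polyWithDenom {N m : ℕ} {q : MvPolynomial σ B} :
    q ∈ polyWithDenom B₀ δ σ N m ↔
      ∀ ν, coeff ν q ∈ withDenom B₀ δ N ∧ (coeff ν q ≠ 0 → ν.degree ≤ m) := Iff.rfl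

lemma polyWithDenom_mono {N N' m m' : ℕ} (hN : N ≤ N') (hm : m ≤ m') :
    polyWithDenom B₀ δ σ N m ≤ polyWithDenom B₀ δ σ N' m' :=
  fun _ hq ν => ⟨withDenom_mono hN (hq ν).1, fun h => ((hq ν).2 h).trans hm⟩

lemma mul_mem_polyWithDenom {N N' m m' : ℕ} {p q : MvPolynomial σ B}
    (hp : p ∈ polyWithDenom B₀ δ σ N m) (hq : q ∈ polyWithDenom B₀ δ σ N' m') :
    p * q ∈ polyWithDenom B₀ δ σ (N + N') (m + m') := by
  classical
  intro ν
  rw [coeff_mul]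
  refine ⟨sum_mem fun x _ => mul_mem_withDenom (hp _).1 (hq _).1, fun h => ?_⟩
  obtain ⟨x, hx, hne⟩ := Finset.exists_ne_zero_of_sum_ne_zero h
  rw [Finset.HasAntidiagonal.mem_antidiagonal] at hx
  rw [← hx, map_add]
  exact add_le_add ((hp _).2 (left_ne_zero_of_mul hne)) ((hq _).2 (right_ne_zero_of_mul hne))

lemma monomial_mem_polyWithDenom {N m : ℕ} {ν : σ →₀ ℕ} {b : B} (hb : b ∈ withDenom B₀ δ N)
    (hν : b ≠ 0 → ν.degree ≤ m) : monomial ν b ∈ polyWithDenom B₀ δ σ N m := by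
  classical
  intro μ
  rw [coeff_monomial]
  split_ifs with h
  · subst h; exact ⟨hb, hν⟩
  · exact ⟨zero_mem _, fun h0 => absurd rfl h0⟩

lemma C_mem_polyWithDenom {N m : ℕ} {b : B} (hb : b ∈ withDenom B₀ δ N) :
    C b ∈ polyWithDenom B₀ δ σ N m :=
  monomial_mem_polyWithDenom hb (by simp)

lemma one_mem_polyWithDenom (N m : ℕ) : 1 ∈ polyWithDenom B₀ δ σ N m := by
  rw [← C_1]
  exact C_mem_polyWithDenom (mem_withDenom_of_mem B₀.one_mem)

lemma X_mem_polyWithDenom (N : ℕ) (i : σ) : X i ∈ polyWithDenom B₀ δ σ N 1 :=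
  monomial_mem_polyWithDenom (mem_withDenom_of_mem B₀.one_mem) (by simp)

lemma prod_mem_polyWithDenom {ι : Type*} {t : Finset ι} {m : ι → ℕ} {f : ι → MvPolynomial σ B}
    (h : ∀ i ∈ t, f i ∈ polyWithDenom B₀ δ σ 0 (m i)) :
    ∏ i ∈ t, f i ∈ polyWithDenom B₀ δ σ 0 (∑ i ∈ t, m i) := by
  classical
  induction t using Finset.induction_on with
  | empty => rw [Finset.prod_empty]; exact one_mem_polyWithDenom 0 _
  | insert a t ha ih =>
    rw [Finset.prod_insert ha, Finset.sum_insert ha]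
    exact mul_mem_polyWithDenom (N := 0) (N' := 0) (h a (by simp))
      (ih fun i hi => h i (by simp [hi]))

lemma pow_mem_polyWithDenom {m : ℕ} {p : MvPolynomial σ B}
    (hp : p ∈ polyWithDenom B₀ δ σ 0 m) (r : ℕ) :
    p ^ r ∈ polyWithDenom B₀ δ σ 0 (r * m) := by
  have h := prod_mem_polyWithDenom (t := Finset.range r) (f := fun _ => p) (m := fun _ => m)
    fun _ _ => hp
  rwa [Finset.prod_const, Finset.sum_const, Finset.card_range, smul_eq_mul] at h

lemma rename_mem_polyWithDenom {τ : Type*} (j : σ → τ) {N m : ℕ} {p : MvPolynomial σ B}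
    (hp : p ∈ polyWithDenom B₀ δ σ N m) : rename j p ∈ polyWithDenom B₀ δ τ N m := by
  rw [p.as_sum, map_sum]
  refine sum_mem fun ν _ => ?_
  rw [rename_monomial]
  exact monomial_mem_polyWithDenom (hp ν).1 fun h => by
    rw [Finsupp.degree_mapDomain]; exact (hp ν).2 h

variable (B₀ δ) in
/-- The ring of power series `∑ qₖ sᵏ` in a variable `s` whose coefficients `qₖ` are polynomials
of degree `O(k + 1)` with denominators dividing `δ (C k)`. -/
def controlledSeries (C : ℕ) (σ : Type*) : Subring (PowerSeries (MvPolynomial σ B)) where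
  carrier := {f | ∃ E, ∀ k, PowerSeries.coeff k f ∈ polyWithDenom B₀ δ σ (C * k) (E * (k + 1))}
  zero_mem' := ⟨0, fun k => by simp⟩
  one_mem' := ⟨0, fun k => by
    classical
    rw [PowerSeries.coeff_one]
    split_ifs
    · exact one_mem_polyWithDenom _ _
    · exact zero_mem _⟩
  add_mem' := by
    rintro f g ⟨E, hE⟩ ⟨E', hE'⟩
    refine ⟨E + E', fun k => ?_⟩
    rw [map_add]
    exact add_mem (polyWithDenom_mono le_rfl (by gcongr; omega) (hE k))
      (polyWithDenom_mono le_rfl (by gcongr; omega) (hE' k))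
  neg_mem' := by
    rintro f ⟨E, hE⟩
    exact ⟨E, fun k => by rw [map_neg]; exact neg_mem (hE k)⟩
  mul_mem' := by
    classical
    rintro f g ⟨E, hE⟩ ⟨E', hE'⟩
    refine ⟨E + E', fun k => ?_⟩
    rw [PowerSeries.coeff_mul]
    refine sum_mem fun x hx => ?_
    rw [Finset.HasAntidiagonal.mem_antidiagonal] at hx
    refine polyWithDenom_mono (by rw [← hx, mul_add]) ?_
      (mul_mem_polyWithDenom (hE x.1) (hE' x.2))
    rw [add_mul]
    gcongr <;> omega

lemma C_mem_controlledSeries {C m : ℕ} {q : MvPolynomial σ B}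
    (h : q ∈ polyWithDenom B₀ δ σ 0 m) : PowerSeries.C q ∈ controlledSeries B₀ δ C σ := by
  classical
  refine ⟨m, fun k => ?_⟩
  rw [PowerSeries.coeff_C]
  split_ifs with hk
  · subst hk; exact polyWithDenom_mono (Nat.zero_le _) (by simp) h
  · exact zero_mem _

end WithDenom

/-! ### Evaluation of power series -/

section SeriesEval

variable {K : Type*} [NormedField K] {A : Type*} [CommRing A]

/-- The value at `s` of the power series obtained from `f` by applying `E` to its coefficients
(`0` if the series does not converge). -/
noncomputable def seriesEval (E : A →+* K) (s : K) (f : PowerSeries A) : K :=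
  ∑' k, E (PowerSeries.coeff k f) * s ^ k

/-- Absolute convergence of `seriesEval E s f`. -/
def ConvergesAt (E : A →+* K) (s : K) (f : PowerSeries A) : Prop :=
  Summable fun k => ‖E (PowerSeries.coeff k f) * s ^ k‖

/-- Geometric decay of the terms of `seriesEval E s f`, at the rate `√‖s‖`. -/
def DecaysAt (E : A →+* K) (s : K) (f : PowerSeries A) : Prop :=
  ∀ k, ‖E (PowerSeries.coeff k f) * s ^ k‖ ≤ (√‖s‖) ^ k

lemma sqrt_lt_one {x : ℝ} (h : x < 1) : √x < 1 := by
  rw [Real.sqrt_lt' one_pos]; simpa using h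

lemma DecaysAt.convergesAt {E : A →+* K} {s : K} {f : PowerSeries A} (h : DecaysAt E s f)
    (hs : ‖s‖ < 1) : ConvergesAt E s f :=
  Summable.of_nonneg_of_le (fun _ => norm_nonneg _) h
    (summable_geometric_of_lt_one (Real.sqrt_nonneg _) (sqrt_lt_one hs))

lemma DecaysAt.norm_seriesEval_le_one [IsUltrametricDist K] {E : A →+* K} {s : K}
    {f : PowerSeries A} (h : DecaysAt E s f) (hs : ‖s‖ < 1) : ‖seriesEval E s f‖ ≤ 1 := by
  refine IsUltrametricDist.norm_tsum_le_of_forall_le_of_nonneg zero_le_one fun k => ?_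
  exact (h k).trans (pow_le_one₀ (Real.sqrt_nonneg _) (sqrt_lt_one hs).le)

lemma seriesEval_C (E : A →+* K) (s : K) (a : A) : seriesEval E s (PowerSeries.C a) = E a := by
  unfold seriesEval
  rw [tsum_eq_single 0]
  · simp
  · intro k hk
    simp [PowerSeries.coeff_C, hk]

@[simp] lemma seriesEval_zero (E : A →+* K) (s : K) : seriesEval E s 0 = 0 := by
  simp [seriesEval]

@[simp] lemma seriesEval_one (E : A →+* K) (s : K) : seriesEval E s 1 = 1 := by
  simpa using seriesEval_C E s 1

lemma seriesEval_X_pow_mul (E : A →+* K) (s : K) (a : ℕ) (f : PowerSeries A) :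
    seriesEval E s (PowerSeries.X ^ a * f) = s ^ a * seriesEval E s f := by
  unfold seriesEval
  rw [← tsum_mul_left, ← (add_left_injective a).tsum_eq]
  · congr 1; ext k
    simp only [PowerSeries.coeff_X_pow_mul]
    rw [pow_add]; ring
  · intro k hk
    rw [Function.mem_support, PowerSeries.coeff_X_pow_mul'] at hk
    by_cases h : a ≤ k
    · exact ⟨k - a, Nat.sub_add_cancel h⟩
    · simp [h] at hk

lemma seriesEval_expand (E : A →+* K) (s : K) (L : ℕ) (hL : L ≠ 0) (f : PowerSeries A) :
    seriesEval E s (PowerSeries.expand L hL f) = seriesEval E (s ^ L) f := by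
  unfold seriesEval
  rw [← (mul_right_injective₀ hL).tsum_eq]
  · congr 1; ext k
    simp only [PowerSeries.coeff_expand_mul]
    rw [← pow_mul]
  · intro k hk
    rw [Function.mem_support, PowerSeries.coeff_expand] at hk
    by_cases h : L ∣ k
    · obtain ⟨c, rfl⟩ := h
      exact ⟨c, rfl⟩
    · simp [h] at hk

lemma seriesEval_map {A' : Type*} [CommRing A'] (E : A' →+* K) (ψ : A →+* A') (s : K)
    (f : PowerSeries A) : seriesEval E s (PowerSeries.map ψ f) = seriesEval (E.comp ψ) s f := by
  simp [seriesEval]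

variable [CompleteSpace K] {E : A →+* K} {s : K}

lemma seriesEval_add {f g : PowerSeries A} (hf : ConvergesAt E s f) (hg : ConvergesAt E s g) :
    seriesEval E s (f + g) = seriesEval E s f + seriesEval E s g := by
  unfold seriesEval
  rw [← hf.of_norm.tsum_add hg.of_norm]
  congr 1; ext k
  rw [map_add, map_add, add_mul]

lemma seriesEval_mul {f g : PowerSeries A} (hf : ConvergesAt E s f) (hg : ConvergesAt E s g) :
    seriesEval E s (f * g) = seriesEval E s f * seriesEval E s g := by
  unfold seriesEval
  rw [tsum_mul_tsum_eq_tsum_sum_antidiagonal_of_summable_norm hf hg]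
  congr 1; ext k
  rw [PowerSeries.coeff_mul, map_sum, Finset.sum_mul]
  refine Finset.sum_congr rfl fun x hx => ?_
  rw [Finset.HasAntidiagonal.mem_antidiagonal] at hx
  rw [map_mul, ← hx, pow_add]; ring

lemma seriesEval_sum {ι : Type*} {t : Finset ι} {f : ι → PowerSeries A}
    (hf : ∀ i ∈ t, ConvergesAt E s (f i)) :
    seriesEval E s (∑ i ∈ t, f i) = ∑ i ∈ t, seriesEval E s (f i) := by
  unfold seriesEval
  rw [← Summable.tsum_finsetSum fun i hi => (hf i hi).of_norm]
  congr 1; ext k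
  rw [map_sum, map_sum, Finset.sum_mul]

end SeriesEval

section Absorbs

variable {K : Type*} [NormedField K]

/-- The element `s` is small enough to absorb the denominators `δ (C k)` in degree `k`. Because of
the square, half of the factor `s ^ k` is left over for convergence. -/
structure Absorbs (δ : DenomSeq) (C : ℕ) (s : K) : Prop where
  norm_pos : 0 < ‖s‖
  norm_lt_one : ‖s‖ < 1
  norm_pow_le : ∀ k, ‖s‖ ^ k ≤ ‖(δ (C * k) : K)‖ ^ 2

variable {δ : DenomSeq}

lemma Absorbs.norm_mul_pow_le {C k : ℕ} {s x : K} (h : Absorbs δ C s)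
    (hx : ‖(δ (C * k) : K)‖ * ‖x‖ ≤ 1) : ‖x * s ^ k‖ ≤ (√‖s‖) ^ k := by
  have hpos : 0 < √‖s‖ ^ k := pow_pos (Real.sqrt_pos.mpr h.norm_pos) _
  have hsq : (√‖s‖ ^ k) ^ 2 ≤ ‖(δ (C * k) : K)‖ ^ 2 := by
    rw [← pow_mul, mul_comm, pow_mul, Real.sq_sqrt h.norm_pos.le]
    exact h.norm_pow_le k
  have hroot : √‖s‖ ^ k ≤ ‖(δ (C * k) : K)‖ :=
    (pow_le_pow_iff_left₀ hpos.le (norm_nonneg _) two_ne_zero).mp hsq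
  calc ‖x * s ^ k‖ = ‖x‖ * √‖s‖ ^ k * √‖s‖ ^ k := by
        rw [norm_mul, norm_pow, mul_assoc, ← mul_pow, Real.mul_self_sqrt h.norm_pos.le]
    _ ≤ ‖x‖ * ‖(δ (C * k) : K)‖ * √‖s‖ ^ k := by gcongr
    _ ≤ √‖s‖ ^ k := mul_le_of_le_one_left hpos.le (by rwa [mul_comm])

variable {B : Type*} [CommRing B] {B₀ : Subring B} {φ : B →+* K} {σ : Type*}

lemma norm_le_one_of_mem_withDenom {N : ℕ} {b : B} (hφ : ∀ b ∈ B₀, ‖φ b‖ ≤ 1)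
    (h : b ∈ withDenom B₀ δ N) : ‖(δ N : K)‖ * ‖φ b‖ ≤ 1 := by
  simpa using hφ _ h

variable [IsUltrametricDist K]

lemma norm_natCast_le_of_dvd {a b : ℕ} (h : a ∣ b) : ‖(b : K)‖ ≤ ‖(a : K)‖ := by
  obtain ⟨c, rfl⟩ := h
  rw [Nat.cast_mul, norm_mul]
  exact mul_le_of_le_one_right (norm_nonneg _) (IsUltrametricDist.norm_natCast_le_one K c)

lemma Absorbs.mono {C C' : ℕ} {s : K} (h : Absorbs δ C' s) (hC : C ≤ C') : Absorbs δ C s :=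
  ⟨h.norm_pos, h.norm_lt_one, fun k => (h.norm_pow_le k).trans <| by
    gcongr
    exact norm_natCast_le_of_dvd (δ.dvd_of_le (Nat.mul_le_mul_right k hC))⟩

lemma Absorbs.root {C L : ℕ} {s ϖ : K} (hL : L ≠ 0) (hϖ : ϖ ^ L = s)
    (h : Absorbs δ (C * L) s) : Absorbs δ C ϖ := by
  subst hϖ
  have hpos := h.norm_pos
  have hlt := h.norm_lt_one
  rw [norm_pow] at hpos hlt
  refine ⟨(norm_nonneg ϖ).lt_of_ne' fun h0 => ?_,
    (pow_lt_one_iff_of_nonneg (norm_nonneg _) hL).mp hlt, fun k => ?_⟩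
  · simp [h0, hL] at hpos
  · have hδ : ‖(δ (C * L * k) : K)‖ ≤ ‖(δ (C * k) : K)‖ ^ L := by
      rw [← norm_pow, ← Nat.cast_pow, mul_right_comm]
      exact norm_natCast_le_of_dvd (δ.pow_dvd (C * k) L)
    have hpow : (‖ϖ‖ ^ k) ^ L ≤ (‖(δ (C * k) : K)‖ ^ 2) ^ L := by
      calc (‖ϖ‖ ^ k) ^ L = ‖ϖ ^ L‖ ^ k := by rw [norm_pow, ← pow_mul, ← pow_mul, mul_comm]
        _ ≤ ‖(δ (C * L * k) : K)‖ ^ 2 := h.norm_pow_le k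
        _ ≤ (‖(δ (C * k) : K)‖ ^ L) ^ 2 := by gcongr
        _ = _ := pow_right_comm _ _ _
    exact (pow_le_pow_iff_left₀ (by positivity) (by positivity) hL).mp hpow

lemma norm_le_one_of_mem_polyWithDenom {N m : ℕ} {q : MvPolynomial σ B} {v : σ → K}
    (hφ : ∀ b ∈ B₀, ‖φ b‖ ≤ 1) (hv : ∀ i, ‖v i‖ ≤ 1) (h : q ∈ polyWithDenom B₀ δ σ N m) :
    ‖(δ N : K)‖ * ‖eval₂Hom φ v q‖ ≤ 1 := by
  rw [← norm_mul, coe_eval₂Hom, eval₂_eq, Finset.mul_sum]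
  refine IsUltrametricDist.norm_sum_le_of_forall_le_of_nonneg zero_le_one fun ν _ => ?_
  rw [← mul_assoc, norm_mul, norm_mul]
  refine mul_le_one₀ (norm_le_one_of_mem_withDenom hφ (h ν).1) (norm_nonneg _) ?_
  rw [norm_prod]
  refine Finset.prod_le_one (fun _ _ => norm_nonneg _) fun i _ => ?_
  rw [norm_pow]
  exact pow_le_one₀ (norm_nonneg _) (hv i)

lemma decaysAt_of_mem_controlledSeries {C : ℕ} {s : K} {v : σ → K}
    {f : PowerSeries (MvPolynomial σ B)} (hs : Absorbs δ C s) (hφ : ∀ b ∈ B₀, ‖φ b‖ ≤ 1)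
    (hv : ∀ i, ‖v i‖ ≤ 1) (hf : f ∈ controlledSeries B₀ δ C σ) :
    DecaysAt (eval₂Hom φ v) s f := by
  obtain ⟨E, hE⟩ := hf
  exact fun k => hs.norm_mul_pow_le (norm_le_one_of_mem_polyWithDenom hφ hv (hE k))

lemma convergesAt_of_mem_controlledSeries {C : ℕ} {s : K} {v : σ → K}
    {f : PowerSeries (MvPolynomial σ B)} (hs : Absorbs δ C s) (hφ : ∀ b ∈ B₀, ‖φ b‖ ≤ 1)
    (hv : ∀ i, ‖v i‖ ≤ 1) (hf : f ∈ controlledSeries B₀ δ C σ) :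
    ConvergesAt (eval₂Hom φ v) s f :=
  (decaysAt_of_mem_controlledSeries hs hφ hv hf).convergesAt hs.norm_lt_one

variable [CompleteSpace K]

/-- Evaluation of the controlled series at `s` and at a point `v` of the unit polydisc, as a ring
homomorphism. -/
noncomputable def seriesEvalHom {C : ℕ} {s : K} {v : σ → K} (hs : Absorbs δ C s)
    (hφ : ∀ b ∈ B₀, ‖φ b‖ ≤ 1) (hv : ∀ i, ‖v i‖ ≤ 1) : controlledSeries B₀ δ C σ →+* K where
  toFun f := seriesEval (eval₂Hom φ v) s f
  map_one' := seriesEval_one _ _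
  map_zero' := seriesEval_zero _ _
  map_add' f g := seriesEval_add (convergesAt_of_mem_controlledSeries hs hφ hv f.2)
    (convergesAt_of_mem_controlledSeries hs hφ hv g.2)
  map_mul' f g := seriesEval_mul (convergesAt_of_mem_controlledSeries hs hφ hv f.2)
    (convergesAt_of_mem_controlledSeries hs hφ hv g.2)

lemma continuousOn_seriesEval [Finite σ] {C : ℕ} {s : K} {f : PowerSeries (MvPolynomial σ B)}
    (hs : Absorbs δ C s) (hφ : ∀ b ∈ B₀, ‖φ b‖ ≤ 1) (hf : f ∈ controlledSeries B₀ δ C σ) :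
    ContinuousOn (fun v : σ → K => seriesEval (eval₂Hom φ v) s f) {v | ∀ i, ‖v i‖ ≤ 1} := by
  have := Fintype.ofFinite σ
  refine continuousOn_tsum (u := fun k => (√‖s‖) ^ k) (fun k => Continuous.continuousOn ?_)
    (summable_geometric_of_lt_one (Real.sqrt_nonneg _) (sqrt_lt_one hs.norm_lt_one))
    fun k v hv => decaysAt_of_mem_controlledSeries hs hφ hv hf k
  simp only [coe_eval₂Hom, eval₂_eq]
  fun_prop

end Absorbs

/-! ### Isolated points -/

section IsolatedPoints

/-- `z` is an isolated point of `Z`. -/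
def IsIsolatedIn {X : Type*} [TopologicalSpace X] (Z : Set X) (z : X) : Prop :=
  z ∈ Z ∧ ∀ᶠ w in 𝓝 z, w ∈ Z → w = z

lemma IsIsolatedIn.of_map {X Y : Type*} [TopologicalSpace X] [TopologicalSpace Y] {Z : Set X}
    {Z' : Set Y} {z' : Y} {ψ : Y → X} (h : IsIsolatedIn Z (ψ z')) (hψ : Function.Injective ψ)
    (hc : ContinuousAt ψ z') (hz' : z' ∈ Z') (hZ : ∀ᶠ w in 𝓝 z', w ∈ Z' → ψ w ∈ Z) :
    IsIsolatedIn Z' z' := by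
  refine ⟨hz', ?_⟩
  filter_upwards [hc.eventually h.2, hZ] with w hw hwZ hwZ'
  exact hψ (hw (hwZ hwZ'))

/-- The common zeros, in the unit polydisc, of the specializations at `s` and `φ` of a family of
power series. -/
def polydiscZeros {K : Type*} [NormedField K] {B : Type*} [CommRing B] {ι σ : Type*} (s : K)
    (φ : B →+* K) (f : ι → PowerSeries (MvPolynomial σ B)) : Set (σ → K) :=
  {u | (∀ i, ‖u i‖ ≤ 1) ∧ ∀ i, seriesEval (eval₂Hom φ u) s (f i) = 0}

lemma eventually_norm_le_one {K : Type*} [NormedField K] [IsUltrametricDist K] {σ : Type*}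
    [Finite σ] {u : σ → K} (hu : ∀ i, ‖u i‖ ≤ 1) : ∀ᶠ w in 𝓝 u, ∀ i, ‖w i‖ ≤ 1 := by
  refine eventually_all.2 fun i => ?_
  have hi : Tendsto (fun w : σ → K => w i) (𝓝 u) (𝓝 (u i)) := (continuous_apply i).continuousAt
  filter_upwards [hi.eventually ((IsUltrametricDist.isOpen_closedBall (0 : K) one_ne_zero).mem_nhds
    (mem_closedBall_zero_iff.2 (hu i)))] with w hw using mem_closedBall_zero_iff.1 hw

end IsolatedPoints

/-! ### Common roots and bordered minors -/

section BorderedMinors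

variable {F : Type*} [Field F] {α β : Type*}

lemma mul_inv_mul_submatrix_eq_of_bordered_det_eq_zero {ρ : Type*} [Fintype ρ] [DecidableEq ρ]
    (M : Matrix α β F) (rows : ρ → α) (cols : ρ → β) (hdet : (M.submatrix rows cols).det ≠ 0)
    (hbordered : ∀ i j, (M.submatrix (Sum.elim rows fun _ : Unit => i)
      (Sum.elim cols fun _ : Unit => j)).det = 0) :
    M.submatrix id cols * (M.submatrix rows cols)⁻¹ * M.submatrix rows id = M := by
  ext i j
  let A := M.submatrix rows cols
  let := A.invertibleOfIsUnitDet (isUnit_iff_ne_zero.mpr hdet)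
  have hblocks : M.submatrix (Sum.elim rows fun _ : Unit => i)
      (Sum.elim cols fun _ : Unit => j) =
      Matrix.fromBlocks A (M.submatrix rows fun _ => j) (M.submatrix (fun _ => i) cols)
        (M.submatrix (fun _ => i) fun _ => j) := by
    ext (a | a) (b | b) <;> rfl
  have hschur := hbordered i j
  rw [hblocks, Matrix.det_fromBlocks₁₁] at hschur
  have h := (mul_eq_zero.mp hschur).resolve_left hdet
  rw [Matrix.det_unique, Matrix.sub_apply, sub_eq_zero, Matrix.invOf_eq_nonsing_inv] at h
  exact h.symm

lemma mulVec_comp_eq_of_mem_span_col {ρ : Type*} [Fintype ρ] {M : Matrix α β F} {rows : ρ → α}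
    {T : Matrix α ρ F} (hT : T * M.submatrix rows id = M) {v : α → F}
    (hv : v ∈ Submodule.span F (Set.range M.col)) : T.mulVec (v ∘ rows) = v := by
  have hle : Submodule.span F (Set.range M.col) ≤
      LinearMap.eqLocus (T.mulVecLin ∘ₗ LinearMap.funLeft F F rows) LinearMap.id := by
    rw [Submodule.span_le]
    rintro - ⟨j, rfl⟩
    ext i
    exact congr_fun₂ hT i j
  exact hle hv

lemma exists_maximal_minor [Fintype α] (M : Matrix α β F) :
    ∃ ρ ≤ Fintype.card α, ∃ (rows : Fin ρ → α) (cols : Fin ρ → β),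
      (M.submatrix rows cols).det ≠ 0 ∧ ∀ i j, (M.submatrix (Sum.elim rows fun _ : Unit => i)
        (Sum.elim cols fun _ : Unit => j)).det = 0 := by
  let HasMinor (ρ : ℕ) : Prop :=
    ∃ (rows : Fin ρ → α) (cols : Fin ρ → β), (M.submatrix rows cols).det ≠ 0
  have hzero : HasMinor 0 := ⟨Fin.elim0, Fin.elim0, by simp⟩
  have hcard : ∀ ρ, HasMinor ρ → ρ ≤ Fintype.card α := by
    rintro ρ ⟨rows, cols, h⟩
    have hinj : Function.Injective rows := fun a b hab => by
      by_contra hne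
      exact h (Matrix.det_zero_of_row_eq hne (by ext k; simp [hab]))
    simpa using Fintype.card_le_of_injective rows hinj
  obtain ⟨ρ, hρ, hmax⟩ : ∃ ρ, HasMinor ρ ∧ ¬ HasMinor (ρ + 1) := by
    by_contra! hstep
    have hall : ∀ ρ, HasMinor ρ := fun ρ => Nat.rec hzero hstep ρ
    exact absurd (hcard _ (hall (Fintype.card α + 1))) (by omega)
  obtain ⟨rows, cols, hdet⟩ := hρ
  refine ⟨ρ, hcard ρ ⟨rows, cols, hdet⟩, rows, cols, hdet, fun i j => ?_⟩
  by_contra hne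
  let e : Fin (ρ + 1) ≃ Fin ρ ⊕ Unit := Fintype.equivOfCardEq (by simp)
  refine hmax ⟨(Sum.elim rows fun _ => i) ∘ e, (Sum.elim cols fun _ => j) ∘ e, ?_⟩
  rwa [← Matrix.submatrix_submatrix, Matrix.det_submatrix_equiv_self]

end BorderedMinors

section RemainderMatrix

variable {R : Type*} [CommRing R] {ι : Type*}

/-- The matrix whose columns are the coefficients of the remainders of `X ^ j * f i` modulo `P`.
For `P` monic of degree `e` over a field, its columns span the ideal generated by `P` and the
`f i` modulo `P`, so its corank is the degree of the greatest common divisor. -/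
noncomputable def remainderMatrix (P : Polynomial R) (e : ℕ) (f : ι → Polynomial R) :
    Matrix (Fin e) (ι × Fin e) R :=
  Matrix.of fun k c => ((Polynomial.X ^ (c.2 : ℕ) * f c.1) %ₘ P).coeff k

lemma map_remainderMatrix {S : Type*} [CommRing S] (φ : R →+* S) {P : Polynomial R}
    (hP : P.Monic) (e : ℕ) (f : ι → Polynomial R) :
    (remainderMatrix P e f).map φ = remainderMatrix (P.map φ) e fun i => (f i).map φ := by
  ext k c
  simp only [remainderMatrix, Matrix.map_apply, Matrix.of_apply]
  rw [← Polynomial.coeff_map, Polynomial.map_modByMonic _ hP, Polynomial.map_mul,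
    Polynomial.map_pow, Polynomial.map_X]

lemma modByMonic_coeff_mem_span_remainderMatrix {F : Type*} [Field F] {P : Polynomial F} {e : ℕ}
    (hP : P.Monic) (he : P.natDegree = e) (f : ι → Polynomial F) {q : Polynomial F}
    (hq : q ∈ Ideal.span (insert P (Set.range f))) :
    (fun k : Fin e => (q %ₘ P).coeff k) ∈
      Submodule.span F (Set.range (remainderMatrix P e f).col) := by
  set V := Submodule.span F (Set.range (remainderMatrix P e f).col)
  let T : Polynomial F →ₗ[F] (Fin e → F) :=
    (LinearMap.pi fun k : Fin e => Polynomial.lcoeff F k) ∘ₗ Polynomial.modByMonicHom P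
  suffices h : ∀ a, T (a * q) ∈ V by
    have h1 := h 1
    rwa [one_mul] at h1
  induction hq using Submodule.span_induction with
  | mem x hx =>
    intro a
    rcases hx with rfl | ⟨i, rfl⟩
    · have hzero : T (a * x) = 0 := by
        ext k
        simp [T, Polynomial.modByMonicHom, mul_comm a x, Polynomial.self_mul_modByMonic hP]
      exact hzero ▸ V.zero_mem
    · have hreduce : T (a * f i) = T ((a %ₘ P) * f i) := by
        have hmod : (a * f i) %ₘ P = ((a %ₘ P) * f i) %ₘ P := by
          nth_rw 1 [← Polynomial.modByMonic_add_div a P]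
          rw [add_mul, mul_assoc, Polynomial.add_modByMonic, Polynomial.self_mul_modByMonic hP,
            add_zero]
        ext k
        exact congr_arg (Polynomial.coeff · k) hmod
      rw [hreduce, ← Polynomial.sum_modByMonic_coeff hP
        (Polynomial.degree_le_natDegree.trans_eq (congr_arg _ he)), Finset.sum_mul, map_sum]
      refine V.sum_mem fun j _ => ?_
      rw [← Polynomial.C_mul_X_pow_eq_monomial, mul_assoc, ← Polynomial.smul_eq_C_mul, map_smul]
      exact V.smul_mem _ (Submodule.subset_span ⟨(i, j), rfl⟩)
  | zero => intro a; simp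
  | add x y _ _ hx hy => intro a; rw [mul_add, map_add]; exact V.add_mem (hx a) (hy a)
  | smul b x _ hx => intro a; rw [smul_eq_mul, ← mul_assoc]; exact hx _

lemma exists_monic_span_singleton {F : Type*} [Field F] {I : Ideal (Polynomial F)} (hI : I ≠ ⊥) :
    ∃ D : Polynomial F, D.Monic ∧ I = Ideal.span {D} := by
  classical
  set g := Submodule.IsPrincipal.generator I
  have hg : g ≠ 0 := (Submodule.IsPrincipal.eq_bot_iff_generator_eq_zero I).not.1 hI
  refine ⟨normalize g, Polynomial.monic_normalize hg, ?_⟩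
  rw [Ideal.span_singleton_eq_span_singleton.2 (normalize_associated g),
    Ideal.span_singleton_generator]

end RemainderMatrix

section CommonRoots

variable {K : Type*} [NormedField K]

lemma exists_isRoot_near_of_norm_eval_lt [IsAlgClosed K] {D : Polynomial K} (hD : D.Monic) {r : K}
    {η : ℝ} (hη : 0 ≤ η) (h : ‖D.eval r‖ < η ^ D.natDegree) : ∃ ξ, D.IsRoot ξ ∧ ‖ξ - r‖ < η := by
  by_contra! hfar
  have hsplits := IsAlgClosed.splits D
  refine h.not_ge ?_
  calc η ^ D.natDegree = (D.roots.map fun _ => η).prod := by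
        rw [Multiset.map_const', Multiset.prod_replicate, hsplits.natDegree_eq_card_roots]
    _ ≤ (D.roots.map fun x => ‖r - x‖).prod :=
        Multiset.prod_map_le_prod_map₀ _ _ (fun _ _ => hη) fun x hx =>
          (hfar x (Polynomial.isRoot_of_mem_roots hx)).trans_eq (norm_sub_rev _ _)
    _ = ‖D.eval r‖ := by
        rw [hsplits.eval_eq_prod_roots_of_monic hD]
        exact (D.roots.map_map _ _ ▸ (D.roots.map fun x => r - x).prod_hom
          (NormedField.toMulRingNorm K) : _)

lemma vecMul_remainderMatrix_eq_zero {R : Type*} [CommRing R] [Nontrivial R] {ι : Type*}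
    {P : Polynomial R} {e : ℕ} (hP : P.Monic) (he : P.natDegree = e) {f : ι → Polynomial R} {r : R}
    (hPr : P.IsRoot r) (hfr : ∀ i, (f i).IsRoot r) :
    Matrix.vecMul (fun k : Fin e => r ^ (k : ℕ)) (remainderMatrix P e f) = 0 := by
  ext ⟨i, j⟩
  set q := (Polynomial.X ^ (j : ℕ) * f i) %ₘ P
  have hq : q.natDegree < e := by
    rw [← he]
    refine Polynomial.natDegree_modByMonic_lt _ hP fun h1 => ?_
    simp [h1] at hPr
  calc ∑ k : Fin e, r ^ (k : ℕ) * q.coeff k = q.eval r := by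
        rw [Polynomial.eval_eq_sum_range' hq,
          ← Fin.sum_univ_eq_sum_range fun k => q.coeff k * r ^ k]
        exact Finset.sum_congr rfl fun k _ => mul_comm _ _
    _ = 0 := by
        simp [q, Polynomial.modByMonic_eq_sub_mul_div, hPr.eq_zero, (hfr i).eq_zero]

variable [IsUltrametricDist K]

-- By multiplicativity of the Gauss norm, which is `1` on `P` and at least `1` on monic polynomials.
lemma norm_coeff_le_one_of_dvd {P D : Polynomial K} (hP : P.Monic) (hPc : ∀ k, ‖P.coeff k‖ ≤ 1)
    (hD : D.Monic) (hdvd : D ∣ P) (k : ℕ) : ‖D.coeff k‖ ≤ 1 := by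
  obtain ⟨Q, rfl⟩ := hdvd
  have hmul : (D * Q).supNorm = D.supNorm * Q.supNorm :=
    Polynomial.gaussNorm_mul (v := NormedField.toAbsoluteValue K)
      IsUltrametricDist.isNonarchimedean_norm one_pos D Q
  have hle : (D * Q).supNorm ≤ 1 := by
    obtain ⟨i, hi⟩ := (D * Q).exists_eq_supNorm
    exact hi ▸ hPc i
  have hQ : 1 ≤ Q.supNorm := by
    simpa [(hD.of_mul_monic_left hP).coeff_natDegree] using Q.le_supNorm Q.natDegree
  calc ‖D.coeff k‖ ≤ D.supNorm := D.le_supNorm k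
    _ ≤ D.supNorm * Q.supNorm := le_mul_of_one_le_right D.supNorm_nonneg hQ
    _ ≤ 1 := hmul ▸ hle

lemma norm_root_le_one {P : Polynomial K} (hP : P.Monic) (hPc : ∀ k, ‖P.coeff k‖ ≤ 1) {x : K}
    (hx : P.IsRoot x) : ‖x‖ ≤ 1 := by
  simpa using norm_coeff_le_one_of_dvd hP hPc (Polynomial.monic_X_sub_C x)
    (Polynomial.dvd_iff_isRoot.2 hx) 0

lemma norm_eval_lt_of_vecMul_lt {e : ℕ} {D : Polynomial K} (hDe : D.natDegree < e)
    (hDc : ∀ k, ‖D.coeff k‖ ≤ 1) {ρ : Type*} [Fintype ρ] {rows : ρ → Fin e}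
    {T : Matrix (Fin e) ρ K} {r : K} {ε : ℝ} (hε : 0 < ε)
    (hD : T.mulVec (fun a => D.coeff (rows a)) = fun k : Fin e => D.coeff k)
    (hT : ∀ a, ‖Matrix.vecMul (fun k : Fin e => r ^ (k : ℕ)) T a‖ < ε) : ‖D.eval r‖ < ε := by
  set w : Fin e → K := fun k => r ^ (k : ℕ)
  have heval : D.eval r = ∑ a, Matrix.vecMul w T a * D.coeff (rows a) := by
    change _ = Matrix.vecMul w T ⬝ᵥ fun a => D.coeff (rows a)
    rw [← Matrix.dotProduct_mulVec, hD, Polynomial.eval_eq_sum_range' hDe,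
      ← Fin.sum_univ_eq_sum_range fun k => D.coeff k * r ^ k]
    exact Finset.sum_congr rfl fun k _ => mul_comm _ _
  rcases isEmpty_or_nonempty ρ with hρ | hρ
  · simpa [heval] using hε
  · obtain ⟨a, ha⟩ := IsUltrametricDist.exists_norm_finsetSum_le Finset.univ
      fun a => Matrix.vecMul w T a * D.coeff (rows a)
    calc ‖D.eval r‖ ≤ ‖Matrix.vecMul w T a‖ * ‖D.coeff (rows a)‖ := by
          rw [heval, ← norm_mul]; exact ha.2
      _ ≤ ‖Matrix.vecMul w T a‖ := mul_le_of_le_one_right (norm_nonneg _) (hDc _)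
      _ < ε := hT a

-- The roots of the greatest common divisor `D` are the common roots, and `D` takes a small value
-- at `r`.
lemma exists_common_root_near [IsAlgClosed K] {ι : Type*} {P : Polynomial K} {e : ℕ}
    (hP : P.Monic) (he : P.natDegree = e) (hPc : ∀ k, ‖P.coeff k‖ ≤ 1) {f : ι → Polynomial K}
    {r : K} {η : ℝ} (hη : 0 < η) (hη1 : η ≤ 1) {ρ : Type*} [Fintype ρ] {rows : ρ → Fin e}
    {T : Matrix (Fin e) ρ K}
    (hT : T * (remainderMatrix P e f).submatrix rows id = remainderMatrix P e f)
    (hTr : ∀ a, ‖Matrix.vecMul (fun k : Fin e => r ^ (k : ℕ)) T a‖ < η ^ e)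
    (hPr : ‖P.eval r‖ < η ^ e) :
    ∃ ξ, P.IsRoot ξ ∧ (∀ i, (f i).IsRoot ξ) ∧ ‖ξ - r‖ < η := by
  set I := Ideal.span (insert P (Set.range f))
  have hPI : P ∈ I := Ideal.subset_span (Set.mem_insert _ _)
  obtain ⟨D, hD, hID⟩ := exists_monic_span_singleton (I := I) fun h =>
    hP.ne_zero (by simpa [h] using hPI)
  have hDI : D ∈ I := hID ▸ Ideal.mem_span_singleton_self D
  have hdvd : ∀ q ∈ I, D ∣ q := fun q hq => Ideal.mem_span_singleton.1 (hID ▸ hq)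
  have hDe : D.natDegree ≤ e := he ▸ Polynomial.natDegree_le_of_dvd (hdvd P hPI) hP.ne_zero
  have hDr : ‖D.eval r‖ < η ^ e := by
    rcases hDe.lt_or_eq with hlt | heq
    · have hspan := modByMonic_coeff_mem_span_remainderMatrix hP he f hDI
      rw [(Polynomial.modByMonic_eq_self_iff hP).2
        (Polynomial.degree_lt_degree (hlt.trans_eq he.symm))] at hspan
      exact norm_eval_lt_of_vecMul_lt hlt (norm_coeff_le_one_of_dvd hP hPc hD (hdvd P hPI))
        (pow_pos hη e) (mulVec_comp_eq_of_mem_span_col hT hspan) hTr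
    · rwa [← Polynomial.eq_of_monic_of_dvd_of_natDegree_le hD hP (hdvd P hPI) (by omega)]
  obtain ⟨ξ, hξ, hξr⟩ := exists_isRoot_near_of_norm_eval_lt hD hη.le
    (hDr.trans_le (pow_le_pow_of_le_one hη.le hη1 hDe))
  exact ⟨ξ, hξ.dvd (hdvd P hPI),
    fun i => hξ.dvd (hdvd _ (Ideal.subset_span (Set.mem_insert_of_mem _ ⟨i, rfl⟩))), hξr⟩

end CommonRoots

section Elimination

variable {R : Type*} [CommRing R] {ι : Type*}

/-- The choice of a square submatrix of a matrix with rows `Fin e` and columns `ι × Fin e`. -/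
abbrev MinorIndex (ι : Type*) (e : ℕ) : Type _ :=
  (ρ : Fin (e + 1)) × (Fin ρ → Fin e) × (Fin ρ → ι × Fin e)

/-- The minors of `remainderMatrix P e f` obtained by adding the row and the column with indices
`j` to the square submatrix `c`. -/
noncomputable def borderedMinor (P : Polynomial R) (e : ℕ) (f : ι → Polynomial R)
    (c : MinorIndex ι e) (j : Fin e × (ι × Fin e)) : R :=
  ((remainderMatrix P e f).submatrix (Sum.elim c.2.1 fun _ : Unit => j.1)
    (Sum.elim c.2.2 fun _ : Unit => j.2)).det

lemma map_borderedMinor {S : Type*} [CommRing S] (φ : R →+* S) (P : Polynomial R) (e : ℕ)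
    (f : ι → Polynomial R) (c : MinorIndex ι e) (j : Fin e × (ι × Fin e)) :
    φ (borderedMinor P e f c j) = (((remainderMatrix P e f).map φ).submatrix
      (Sum.elim c.2.1 fun _ : Unit => j.1) (Sum.elim c.2.2 fun _ : Unit => j.2)).det := by
  rw [borderedMinor, RingHom.map_det]
  rfl

lemma continuousAt_mul_inv_submatrix {K : Type*} [NormedField K] {Y : Type*} [TopologicalSpace Y]
    {α β ρ : Type*} [Fintype ρ] [DecidableEq ρ] {M : Y → Matrix α β K} (hM : Continuous M)
    {rows : ρ → α} {cols : ρ → β} {y₀ : Y} (hdet : ((M y₀).submatrix rows cols).det ≠ 0) :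
    ContinuousAt (fun y => (M y).submatrix id cols * ((M y).submatrix rows cols)⁻¹) y₀ := by
  have hinv : ContinuousAt (fun y => ((M y).submatrix rows cols)⁻¹) y₀ :=
    (continuousAt_matrix_inv _ (Ring.inverse_eq_inv' (G₀ := K) ▸ continuousAt_inv₀ hdet)).comp
      (f := fun y => (M y).submatrix rows cols) (hM.matrix_submatrix rows cols).continuousAt
  exact (continuous_fst.matrix_mul continuous_snd).continuousAt.comp
    ((hM.matrix_submatrix id cols).continuousAt.prodMk hinv)

variable {K : Type*} [NormedField K] [IsUltrametricDist K] [IsAlgClosed K] {Y : Type*}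
  [TopologicalSpace Y] {ev : Y → (R →+* K)}

lemma eventually_exists_common_root_near (hc : ∀ x, Continuous fun y => ev y x)
    (hb : ∀ y x, ‖ev y x‖ ≤ 1) {P : Polynomial R} {e : ℕ} (hP : P.Monic) (he : P.natDegree = e)
    {f : ι → Polynomial R} {r : K} {y₀ : Y} (hPr : (P.map (ev y₀)).IsRoot r)
    (hfr : ∀ i, ((f i).map (ev y₀)).IsRoot r) {ρ : Type*} [Fintype ρ] [DecidableEq ρ]
    {rows : ρ → Fin e} {cols : ρ → ι × Fin e}
    (hdet : (((remainderMatrix P e f).map (ev y₀)).submatrix rows cols).det ≠ 0)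
    {η : ℝ} (hη : 0 < η) (hη1 : η ≤ 1) :
    ∀ᶠ y in 𝓝 y₀, (∀ i j, (((remainderMatrix P e f).map (ev y)).submatrix
        (Sum.elim rows fun _ : Unit => i) (Sum.elim cols fun _ : Unit => j)).det = 0) →
      ∃ ξ, (P.map (ev y)).IsRoot ξ ∧ (∀ i, ((f i).map (ev y)).IsRoot ξ) ∧ ‖ξ - r‖ < η := by
  let M (y : Y) := (remainderMatrix P e f).map (ev y)
  have hM : Continuous M := continuous_matrix fun _ _ => hc _
  have hMy : ∀ y, M y = remainderMatrix (P.map (ev y)) e fun i => (f i).map (ev y) :=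
    fun y => map_remainderMatrix (ev y) hP e f
  have hdeg : ∀ y, (P.map (ev y)).natDegree = e := fun y => by rw [hP.natDegree_map, he]
  let w : Fin e → K := fun k => r ^ (k : ℕ)
  let T (y : Y) := (M y).submatrix id cols * ((M y).submatrix rows cols)⁻¹
  have hT0 : Matrix.vecMul w (T y₀) = 0 := by
    have hw : Matrix.vecMul w ((M y₀).submatrix id cols) = 0 := by
      have hwM := vecMul_remainderMatrix_eq_zero (hP.map (ev y₀)) (hdeg y₀) hPr hfr
      exact funext fun b => congr_fun (hMy y₀ ▸ hwM) (cols b)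
    rw [← Matrix.vecMul_vecMul, hw, Matrix.zero_vecMul]
  have hTsmall : ∀ᶠ y in 𝓝 y₀, ∀ a, ‖Matrix.vecMul w (T y) a‖ < η ^ e := by
    have hcont : ContinuousAt (fun y => Matrix.vecMul w (T y)) y₀ :=
      (continuous_const.matrix_vecMul continuous_id).continuousAt.comp
        (continuousAt_mul_inv_submatrix hM hdet)
    exact eventually_all.2 fun a =>
      ((continuous_apply a).continuousAt.comp hcont).norm.eventually_lt continuousAt_const
        (by simpa [hT0] using pow_pos hη e)
  have hPsmall : ∀ᶠ y in 𝓝 y₀, ‖(P.map (ev y)).eval r‖ < η ^ e := by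
    have hcont : Continuous fun y => (P.map (ev y)).eval r := by
      simp only [Polynomial.eval_map, Polynomial.eval₂_eq_sum_range]
      exact continuous_finsetSum _ fun k _ => (hc _).mul continuous_const
    exact hcont.continuousAt.norm.eventually_lt continuousAt_const
      (by simpa [hPr.eq_zero] using pow_pos hη e)
  have hdet' : ∀ᶠ y in 𝓝 y₀, ((M y).submatrix rows cols).det ≠ 0 :=
    (hM.matrix_submatrix rows cols).matrix_det.continuousAt.eventually_ne hdet
  filter_upwards [hTsmall, hPsmall, hdet'] with y hTy hPy hdety hy
  have hTM : T y * (M y).submatrix rows id = M y :=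
    mul_inv_mul_submatrix_eq_of_bordered_det_eq_zero (M y) rows cols hdety hy
  rw [hMy] at hTM
  exact exists_common_root_near (hP.map _) (hdeg y)
    (fun k => by rw [Polynomial.coeff_map]; exact hb y _) hη hη1 hTM hTy hPy

lemma IsIsolatedIn.exists_borderedMinor (hc : ∀ x, Continuous fun y => ev y x)
    (hb : ∀ y x, ‖ev y x‖ ≤ 1) {P : Polynomial R} {e : ℕ} (hP : P.Monic) (he : P.natDegree = e)
    {f : ι → Polynomial R} {r : K} {y₀ : Y}
    (h : IsIsolatedIn {z : K × Y | (P.map (ev z.2)).IsRoot z.1 ∧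
      ∀ i, ((f i).map (ev z.2)).IsRoot z.1} (r, y₀)) :
    ∃ c : MinorIndex ι e, IsIsolatedIn {y | ∀ j, ev y (borderedMinor P e f c j) = 0} y₀ := by
  obtain ⟨⟨hPr, hfr⟩, hiso⟩ := h
  obtain ⟨ρ, hρ, rows, cols, hdet, hbordered⟩ :=
    exists_maximal_minor ((remainderMatrix P e f).map (ev y₀))
  rw [Fintype.card_fin] at hρ
  refine ⟨⟨⟨ρ, Nat.lt_succ_of_le hρ⟩, rows, cols⟩,
    fun j => (map_borderedMinor _ P e f _ j).trans (hbordered j.1 j.2), ?_⟩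
  obtain ⟨U, hU, V, hV, hUV⟩ := mem_nhds_prod_iff.1 hiso
  obtain ⟨η, hη, hball⟩ := Metric.mem_nhds_iff.1 hU
  filter_upwards [eventually_exists_common_root_near hc hb hP he hPr hfr hdet
    (lt_min hη one_pos) (min_le_right _ _), hV] with y hroot hyV hy
  obtain ⟨ξ, hPξ, hfξ, hξr⟩ := hroot fun i j =>
    (map_borderedMinor _ P e f ⟨⟨ρ, Nat.lt_succ_of_le hρ⟩, rows, cols⟩ (i, j)).symm.trans
      (hy (i, j))
  have hmem : (ξ, y) ∈ U ×ˢ V :=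
    ⟨hball (mem_ball_iff_norm.2 (hξr.trans_le (min_le_left _ _))), hyV⟩
  exact (Prod.mk.inj (hUV hmem ⟨hPξ, hfξ⟩)).2

end Elimination

/-! ### Weierstrass division -/

section PolynomialDivision

variable {B : Type*} [CommRing B] {n : ℕ}

variable (B₀ : Subring B) (δ : DenomSeq) in
/-- `polyWithDenom` for `B[x₁, …, xₙ][x₀]` instead of `B[x₀, …, xₙ]`; the degree bound concerns the
total degree in all the variables. -/
noncomputable def polynomialWithDenom (n N m : ℕ) :
    Submodule B₀ (Polynomial (MvPolynomial (Fin n) B)) :=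
  (polyWithDenom B₀ δ (Fin (n + 1)) N m).comap
    ((MvPolynomial.finSuccEquiv B n).symm.toLinearMap.restrictScalars B₀)

variable {B₀ : Subring B} {δ : DenomSeq}

lemma finSuccEquiv_mem_polynomialWithDenom {N m : ℕ} {p : MvPolynomial (Fin (n + 1)) B} :
    MvPolynomial.finSuccEquiv B n p ∈ polynomialWithDenom B₀ δ n N m ↔
      p ∈ polyWithDenom B₀ δ (Fin (n + 1)) N m := by
  change (MvPolynomial.finSuccEquiv B n).symm (MvPolynomial.finSuccEquiv B n p) ∈
    polyWithDenom B₀ δ (Fin (n + 1)) N m ↔ _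
  rw [AlgEquiv.symm_apply_apply]

lemma polynomialWithDenom_mono {N N' m m' : ℕ} (hN : N ≤ N') (hm : m ≤ m') :
    polynomialWithDenom B₀ δ n N m ≤ polynomialWithDenom B₀ δ n N' m' :=
  Submodule.comap_mono (polyWithDenom_mono hN hm)

lemma mul_mem_polynomialWithDenom {N N' m m' : ℕ} {p q : Polynomial (MvPolynomial (Fin n) B)}
    (hp : p ∈ polynomialWithDenom B₀ δ n N m) (hq : q ∈ polynomialWithDenom B₀ δ n N' m') :
    p * q ∈ polynomialWithDenom B₀ δ n (N + N') (m + m') := by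
  change (MvPolynomial.finSuccEquiv B n).symm (p * q) ∈ polyWithDenom B₀ δ (Fin (n + 1)) _ _
  rw [map_mul]
  exact mul_mem_polyWithDenom hp hq

lemma degree_cons (i : ℕ) (ν : Fin n →₀ ℕ) : (ν.cons i).degree = i + ν.degree := by
  simp [Finsupp.degree_eq_sum, Fin.sum_univ_succ]

lemma mem_polynomialWithDenom {N m : ℕ} {q : Polynomial (MvPolynomial (Fin n) B)} :
    q ∈ polynomialWithDenom B₀ δ n N m ↔ ∀ i ν, coeff ν (q.coeff i) ∈ withDenom B₀ δ N ∧
      (coeff ν (q.coeff i) ≠ 0 → i + ν.degree ≤ m) := by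
  obtain ⟨p, rfl⟩ := (MvPolynomial.finSuccEquiv B n).surjective q
  simp only [finSuccEquiv_mem_polynomialWithDenom, mem_polyWithDenom, finSuccEquiv_coeff_coeff,
    ← degree_cons]
  exact ⟨fun h i ν => h _, fun h ν => by simpa using h (ν 0) ν.tail⟩

lemma coeff_mem_polyWithDenom {N m : ℕ} {q : Polynomial (MvPolynomial (Fin n) B)}
    (hq : q ∈ polynomialWithDenom B₀ δ n N m) (i : ℕ) :
    q.coeff i ∈ polyWithDenom B₀ δ (Fin n) N m := fun ν =>
  ⟨(mem_polynomialWithDenom.1 hq i ν).1, fun h =>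
    (Nat.le_add_left _ i).trans ((mem_polynomialWithDenom.1 hq i ν).2 h)⟩

variable {M q : Polynomial (MvPolynomial (Fin n) B)}

lemma exists_degree_sub_mul_lt {N m : ℕ} (hM : M.Monic)
    (hMe : M ∈ polynomialWithDenom B₀ δ n 0 M.natDegree) (hq0 : q ≠ 0)
    (hdeg : M.degree ≤ q.degree) (hq : q ∈ polynomialWithDenom B₀ δ n N m) :
    ∃ T ∈ polynomialWithDenom B₀ δ n N m, (q - M * T).degree < q.degree ∧
      q - M * T ∈ polynomialWithDenom B₀ δ n N m := by
  have hMq : M.natDegree ≤ q.natDegree := Polynomial.natDegree_le_natDegree hdeg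
  obtain ⟨μ, hμ⟩ := MvPolynomial.ne_zero_iff.1 (Polynomial.leadingCoeff_ne_zero.2 hq0)
  have hqm : q.natDegree + μ.degree ≤ m := (mem_polynomialWithDenom.1 hq _ μ).2 hμ
  let T := Polynomial.C q.leadingCoeff * Polynomial.X ^ (q.natDegree - M.natDegree)
  have hT : T ∈ polynomialWithDenom B₀ δ n N (m - M.natDegree) := by
    refine mem_polynomialWithDenom.2 fun i ν => ?_
    rw [Polynomial.coeff_C_mul_X_pow]
    split_ifs with hi
    · obtain ⟨hdenom, hle⟩ := mem_polynomialWithDenom.1 hq q.natDegree ν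
      refine ⟨hdenom, fun h => ?_⟩
      have := hle h
      omega
    · simp
  refine ⟨T, polynomialWithDenom_mono le_rfl (Nat.sub_le _ _) hT,
    Polynomial.div_wf_lemma ⟨hdeg, hq0⟩ hM, sub_mem hq ?_⟩
  exact polynomialWithDenom_mono (by omega) (by omega) (mul_mem_polynomialWithDenom hMe hT)

lemma exists_div_mod_mem_polynomialWithDenom [Nontrivial B] {N m : ℕ} (hM : M.Monic)
    (hMe : M ∈ polynomialWithDenom B₀ δ n 0 M.natDegree)
    (hq : q ∈ polynomialWithDenom B₀ δ n N m) :
    ∃ Q ∈ polynomialWithDenom B₀ δ n N m, ∃ R ∈ polynomialWithDenom B₀ δ n N m,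
      R + M * Q = q ∧ R.degree < M.degree := by
  induction q using Polynomial.degree_lt_wf.induction with
  | _ q ih =>
    by_cases hlt : q.degree < M.degree
    · exact ⟨0, zero_mem _, q, hq, by simp, hlt⟩
    have hq0 : q ≠ 0 := by
      rintro rfl
      exact hlt (by simpa [bot_lt_iff_ne_bot] using hM.ne_zero)
    obtain ⟨T, hT, hdeg, hqT⟩ := exists_degree_sub_mul_lt hM hMe hq0 (not_lt.1 hlt) hq
    obtain ⟨Q, hQ, R, hR, hQR, hRdeg⟩ := ih _ hdeg hqT
    exact ⟨Q + T, add_mem hQ hT, R, hR, by linear_combination hQR, hRdeg⟩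

lemma div_mod_mem_polynomialWithDenom [Nontrivial B] {N m : ℕ} (hM : M.Monic)
    (hMe : M ∈ polynomialWithDenom B₀ δ n 0 M.natDegree)
    (hq : q ∈ polynomialWithDenom B₀ δ n N m) :
    q /ₘ M ∈ polynomialWithDenom B₀ δ n N m ∧ q %ₘ M ∈ polynomialWithDenom B₀ δ n N m := by
  obtain ⟨Q, hQ, R, hR, hQR⟩ := exists_div_mod_mem_polynomialWithDenom hM hMe hq
  obtain ⟨hdiv, hmod⟩ := Polynomial.div_modByMonic_unique Q R hM hQR
  exact ⟨hdiv ▸ hQ, hmod ▸ hR⟩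

end PolynomialDivision

section Weierstrass

/-- The coefficients of the quotient in the Weierstrass division of `∑ gₖ sᵏ` by `∑ Φₖ sᵏ`, where
`Φ₀` is monic. -/
noncomputable def weierstrassQuotient {D : Type*} [CommRing D] (Φ g : ℕ → Polynomial D) :
    ℕ → Polynomial D
  | k => (g k - ∑ i : Fin k, weierstrassQuotient Φ g i * Φ (k - i)) /ₘ Φ 0
decreasing_by exact i.2

/-- The coefficients of the remainder in the Weierstrass division of `∑ gₖ sᵏ` by `∑ Φₖ sᵏ`. -/
noncomputable def weierstrassRemainder {D : Type*} [CommRing D] (Φ g : ℕ → Polynomial D) (k : ℕ) :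
    Polynomial D :=
  (g k - ∑ i : Fin k, weierstrassQuotient Φ g i * Φ (k - i)) %ₘ Φ 0

lemma weierstrass_identity {D : Type*} [CommRing D] (Φ g : ℕ → Polynomial D) (k : ℕ) :
    g k = ∑ x ∈ Finset.HasAntidiagonal.antidiagonal k, weierstrassQuotient Φ g x.1 * Φ x.2 +
      weierstrassRemainder Φ g k := by
  have hdiv := Polynomial.modByMonic_add_div
    (g k - ∑ i : Fin k, weierstrassQuotient Φ g i * Φ (k - i)) (Φ 0)
  rw [← weierstrassQuotient, ← weierstrassRemainder,
    Fin.sum_univ_eq_sum_range fun i => weierstrassQuotient Φ g i * Φ (k - i)] at hdiv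
  rw [Finset.Nat.sum_antidiagonal_eq_sum_range_succ_mk, Finset.sum_range_succ, Nat.sub_self]
  linear_combination -hdiv

variable {B : Type*} [CommRing B] {B₀ : Subring B} {δ : DenomSeq} {n : ℕ}

lemma weierstrass_mem_polynomialWithDenom [Nontrivial B] {C E : ℕ}
    {Φ g : ℕ → Polynomial (MvPolynomial (Fin n) B)}
    (hΦ : ∀ k, Φ k ∈ polynomialWithDenom B₀ δ n (C * k) (E * (k + 1)))
    (hg : ∀ k, g k ∈ polynomialWithDenom B₀ δ n (C * k) (2 * E * (k + 1)))
    (hM : (Φ 0).Monic) (hMe : Φ 0 ∈ polynomialWithDenom B₀ δ n 0 (Φ 0).natDegree) (k : ℕ) :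
    weierstrassQuotient Φ g k ∈ polynomialWithDenom B₀ δ n (C * k) (2 * E * (k + 1)) ∧
      weierstrassRemainder Φ g k ∈ polynomialWithDenom B₀ δ n (C * k) (2 * E * (k + 1)) := by
  induction k using Nat.strong_induction_on with
  | _ k ih =>
    rw [weierstrassQuotient, weierstrassRemainder]
    refine div_mod_mem_polynomialWithDenom hM hMe (sub_mem (hg k) (sum_mem fun i _ => ?_))
    obtain ⟨d, hd⟩ := Nat.exists_eq_add_of_lt i.2
    have hki : k - (i : ℕ) = d + 1 := by omega
    have hdegree : 2 * E * (i + 1) + E * (k - i + 1) ≤ 2 * E * (k + 1) := by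
      rw [hki, show k + 1 = (i + 1) + (d + 1) by omega]
      nlinarith [Nat.zero_le (E * d)]
    exact polynomialWithDenom_mono (by rw [← mul_add, Nat.add_sub_cancel' i.2.le]) hdegree
      (mul_mem_polynomialWithDenom (ih i i.2).1 (hΦ (k - i)))

variable (B₀ δ) in
/-- A polynomial in `x₀` whose coefficients are controlled series in `s` and `x₁, …, xₙ`, viewed as
a controlled series in `s` and `x₀, …, xₙ`. -/
noncomputable def seriesOfPolynomial (C n : ℕ) :
    Polynomial (controlledSeries B₀ δ C (Fin n)) →+* controlledSeries B₀ δ C (Fin (n + 1)) :=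
  Polynomial.eval₂RingHom
    ((PowerSeries.map (rename Fin.succ : _ →ₐ[B] _).toRingHom).restrict _ _ fun _ ⟨E, hE⟩ =>
      ⟨E, fun k => rename_mem_polyWithDenom Fin.succ (hE k)⟩)
    ⟨PowerSeries.C (X 0), C_mem_controlledSeries (X_mem_polyWithDenom 0 0)⟩

lemma finSuccEquiv_rename_succ {B : Type*} [CommRing B] {n : ℕ} (a : MvPolynomial (Fin n) B) :
    MvPolynomial.finSuccEquiv B n (rename Fin.succ a) = Polynomial.C a := by
  have h : (MvPolynomial.finSuccEquiv B n).toAlgHom.comp (rename Fin.succ) =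
      (Polynomial.CAlgHom (R := B)) := by ext i; simp [finSuccEquiv_X_succ]
  exact DFunLike.congr_fun h a

lemma coeff_seriesOfPolynomial_C_mul_X_pow {C : ℕ} (c : controlledSeries B₀ δ C (Fin n)) (j k : ℕ) :
    MvPolynomial.finSuccEquiv B n (PowerSeries.coeff k
      (seriesOfPolynomial B₀ δ C n (Polynomial.C c * Polynomial.X ^ j)).1) =
      Polynomial.C (PowerSeries.coeff k c.1) * Polynomial.X ^ j := by
  have hval : (seriesOfPolynomial B₀ δ C n (Polynomial.C c * Polynomial.X ^ j)).1 =
      PowerSeries.map (rename Fin.succ : _ →ₐ[B] _).toRingHom c.1 * PowerSeries.C (X 0 ^ j) := by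
    rw [map_mul, map_pow, map_pow]
    simp only [seriesOfPolynomial, Polynomial.coe_eval₂RingHom, Polynomial.eval₂_C,
      Polynomial.eval₂_X]
    rfl
  rw [hval, PowerSeries.coeff_mul_C, PowerSeries.coeff_map, map_mul, map_pow, finSuccEquiv_X_zero]
  exact congrArg (· * _) (finSuccEquiv_rename_succ _)

lemma coeff_seriesOfPolynomial_sum {C k e : ℕ} {c : ℕ → controlledSeries B₀ δ C (Fin n)}
    {R : Polynomial (MvPolynomial (Fin n) B)} (hR : R.degree < e)
    (hc : ∀ j, PowerSeries.coeff k (c j).1 = R.coeff j) :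
    MvPolynomial.finSuccEquiv B n (PowerSeries.coeff k (seriesOfPolynomial B₀ δ C n
      (∑ j : Fin e, Polynomial.C (c j) * Polynomial.X ^ (j : ℕ))).1) = R := by
  simp only [map_sum, AddSubmonoidClass.coe_finsetSum, coeff_seriesOfPolynomial_C_mul_X_pow, hc]
  rw [Polynomial.sum_fin (fun j a => Polynomial.C a * Polynomial.X ^ j) (by simp) hR,
    Polynomial.sum_C_mul_X_pow_eq]

theorem exists_weierstrass_division [Nontrivial B] {C : ℕ}
    (Φ g : controlledSeries B₀ δ C (Fin (n + 1)))
    (hM : (MvPolynomial.finSuccEquiv B n (PowerSeries.coeff 0 Φ.1)).Monic)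
    (hMe : PowerSeries.coeff 0 Φ.1 ∈ polyWithDenom B₀ δ (Fin (n + 1)) 0
      (MvPolynomial.finSuccEquiv B n (PowerSeries.coeff 0 Φ.1)).natDegree) :
    ∃ (Q : controlledSeries B₀ δ C (Fin (n + 1)))
      (r : Polynomial (controlledSeries B₀ δ C (Fin n))),
      g = Q * Φ + seriesOfPolynomial B₀ δ C n r ∧
      r.degree < (MvPolynomial.finSuccEquiv B n (PowerSeries.coeff 0 Φ.1)).natDegree ∧
      MvPolynomial.finSuccEquiv B n (PowerSeries.coeff 0 Q.1) =
        MvPolynomial.finSuccEquiv B n (PowerSeries.coeff 0 g.1) /ₘ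
          MvPolynomial.finSuccEquiv B n (PowerSeries.coeff 0 Φ.1) := by
  classical
  let coeffs (f : PowerSeries (MvPolynomial (Fin (n + 1)) B)) (k : ℕ) :=
    MvPolynomial.finSuccEquiv B n (PowerSeries.coeff k f)
  let e := (coeffs Φ.1 0).natDegree
  obtain ⟨E₁, hE₁⟩ := Φ.2
  obtain ⟨E₂, hE₂⟩ := g.2
  have hmem := weierstrass_mem_polynomialWithDenom (B₀ := B₀) (δ := δ) (C := C)
    (E := max E₁ E₂) (Φ := coeffs Φ.1) (g := coeffs g.1)
    (fun k => finSuccEquiv_mem_polynomialWithDenom.2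
      (polyWithDenom_mono le_rfl (by gcongr; exact le_max_left _ _) (hE₁ k)))
    (fun k => finSuccEquiv_mem_polynomialWithDenom.2
      (polyWithDenom_mono le_rfl (by gcongr; omega) (hE₂ k)))
    hM (finSuccEquiv_mem_polynomialWithDenom.2 hMe)
  let Q := weierstrassQuotient (coeffs Φ.1) (coeffs g.1)
  let R := weierstrassRemainder (coeffs Φ.1) (coeffs g.1)
  let Qs : controlledSeries B₀ δ C (Fin (n + 1)) :=
    ⟨PowerSeries.mk fun k => (MvPolynomial.finSuccEquiv B n).symm (Q k), 2 * max E₁ E₂,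
      fun k => by rw [PowerSeries.coeff_mk]; exact (hmem k).1⟩
  let c (j : ℕ) : controlledSeries B₀ δ C (Fin n) :=
    ⟨PowerSeries.mk fun k => (R k).coeff j, 2 * max E₁ E₂, fun k => by
      rw [PowerSeries.coeff_mk]; exact coeff_mem_polyWithDenom (hmem k).2 j⟩
  have hRdeg (k : ℕ) : (R k).degree < e :=
    (Polynomial.degree_modByMonic_lt _ hM).trans_eq (Polynomial.degree_eq_natDegree hM.ne_zero)
  refine ⟨Qs, ∑ j : Fin e, Polynomial.C (c j) * Polynomial.X ^ (j : ℕ), ?_,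
    Polynomial.degree_sum_fin_lt _, ?_⟩
  · refine Subtype.ext (PowerSeries.ext fun k => (MvPolynomial.finSuccEquiv B n).injective ?_)
    have hQ : MvPolynomial.finSuccEquiv B n (PowerSeries.coeff k (Qs * Φ).1) =
        ∑ x ∈ Finset.HasAntidiagonal.antidiagonal k, Q x.1 * coeffs Φ.1 x.2 := by
      simp [Qs, coeffs, PowerSeries.coeff_mul, Subring.coe_mul]
    rw [Subring.coe_add, map_add, map_add, hQ,
      coeff_seriesOfPolynomial_sum (hRdeg k) fun j =>
        PowerSeries.coeff_mk k fun k => (R k).coeff j]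
    exact weierstrass_identity (coeffs Φ.1) (coeffs g.1) k
  · have hQ0 : Q 0 = coeffs g.1 0 /ₘ coeffs Φ.1 0 := by simp [Q, weierstrassQuotient.eq_def _ _ 0]
    rw [PowerSeries.coeff_mk, AlgEquiv.apply_symm_apply, hQ0]

lemma X_pow_natDegree_divByMonic {D : Type*} [CommRing D] [Nontrivial D] {M : Polynomial D}
    (hM : M.Monic) : (Polynomial.X ^ M.natDegree) /ₘ M = 1 := by
  refine (Polynomial.div_modByMonic_unique 1 (Polynomial.X ^ M.natDegree - M) hM ⟨by ring, ?_⟩).1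
  have hdeg : (Polynomial.X ^ M.natDegree : Polynomial D).degree = M.degree := by
    rw [Polynomial.degree_X_pow, Polynomial.degree_eq_natDegree hM.ne_zero]
  exact (Polynomial.degree_sub_lt_left hdeg (Polynomial.monic_X_pow _).ne_zero
    (by rw [hM.leadingCoeff, (Polynomial.monic_X_pow _).leadingCoeff])).trans_eq hdeg

theorem exists_weierstrass_preparation [Nontrivial B] {C : ℕ}
    (Φ : controlledSeries B₀ δ C (Fin (n + 1)))
    (hM : (MvPolynomial.finSuccEquiv B n (PowerSeries.coeff 0 Φ.1)).Monic)
    (hMe : PowerSeries.coeff 0 Φ.1 ∈ polyWithDenom B₀ δ (Fin (n + 1)) 0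
      (MvPolynomial.finSuccEquiv B n (PowerSeries.coeff 0 Φ.1)).natDegree) :
    ∃ (Q : controlledSeries B₀ δ C (Fin (n + 1)))
      (P : Polynomial (controlledSeries B₀ δ C (Fin n))),
      PowerSeries.coeff 0 Q.1 = 1 ∧ seriesOfPolynomial B₀ δ C n P = Q * Φ ∧ P.Monic ∧
      P.natDegree = (MvPolynomial.finSuccEquiv B n (PowerSeries.coeff 0 Φ.1)).natDegree := by
  let M := MvPolynomial.finSuccEquiv B n (PowerSeries.coeff 0 Φ.1)
  let x₀ : controlledSeries B₀ δ C (Fin (n + 1)) :=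
    ⟨PowerSeries.C (X 0), C_mem_controlledSeries (X_mem_polyWithDenom 0 0)⟩
  obtain ⟨Q, r, hdiv, hdeg, hQ⟩ := exists_weierstrass_division Φ (x₀ ^ M.natDegree) hM hMe
  refine ⟨Q, Polynomial.X ^ M.natDegree - r, ?_, ?_, ?_, ?_⟩
  · have hx₀ : PowerSeries.coeff 0 (x₀ ^ M.natDegree).1 = X 0 ^ M.natDegree := by
      rw [Subring.coe_pow, ← map_pow, PowerSeries.coeff_zero_C]
    apply (MvPolynomial.finSuccEquiv B n).injective
    rw [hQ, hx₀, map_pow, finSuccEquiv_X_zero, X_pow_natDegree_divByMonic hM, map_one]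
  · rw [map_sub, sub_eq_iff_eq_add, ← hdiv, map_pow]
    simp [seriesOfPolynomial, x₀]
  · rw [sub_eq_add_neg]
    exact Polynomial.monic_X_pow_add (by rwa [Polynomial.degree_neg])
  · rw [← Polynomial.degree_X_pow (R := controlledSeries B₀ δ C (Fin n)) M.natDegree] at hdeg
    exact Polynomial.natDegree_eq_of_degree_eq_some
      ((Polynomial.degree_sub_eq_left_of_degree_lt hdeg).trans (Polynomial.degree_X_pow _))

end Weierstrass

/-! ### Elimination of a variable -/

section UniformFiniteness

/-- The number of isolated zeros in the unit polydisc of the specializations of `f` at `s` and `φ`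
is bounded, uniformly over all fields `K`, all `φ : B →+* K` mapping `B₀` to the unit ball, and all
small enough `s`. -/
def HasUniformBound {B : Type} [CommRing B] (B₀ : Subring B) (δ : DenomSeq) {n : ℕ} {ι : Type}
    (f : ι → PowerSeries (MvPolynomial (Fin n) B)) : Prop :=
  ∃ N C : ℕ, ∀ (K : Type) [NormedField K] [IsUltrametricDist K] [CompleteSpace K] [IsAlgClosed K]
    (s : K) (φ : B →+* K), Absorbs δ C s → (∀ b ∈ B₀, ‖φ b‖ ≤ 1) →
    ∀ S : Finset (Fin n → K), (∀ z ∈ S, IsIsolatedIn (polydiscZeros s φ f) z) → S.card ≤ N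

/-- Every finite family of controlled series in `n` variables with Noetherian coefficients has
uniformly few isolated zeros; this is proved by induction on `n`. -/
def UniformFiniteness (δ : DenomSeq) (n : ℕ) : Prop :=
  ∀ (B : Type) [CommRing B] [Nontrivial B] [Algebra ℚ B] (B₀ : Subring B) [IsNoetherianRing B₀]
    (C : ℕ) (ι : Type) [Finite ι] (f : ι → PowerSeries (MvPolynomial (Fin n) B)),
    (∀ i, f i ∈ controlledSeries B₀ δ C (Fin n)) → HasUniformBound B₀ δ f

lemma uniformFiniteness_zero (δ : DenomSeq) : UniformFiniteness δ 0 :=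
  fun _ _ _ _ _ _ _ _ _ _ _ => ⟨1, 0, fun _ _ _ _ _ _ _ _ _ _ _ =>
    Finset.card_le_one.2 fun _ _ _ _ => Subsingleton.elim _ _⟩

end UniformFiniteness

section Fibers

lemma card_le_mul_card_image_tail {K : Type*} [CommRing K] [IsDomain K] [DecidableEq K] {n e : ℕ}
    {S : Finset (Fin (n + 1) → K)}
    (h : ∀ y ∈ S.image Fin.tail, ∃ p : Polynomial K, p ≠ 0 ∧ p.natDegree ≤ e ∧
      ∀ z ∈ S, Fin.tail z = y → p.IsRoot (z 0)) :
    S.card ≤ e * (S.image Fin.tail).card := by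
  refine Finset.card_le_mul_card_image _ _ fun y hy => ?_
  obtain ⟨p, hp, hpe, hroot⟩ := h y hy
  calc ({z ∈ S | Fin.tail z = y} : Finset _).card
      ≤ p.roots.toFinset.card := by
        refine Finset.card_le_card_of_injOn (· 0) (fun z hz => ?_) fun z hz w hw hzw => ?_
        · obtain ⟨hzS, hzy⟩ := Finset.mem_filter.1 hz
          exact Multiset.mem_toFinset.2 ((Polynomial.mem_roots hp).2 (hroot z hzS hzy))
        · rw [← Fin.cons_self_tail z, ← Fin.cons_self_tail w, (Finset.mem_filter.1 hz).2,
            (Finset.mem_filter.1 hw).2, show z 0 = w 0 from hzw]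
    _ ≤ e := (Multiset.toFinset_card_le _).trans ((Polynomial.card_roots' _).trans hpe)

variable {K : Type*} [NormedField K]

lemma norm_cons_le_one {n : ℕ} {x : K} {y : Fin n → K} (hx : ‖x‖ ≤ 1) (hy : ∀ i, ‖y i‖ ≤ 1)
    (i : Fin (n + 1)) : ‖(Fin.cons x y : Fin (n + 1) → K) i‖ ≤ 1 := by
  cases i using Fin.cases with
  | zero => simpa using hx
  | succ i => simpa using hy i

variable [IsUltrametricDist K] {B : Type*} [CommRing B] {B₀ : Subring B} {δ : DenomSeq} {C n : ℕ}
  {s : K} {φ : B →+* K}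

lemma IsIsolatedIn.of_subtype {ι : Type*} {f : ι → PowerSeries (MvPolynomial (Fin n) B)}
    {y : {y : Fin n → K // ∀ i, ‖y i‖ ≤ 1}}
    (h : IsIsolatedIn {y : {y : Fin n → K // ∀ i, ‖y i‖ ≤ 1} |
      ∀ i, seriesEval (eval₂Hom φ y.1) s (f i) = 0} y) :
    IsIsolatedIn (polydiscZeros s φ f) y.1 := by
  refine ⟨⟨y.2, h.1⟩, ?_⟩
  have hsub : ∀ᶠ w : {y : Fin n → K // ∀ i, ‖y i‖ ≤ 1} in 𝓝 y,
      w.1 ∈ polydiscZeros s φ f → w.1 = y.1 :=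
    h.2.mono fun w hw hwZ => congrArg _ (hw hwZ.2)
  have hpoly := (eventually_nhds_subtype_iff {y : Fin n → K | ∀ i, ‖y i‖ ≤ 1} y
    (fun w => w ∈ polydiscZeros s φ f → w = y.1)).1 hsub
  rwa [nhdsWithin_eq_nhds.2 (eventually_norm_le_one y.2)] at hpoly

variable [CompleteSpace K]

lemma seriesEvalHom_seriesOfPolynomial (hs : Absorbs δ C s) (hφ : ∀ b ∈ B₀, ‖φ b‖ ≤ 1)
    {x : K} {y : Fin n → K} (hy : ∀ i, ‖y i‖ ≤ 1)
    (hxy : ∀ i, ‖(Fin.cons x y : Fin (n + 1) → K) i‖ ≤ 1)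
    (p : Polynomial (controlledSeries B₀ δ C (Fin n))) :
    seriesEvalHom hs hφ hxy (seriesOfPolynomial B₀ δ C n p) =
      (p.map (seriesEvalHom hs hφ hy)).eval x := by
  have hcomp : (eval₂Hom φ (Fin.cons x y : Fin (n + 1) → K)).comp
      (rename Fin.succ : MvPolynomial (Fin n) B →ₐ[B] _).toRingHom = eval₂Hom φ y := by
    ext i <;> simp
  have hhom : (seriesEvalHom hs hφ hxy).comp (seriesOfPolynomial B₀ δ C n) =
      Polynomial.eval₂RingHom (seriesEvalHom hs hφ hy) x := by
    refine Polynomial.ringHom_ext (fun c => ?_) ?_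
    · simp only [RingHom.comp_apply, seriesOfPolynomial, Polynomial.coe_eval₂RingHom,
        Polynomial.eval₂_C]
      exact (seriesEval_map _ _ _ _).trans (by rw [hcomp])
    · simp only [RingHom.comp_apply, seriesOfPolynomial, Polynomial.coe_eval₂RingHom,
        Polynomial.eval₂_X]
      exact (seriesEval_C _ _ _).trans (by simp)
  rw [Polynomial.eval_map]
  exact DFunLike.congr_fun hhom p

lemma seriesEvalHom_ne_zero {σ : Type*} (hs : Absorbs δ C s) (hφ : ∀ b ∈ B₀, ‖φ b‖ ≤ 1)
    {v : σ → K} (hv : ∀ i, ‖v i‖ ≤ 1) {Q : controlledSeries B₀ δ C σ}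
    (hQ : PowerSeries.coeff 0 Q.1 = 1) : seriesEvalHom hs hφ hv Q ≠ 0 := by
  intro h0
  have hsmall : ‖seriesEvalHom hs hφ hv (Q - 1)‖ ≤ √‖s‖ := by
    refine IsUltrametricDist.norm_tsum_le_of_forall_le_of_nonneg (Real.sqrt_nonneg _) fun k => ?_
    rcases Nat.eq_zero_or_pos k with rfl | hk
    · rw [AddSubgroupClass.coe_sub, map_sub, hQ]
      simp
    · exact (decaysAt_of_mem_controlledSeries hs hφ hv (Q - 1).2 k).trans
        (pow_le_of_le_one (Real.sqrt_nonneg _) (sqrt_lt_one hs.norm_lt_one).le hk.ne')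
  rw [map_sub, h0, map_one, zero_sub, norm_neg, norm_one] at hsmall
  exact hsmall.not_gt (sqrt_lt_one hs.norm_lt_one)

/-- A Weierstrass reduction of the family `f` with respect to its member `f i₀`: up to a unit,
`f i₀` is the monic polynomial `P` in the variable `X 0`, and `f i` is congruent to the polynomial
`F i` modulo `f i₀`. -/
structure IsWeierstrassReduction {ι : Type*} (f : ι → controlledSeries B₀ δ C (Fin (n + 1)))
    (i₀ : ι) (P : Polynomial (controlledSeries B₀ δ C (Fin n)))
    (F : ι → Polynomial (controlledSeries B₀ δ C (Fin n))) : Prop where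
  monic : P.Monic
  exists_eq_unit_mul : ∃ Q, PowerSeries.coeff 0 Q.1 = 1 ∧
    seriesOfPolynomial B₀ δ C n P = Q * f i₀
  exists_eq_mul_add : ∀ i, ∃ Q, f i = Q * f i₀ + seriesOfPolynomial B₀ δ C n (F i)

section Reduction

variable {ι : Type*} {f : ι → controlledSeries B₀ δ C (Fin (n + 1))} {i₀ : ι}
  {P : Polynomial (controlledSeries B₀ δ C (Fin n))}
  {F : ι → Polynomial (controlledSeries B₀ δ C (Fin n))}

lemma IsWeierstrassReduction.cons_mem_polydiscZeros_iff (h : IsWeierstrassReduction f i₀ P F)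
    (hs : Absorbs δ C s) (hφ : ∀ b ∈ B₀, ‖φ b‖ ≤ 1) {x : K} {y : Fin n → K}
    (hy : ∀ i, ‖y i‖ ≤ 1) :
    Fin.cons x y ∈ polydiscZeros s φ (fun i => (f i).1) ↔
      (P.map (seriesEvalHom hs hφ hy)).IsRoot x ∧
        ∀ i, ((F i).map (seriesEvalHom hs hφ hy)).IsRoot x := by
  have key : ∀ hx : ‖x‖ ≤ 1, (∀ i, seriesEvalHom hs hφ (norm_cons_le_one hx hy) (f i) = 0) ↔
      (P.map (seriesEvalHom hs hφ hy)).IsRoot x ∧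
        ∀ i, ((F i).map (seriesEvalHom hs hφ hy)).IsRoot x := by
    intro hx
    set ev := seriesEvalHom hs hφ (norm_cons_le_one hx hy)
    have hpoly : ∀ p, ((p : Polynomial _).map (seriesEvalHom hs hφ hy)).IsRoot x ↔
        ev (seriesOfPolynomial B₀ δ C n p) = 0 := fun p => by
      rw [Polynomial.IsRoot, seriesEvalHom_seriesOfPolynomial hs hφ hy]
    obtain ⟨Q, hQ, hPQ⟩ := h.exists_eq_unit_mul
    choose Qf hQf using h.exists_eq_mul_add
    have hP : ev (seriesOfPolynomial B₀ δ C n P) = 0 ↔ ev (f i₀) = 0 := by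
      rw [hPQ, map_mul, mul_eq_zero_iff_left (seriesEvalHom_ne_zero hs hφ _ hQ)]
    have hF : ∀ i, ev (f i₀) = 0 → (ev (seriesOfPolynomial B₀ δ C n (F i)) = 0 ↔
        ev (f i) = 0) := fun i h0 => by
      rw [hQf i, map_add, map_mul, h0, mul_zero, zero_add]
    simp only [hpoly, hP]
    exact ⟨fun h0 => ⟨h0 i₀, fun i => (hF i (h0 i₀)).2 (h0 i)⟩,
      fun h0 i => (hF i h0.1).1 (h0.2 i)⟩
  refine ⟨fun hz => (key (by simpa using hz.1 0)).1 hz.2, fun hr => ?_⟩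
  have hx : ‖x‖ ≤ 1 := norm_root_le_one (h.monic.map _) (fun k => ?_) hr.1
  · exact ⟨norm_cons_le_one hx hy, (key hx).2 hr⟩
  · rw [Polynomial.coeff_map]
    exact (decaysAt_of_mem_controlledSeries hs hφ hy (P.coeff k).2).norm_seriesEval_le_one
      hs.norm_lt_one

lemma IsWeierstrassReduction.exists_isIsolatedIn_tail [IsAlgClosed K] [Finite ι]
    (h : IsWeierstrassReduction f i₀ P F) (hs : Absorbs δ C s) (hφ : ∀ b ∈ B₀, ‖φ b‖ ≤ 1)
    {z : Fin (n + 1) → K} (hz : IsIsolatedIn (polydiscZeros s φ fun i => (f i).1) z) :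
    ∃ c : MinorIndex ι P.natDegree, IsIsolatedIn (polydiscZeros s φ fun j =>
      (borderedMinor P P.natDegree F c j).1) (Fin.tail z) := by
  have := Fintype.ofFinite ι
  let ev : {y : Fin n → K // ∀ i, ‖y i‖ ≤ 1} → (controlledSeries B₀ δ C (Fin n) →+* K) :=
    fun y => seriesEvalHom hs hφ y.2
  have hcont : ∀ a, Continuous fun y => ev y a := fun a =>
    continuousOn_iff_continuous_domRestrict.mp (continuousOn_seriesEval hs hφ a.2)
  have hbdd : ∀ y a, ‖ev y a‖ ≤ 1 := fun y a =>
    (decaysAt_of_mem_controlledSeries hs hφ y.2 a.2).norm_seriesEval_le_one hs.norm_lt_one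
  let y₀ : {y : Fin n → K // ∀ i, ‖y i‖ ≤ 1} := ⟨Fin.tail z, fun i => hz.1.1 i.succ⟩
  have hψ : Continuous fun w : K × {y : Fin n → K // ∀ i, ‖y i‖ ≤ 1} =>
      (Fin.cons w.1 w.2.1 : Fin (n + 1) → K) :=
    Continuous.finCons (A := fun _ => K) continuous_fst
      (continuous_subtype_val.comp continuous_snd)
  have hiso : IsIsolatedIn {w : K × {y : Fin n → K // ∀ i, ‖y i‖ ≤ 1} |
      (P.map (ev w.2)).IsRoot w.1 ∧ ∀ i, ((F i).map (ev w.2)).IsRoot w.1} (z 0, y₀) := by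
    refine IsIsolatedIn.of_map (ψ := fun w : K × {y : Fin n → K // ∀ i, ‖y i‖ ≤ 1} =>
        (Fin.cons w.1 w.2.1 : Fin (n + 1) → K))
      (by simpa [y₀] using hz) (fun w w' hww' => ?_) hψ.continuousAt
      ((h.cons_mem_polydiscZeros_iff hs hφ y₀.2).1 (by simpa [y₀] using hz.1))
      (Eventually.of_forall fun w => (h.cons_mem_polydiscZeros_iff hs hφ w.2.2).2)
    obtain ⟨h0, htail⟩ := Fin.cons_inj.1 hww'
    exact Prod.ext h0 (Subtype.ext htail)
  obtain ⟨c, hc⟩ := hiso.exists_borderedMinor hcont hbdd h.monic rfl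
  exact ⟨c, hc.of_subtype⟩

lemma IsWeierstrassReduction.card_le [DecidableEq K] (h : IsWeierstrassReduction f i₀ P F)
    (hs : Absorbs δ C s) (hφ : ∀ b ∈ B₀, ‖φ b‖ ≤ 1) {S : Finset (Fin (n + 1) → K)}
    (hS : ∀ z ∈ S, z ∈ polydiscZeros s φ fun i => (f i).1) :
    S.card ≤ P.natDegree * (S.image Fin.tail).card := by
  refine card_le_mul_card_image_tail fun y hy => ?_
  obtain ⟨z, hz, rfl⟩ := Finset.mem_image.1 hy
  have htail : ∀ i, ‖Fin.tail z i‖ ≤ 1 := fun i => (hS z hz).1 i.succ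
  refine ⟨P.map (seriesEvalHom hs hφ htail), (h.monic.map _).ne_zero, P.natDegree_map_le,
    fun w hw hwz => ?_⟩
  refine ((h.cons_mem_polydiscZeros_iff hs hφ htail).1 ?_).1
  rw [← hwz, Fin.cons_self_tail]
  exact hS w hw

end Reduction

lemma exists_isWeierstrassReduction [Nontrivial B] {ι : Type*}
    (f : ι → controlledSeries B₀ δ C (Fin (n + 1))) (i₀ : ι)
    (hM : (MvPolynomial.finSuccEquiv B n (PowerSeries.coeff 0 (f i₀).1)).Monic)
    (hMe : PowerSeries.coeff 0 (f i₀).1 ∈ polyWithDenom B₀ δ (Fin (n + 1)) 0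
      (MvPolynomial.finSuccEquiv B n (PowerSeries.coeff 0 (f i₀).1)).natDegree) :
    ∃ P F, IsWeierstrassReduction f i₀ P F := by
  obtain ⟨Q, P, hQ, hPQ, hP, -⟩ := exists_weierstrass_preparation (f i₀) hM hMe
  choose Qf F hF using fun i => exists_weierstrass_division (f i₀) (f i) hM hMe
  exact ⟨P, F, hP, ⟨Q, hQ, hPQ⟩, fun i => ⟨Qf i, (hF i).1⟩⟩

end Fibers

lemma card_le_sum_of_forall_exists {α γ : Type*} [Fintype γ] {p : γ → α → Prop} {N : γ → ℕ}
    (hN : ∀ c (T : Finset α), (∀ y ∈ T, p c y) → T.card ≤ N c) {T : Finset α}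
    (hT : ∀ y ∈ T, ∃ c, p c y) : T.card ≤ ∑ c, N c := by
  classical
  calc T.card ≤ (Finset.univ.biUnion fun c => {y ∈ T | p c y}).card :=
        Finset.card_le_card fun y hy => by
          obtain ⟨c, hc⟩ := hT y hy
          exact Finset.mem_biUnion.2 ⟨c, Finset.mem_univ _, Finset.mem_filter.2 ⟨hy, hc⟩⟩
    _ ≤ ∑ c, Finset.card {y ∈ T | p c y} := Finset.card_biUnion_le
    _ ≤ ∑ c, N c := Finset.sum_le_sum fun c _ => hN c _ fun y hy => (Finset.mem_filter.1 hy).2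

lemma hasUniformBound_of_monic {δ : DenomSeq} {n C : ℕ} (H : UniformFiniteness δ n) {B : Type}
    [CommRing B] [Nontrivial B] [Algebra ℚ B] {B₀ : Subring B} [IsNoetherianRing B₀] {ι : Type}
    [Finite ι] (f : ι → controlledSeries B₀ δ C (Fin (n + 1))) (i₀ : ι)
    (hM : (MvPolynomial.finSuccEquiv B n (PowerSeries.coeff 0 (f i₀).1)).Monic)
    (hMe : PowerSeries.coeff 0 (f i₀).1 ∈ polyWithDenom B₀ δ (Fin (n + 1)) 0
      (MvPolynomial.finSuccEquiv B n (PowerSeries.coeff 0 (f i₀).1)).natDegree) :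
    HasUniformBound B₀ δ fun i => (f i).1 := by
  classical
  have := Fintype.ofFinite ι
  obtain ⟨P, F, hPF⟩ := exists_isWeierstrassReduction f i₀ hM hMe
  choose N C' hN using fun c : MinorIndex ι P.natDegree =>
    H B B₀ C _ (fun j => (borderedMinor P P.natDegree F c j).1) fun j => Subtype.prop _
  refine ⟨P.natDegree * ∑ c, N c, C + ∑ c, C' c, fun K _ _ _ _ s φ hs hφ S hS => ?_⟩
  have hsC : Absorbs δ C s := hs.mono (Nat.le_add_right _ _)
  have hsC' : ∀ c, Absorbs δ (C' c) s := fun c => hs.mono <|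
    (Finset.single_le_sum (fun _ _ => Nat.zero_le _) (Finset.mem_univ c)).trans
      (Nat.le_add_left _ _)
  refine (hPF.card_le hsC hφ fun z hz => (hS z hz).1).trans (Nat.mul_le_mul_left _ ?_)
  refine card_le_sum_of_forall_exists (fun c => hN c K s φ (hsC' c) hφ) fun y hy => ?_
  obtain ⟨z, hz, rfl⟩ := Finset.mem_image.1 hy
  exact hPF.exists_isIsolatedIn_tail hsC hφ (hS z hz)

/-! ### Monomial constant terms -/

section Shear

/-- The linear change of coordinates adding the coordinate `0` to all others. It turns monomials
into monic polynomials in the variable `X 0`. -/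
def shear (R : Type*) [AddGroup R] (n : ℕ) : Equiv.Perm (Fin (n + 1) → R) where
  toFun v := Fin.cons (v 0) fun j => v j.succ + v 0
  invFun v := Fin.cons (v 0) fun j => v j.succ - v 0
  left_inv v := by ext i; cases i using Fin.cases <;> simp
  right_inv v := by ext i; cases i using Fin.cases <;> simp

@[simp] lemma shear_apply_zero {R : Type*} [AddGroup R] {n : ℕ} (v : Fin (n + 1) → R) :
    shear R n v 0 = v 0 := rfl

@[simp] lemma shear_apply_succ {R : Type*} [AddGroup R] {n : ℕ} (v : Fin (n + 1) → R) (j : Fin n) :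
    shear R n v j.succ = v j.succ + v 0 := rfl

lemma continuous_shear (R : Type*) [AddGroup R] [TopologicalSpace R] [ContinuousAdd R] (n : ℕ) :
    Continuous (shear R n) := by
  refine continuous_pi fun i => ?_
  cases i using Fin.cases <;> simp only [shear_apply_zero, shear_apply_succ] <;> fun_prop

lemma norm_shear_le_one_iff {K : Type*} [NormedField K] [IsUltrametricDist K] {n : ℕ}
    {v : Fin (n + 1) → K} : (∀ i, ‖shear K n v i‖ ≤ 1) ↔ ∀ i, ‖v i‖ ≤ 1 := by
  simp only [Fin.forall_fin_succ, shear_apply_zero, shear_apply_succ]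
  refine and_congr_right fun h0 => forall_congr' fun j => ⟨fun h => ?_, fun h => ?_⟩
  · simpa using (IsUltrametricDist.norm_add_le_max (v j.succ + v 0) (-v 0)).trans
      (max_le h (by simpa using h0))
  · exact (IsUltrametricDist.norm_add_le_max _ _).trans (max_le h h0)

variable {B : Type*} [CommRing B] {B₀ : Subring B} {δ : DenomSeq} {n : ℕ}

lemma prod_pow_mem_polyWithDenom {σ τ : Type*} [Fintype σ] {g : σ → MvPolynomial τ B}
    (hg : ∀ i, g i ∈ polyWithDenom B₀ δ τ 0 1) (ν : σ →₀ ℕ) :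
    ∏ i, g i ^ ν i ∈ polyWithDenom B₀ δ τ 0 ν.degree := by
  simpa [Finsupp.degree_eq_sum] using
    prod_mem_polyWithDenom (t := Finset.univ) fun i _ => pow_mem_polyWithDenom (hg i) (ν i)

lemma aeval_mem_polyWithDenom {σ τ : Type*} [Finite σ] {N m : ℕ} {g : σ → MvPolynomial τ B}
    (hg : ∀ i, g i ∈ polyWithDenom B₀ δ τ 0 1) {q : MvPolynomial σ B}
    (hq : q ∈ polyWithDenom B₀ δ σ N m) : aeval g q ∈ polyWithDenom B₀ δ τ N m := by
  have := Fintype.ofFinite σ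
  rw [aeval_def, eval₂_eq']
  refine sum_mem fun ν hν => ?_
  exact polyWithDenom_mono le_rfl ((zero_add _).trans_le ((hq ν).2 (mem_support_iff.1 hν)))
    (mul_mem_polyWithDenom (N := N) (N' := 0) (C_mem_polyWithDenom (m := 0) (hq ν).1)
      (prod_pow_mem_polyWithDenom hg ν))

lemma map_aeval_mem_controlledSeries {σ τ : Type*} [Finite σ] {C : ℕ} {g : σ → MvPolynomial τ B}
    (hg : ∀ i, g i ∈ polyWithDenom B₀ δ τ 0 1) {f : PowerSeries (MvPolynomial σ B)}
    (hf : f ∈ controlledSeries B₀ δ C σ) :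
    PowerSeries.map (aeval g : MvPolynomial σ B →ₐ[B] MvPolynomial τ B).toRingHom f ∈
      controlledSeries B₀ δ C τ := by
  obtain ⟨E, hE⟩ := hf
  refine ⟨E, fun k => ?_⟩
  rw [PowerSeries.coeff_map]
  exact aeval_mem_polyWithDenom hg (hE k)

lemma shear_X_mem_polyWithDenom (i : Fin (n + 1)) :
    shear (MvPolynomial (Fin (n + 1)) B) n X i ∈ polyWithDenom B₀ δ (Fin (n + 1)) 0 1 := by
  cases i using Fin.cases with
  | zero => exact X_mem_polyWithDenom _ _
  | succ j => exact add_mem (X_mem_polyWithDenom _ _) (X_mem_polyWithDenom _ _)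

/-- The substitution of `X j + X 0` for the variables `X j` other than `X 0`. -/
noncomputable def shearHom (B : Type*) [CommRing B] (n : ℕ) :
    MvPolynomial (Fin (n + 1)) B →ₐ[B] MvPolynomial (Fin (n + 1)) B :=
  aeval (shear _ n X)

lemma finSuccEquiv_shear_X [Nontrivial B] (i : Fin (n + 1)) :
    (MvPolynomial.finSuccEquiv B n (shear _ n X i)).Monic ∧
      (MvPolynomial.finSuccEquiv B n (shear _ n X i)).natDegree = 1 := by
  cases i using Fin.cases with
  | zero =>
    simp only [shear_apply_zero, finSuccEquiv_X_zero]
    exact ⟨Polynomial.monic_X, Polynomial.natDegree_X⟩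
  | succ j =>
    simp only [shear_apply_succ, map_add, finSuccEquiv_X_zero, finSuccEquiv_X_succ]
    rw [add_comm]
    exact ⟨Polynomial.monic_X_add_C _, Polynomial.natDegree_X_add_C _⟩

lemma finSuccEquiv_shearHom_monomial [Nontrivial B] (μ : Fin (n + 1) →₀ ℕ) :
    (MvPolynomial.finSuccEquiv B n (shearHom B n (monomial μ (1 : B)))).Monic ∧
      (MvPolynomial.finSuccEquiv B n (shearHom B n (monomial μ (1 : B)))).natDegree =
        μ.degree := by
  have hmonic : ∀ i ∈ Finset.univ,
      (MvPolynomial.finSuccEquiv B n (shear _ n X i) ^ μ i).Monic :=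
    fun i _ => (finSuccEquiv_shear_X i).1.pow _
  rw [shearHom, aeval_monomial, map_one, one_mul, Finsupp.prod_fintype _ _ (by simp), map_prod]
  simp only [map_pow]
  refine ⟨Polynomial.monic_prod_of_monic _ _ hmonic, ?_⟩
  rw [Polynomial.natDegree_prod_of_monic _ _ hmonic, Finsupp.degree_eq_sum]
  exact Finset.sum_congr rfl fun i _ => by
    rw [(finSuccEquiv_shear_X i).1.natDegree_pow, (finSuccEquiv_shear_X i).2, mul_one]

end Shear

lemma HasUniformBound.of_map_shear {δ : DenomSeq} {n : ℕ} {B : Type} [CommRing B] {B₀ : Subring B}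
    {ι : Type} {f : ι → PowerSeries (MvPolynomial (Fin (n + 1)) B)}
    (h : HasUniformBound B₀ δ fun i => PowerSeries.map (shearHom B n).toRingHom (f i)) :
    HasUniformBound B₀ δ f := by
  obtain ⟨N, C, hN⟩ := h
  refine ⟨N, C, fun K _ _ _ _ s φ hs hφ S hS => ?_⟩
  have hcomp : ∀ v, (eval₂Hom φ v).comp (shearHom B n).toRingHom = eval₂Hom φ (shear K n v) :=
      fun v => by
    ext j
    · simp [shearHom]
    · cases j using Fin.cases <;> simp [shearHom]
  have hzeros : ∀ v,
      v ∈ polydiscZeros s φ (fun i => PowerSeries.map (shearHom B n).toRingHom (f i)) ↔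
        shear K n v ∈ polydiscZeros s φ f := fun v =>
    and_congr norm_shear_le_one_iff.symm (by simp only [seriesEval_map, hcomp])
  classical
  rw [← Finset.card_image_of_injective S (shear K n).symm.injective]
  refine hN K s φ hs hφ _ fun v hv => ?_
  obtain ⟨z, hz, rfl⟩ := Finset.mem_image.1 hv
  refine IsIsolatedIn.of_map (ψ := shear K n) (by simpa using hS z hz) (shear K n).injective
    (continuous_shear K n).continuousAt ((hzeros _).2 (by simpa using (hS z hz).1))
    (Eventually.of_forall fun w => (hzeros w).1)

lemma hasUniformBound_of_monomial {δ : DenomSeq} {n C : ℕ} (H : UniformFiniteness δ n) {B : Type}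
    [CommRing B] [Nontrivial B] [Algebra ℚ B] {B₀ : Subring B} [IsNoetherianRing B₀] {ι : Type}
    [Finite ι] {f : ι → PowerSeries (MvPolynomial (Fin (n + 1)) B)}
    (hf : ∀ i, f i ∈ controlledSeries B₀ δ C (Fin (n + 1))) (i₀ : ι) (μ : Fin (n + 1) →₀ ℕ)
    (h0 : PowerSeries.coeff 0 (f i₀) = monomial μ 1) : HasUniformBound B₀ δ f := by
  have hcoeff : PowerSeries.coeff 0 (PowerSeries.map (shearHom B n).toRingHom (f i₀)) =
      shearHom B n (monomial μ (1 : B)) := by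
    rw [PowerSeries.coeff_map, h0]; rfl
  refine HasUniformBound.of_map_shear (hasUniformBound_of_monic H
    (fun i => ⟨PowerSeries.map (shearHom B n).toRingHom (f i),
      map_aeval_mem_controlledSeries shear_X_mem_polyWithDenom (hf i)⟩) i₀ ?_ ?_)
  · rw [hcoeff]
    exact (finSuccEquiv_shearHom_monomial μ).1
  · rw [hcoeff, (finSuccEquiv_shearHom_monomial μ).2]
    exact aeval_mem_polyWithDenom shear_X_mem_polyWithDenom
      (monomial_mem_polyWithDenom (mem_withDenom_of_mem B₀.one_mem) fun _ => le_rfl)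

/-! ### Uniform division of power series in one variable -/

section SeriesWithDenom

variable {B : Type*} [CommRing B] (B₀ : Subring B) (δ : DenomSeq)

/-- The power series whose `k`-th coefficient has denominator dividing `δ (D + C k)`. -/
def seriesWithDenom (D C : ℕ) : Submodule B₀ (PowerSeries B) where
  carrier := {f | ∀ k, PowerSeries.coeff k f ∈ withDenom B₀ δ (D + C * k)}
  zero_mem' k := by simp
  add_mem' hf hg k := by
    rw [map_add]
    exact add_mem (hf k) (hg k)
  smul_mem' c _ hf k := Submodule.smul_mem _ c (hf k)

variable {B₀ δ}

lemma seriesWithDenom_mono {D D' C C' : ℕ} (hD : D ≤ D') (hC : C ≤ C') :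
    seriesWithDenom B₀ δ D C ≤ seriesWithDenom B₀ δ D' C' :=
  fun _ hf k => withDenom_mono (add_le_add hD (Nat.mul_le_mul_right k hC)) (hf k)

lemma mul_mem_seriesWithDenom {D D' C : ℕ} {f g : PowerSeries B}
    (hf : f ∈ seriesWithDenom B₀ δ D C) (hg : g ∈ seriesWithDenom B₀ δ D' C) :
    f * g ∈ seriesWithDenom B₀ δ (D + D') C := by
  intro k
  rw [PowerSeries.coeff_mul]
  refine sum_mem fun x hx => ?_
  rw [Finset.HasAntidiagonal.mem_antidiagonal] at hx
  have key : D + D' + C * k = D + C * x.1 + (D' + C * x.2) := by rw [← hx]; ring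
  rw [key]
  exact mul_mem_withDenom (hf x.1) (hg x.2)

lemma C_mem_seriesWithDenom {D C : ℕ} {b : B} (hb : b ∈ withDenom B₀ δ D) :
    PowerSeries.C b ∈ seriesWithDenom B₀ δ D C := by
  classical
  intro k
  rw [PowerSeries.coeff_C]
  split_ifs with hk
  · subst hk; exact hb
  · exact zero_mem _

lemma smul_mem_seriesWithDenom {D C : ℕ} (a : PowerSeries B₀) {f : PowerSeries B}
    (hf : f ∈ seriesWithDenom B₀ δ D C) : a • f ∈ seriesWithDenom B₀ δ D C := by
  have ha : PowerSeries.map B₀.subtype a ∈ seriesWithDenom B₀ δ 0 C := fun k =>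
    mem_withDenom_of_mem (by rw [PowerSeries.coeff_map]; exact (PowerSeries.coeff k a).2)
  have h := mul_mem_seriesWithDenom ha hf
  rwa [zero_add] at h

/-- The initial coefficients of the module generated by the family come from finitely many of its
members `X ^ l t * G t`, and these involve only finitely many of the `g μ`. -/
lemma coeff_succ_mem_of_X_pow_mul_eq_sum {C l M : ℕ} {ι : Type*} {a : ι → ℕ}
    {g : ι → PowerSeries B} (hg : ∀ ν, g ν ∈ seriesWithDenom B₀ δ (C * a ν) C) {S : Finset ι}
    (hM : ∀ μ ∈ S, a μ + l ≤ M) {A : ι → PowerSeries B₀} {G : PowerSeries B}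
    (hG : PowerSeries.X ^ l * G = ∑ μ ∈ S, A μ • g μ) (k : ℕ) :
    PowerSeries.coeff (k + 1) G ∈ withDenom B₀ δ (C * (1 + M) * (k + 1)) := by
  rw [← PowerSeries.coeff_X_pow_mul G l, hG, map_sum]
  refine sum_mem fun μ hμ => withDenom_mono ?_ (smul_mem_seriesWithDenom (A μ) (hg μ) (k + 1 + l))
  have haM := hM μ hμ
  calc C * a μ + C * (k + 1 + l) = C * (k + 1 + (a μ + l)) := by ring
    _ ≤ C * (k + 1 + M * (k + 1)) := by gcongr; nlinarith
    _ = C * (1 + M) * (k + 1) := by ring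

end SeriesWithDenom

lemma exists_uniform_generators {R : Type*} [CommRing R] [IsNoetherianRing R] (I : ℕ →o Ideal R) :
    ∃ (T : Type) (_ : Fintype T) (l : T → ℕ) (b : T → R), (∀ t, b t ∈ I (l t)) ∧
      ∀ k, ∀ x ∈ I k, ∃ c : T → R, (∀ t, k < l t → c t = 0) ∧ x = ∑ t, c t * b t := by
  classical
  obtain ⟨L, hL⟩ := monotone_stabilizes_iff_noetherian.mpr ‹_› I
  choose m b hb using fun k =>
    Submodule.fg_iff_exists_fin_generating_family.mp (IsNoetherian.noetherian (I k))
  refine ⟨Σ l : Fin (L + 1), Fin (m l), inferInstance, fun t => t.1, fun t => b t.1 t.2,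
    fun t => hb t.1 ▸ Submodule.subset_span ⟨t.2, rfl⟩, fun k x hx => ?_⟩
  have hmin : I k = I (min k L) := by
    rcases le_total k L with h | h
    · rw [min_eq_left h]
    · rw [min_eq_right h, hL k h]
  rw [hmin, ← hb, Submodule.mem_span_range_iff_exists_fun] at hx
  obtain ⟨c, rfl⟩ := hx
  let l₀ : Fin (L + 1) := ⟨min k L, by omega⟩
  refine ⟨fun t => if h : t.1 = l₀ then c (Fin.cast (by rw [h]) t.2) else 0, fun t ht => ?_, ?_⟩
  · refine dif_neg fun h => ?_
    have hle : (t.1 : ℕ) ≤ k := h ▸ min_le_left k L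
    exact hle.not_gt ht
  · rw [Fintype.sum_sigma, Finset.sum_eq_single l₀ (fun l _ hl => by simp [hl]) (by simp)]
    simp [l₀]

section InitialIdeal

variable {B : Type*} [CommRing B] {B₀ : Subring B}
  {N : Submodule (PowerSeries B₀) (PowerSeries B)} {y : PowerSeries B}

lemma C_mul_mem {b : B} (hb : b ∈ B₀) (hy : y ∈ N) : PowerSeries.C b * y ∈ N := by
  have h : (PowerSeries.C (⟨b, hb⟩ : B₀)) • y ∈ N := N.smul_mem _ hy
  rwa [Algebra.smul_def, show algebraMap (PowerSeries B₀) (PowerSeries B) =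
    PowerSeries.map B₀.subtype from rfl, PowerSeries.map_C] at h

lemma X_pow_mul_mem (k : ℕ) (hy : y ∈ N) : PowerSeries.X ^ k * y ∈ N := by
  have h : (PowerSeries.X ^ k : PowerSeries B₀) • y ∈ N := N.smul_mem _ hy
  rwa [Algebra.smul_def, show algebraMap (PowerSeries B₀) (PowerSeries B) =
    PowerSeries.map B₀.subtype from rfl, map_pow, PowerSeries.map_X] at h

variable (N) in
/-- The ideal of the coefficients of `X ^ k`, as far as they lie in `B₀`, of the members of `N`
divisible by `X ^ k`; it increases with `k`. -/
def initialIdeal : ℕ →o Ideal B₀ where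
  toFun k :=
    { carrier := {b | ∃ z, PowerSeries.X ^ k * z ∈ N ∧ PowerSeries.coeff 0 z = (b : B)}
      zero_mem' := ⟨0, by simp, by simp⟩
      add_mem' := by
        rintro _ _ ⟨y, hy, hy0⟩ ⟨z, hz, hz0⟩
        exact ⟨y + z, by rw [mul_add]; exact N.add_mem hy hz, by
          rw [map_add, hy0, hz0, Subring.coe_add]⟩
      smul_mem' := by
        rintro c _ ⟨z, hz, hz0⟩
        exact ⟨PowerSeries.C (c : B) * z, by rw [mul_left_comm]; exact C_mul_mem c.2 hz, by
          rw [PowerSeries.coeff_C_mul, hz0, smul_eq_mul, Subring.coe_mul]⟩ }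
  monotone' := monotone_nat_of_le_succ fun k _ => by
    rintro ⟨z, hz, hz0⟩
    exact ⟨z, by rw [pow_succ', mul_assoc]; simpa only [pow_one] using X_pow_mul_mem 1 hz, hz0⟩

/-- The members `X ^ l t * G t` of `N` generate all the ideals `initialIdeal N k`. This is what the
division algorithm needs to know about `N`. -/
structure IsInitialBasis {T : Type*} [Fintype T] (N : Submodule (PowerSeries B₀) (PowerSeries B))
    (l : T → ℕ) (G : T → PowerSeries B) : Prop where
  mem t : PowerSeries.X ^ l t * G t ∈ N
  exists_coeff_zero_eq {k z} : PowerSeries.X ^ k * z ∈ N → PowerSeries.coeff 0 z ∈ B₀ →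
    ∃ c : T → B₀, (∀ t, k < l t → c t = 0) ∧
      PowerSeries.coeff 0 z = ∑ t, (c t : B) * PowerSeries.coeff 0 (G t)

lemma exists_isInitialBasis [IsNoetherianRing B₀]
    (N : Submodule (PowerSeries B₀) (PowerSeries B)) :
    ∃ (T : Type) (_ : Fintype T) (l : T → ℕ) (G : T → PowerSeries B), IsInitialBasis N l G := by
  obtain ⟨T, hT, l, b, hb, hgen⟩ := exists_uniform_generators (initialIdeal N)
  choose G hG hG0 using hb
  refine ⟨T, hT, l, G, hG, fun {k z} hz hz0 => ?_⟩
  obtain ⟨c, hc, hsum⟩ := hgen k ⟨_, hz0⟩ ⟨z, hz, rfl⟩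
  refine ⟨c, hc, ?_⟩
  simpa only [hG0, AddSubmonoidClass.coe_finsetSum, Subring.coe_mul] using
    congrArg Subtype.val hsum

end InitialIdeal

section Division

variable {B : Type*} [CommRing B] {T : Type*} [Fintype T] {G : T → PowerSeries B}

/-- Division of power series digit by digit: the digits obtained from successive division steps are
the coefficients of the quotients. -/
lemma exists_eq_sum_mul_of_step {P : ℕ → PowerSeries B → Prop} {Q : ℕ → (T → B) → Prop}
    (step : ∀ k z, P k z → ∃ c z', Q k c ∧
      z = ∑ t, PowerSeries.C (c t) * G t + PowerSeries.X * z' ∧ P (k + 1) z')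
    {z : PowerSeries B} (hz : P 0 z) :
    ∃ d : ℕ → T → B, (∀ k, Q k (d k)) ∧ z = ∑ t, PowerSeries.mk (fun k => d k t) * G t := by
  choose c next hQ heq hP using step
  let seq : (k : ℕ) → {z // P k z} :=
    fun k => Nat.rec ⟨z, hz⟩ (fun k z => ⟨next k z.1 z.2, hP k z.1 z.2⟩) k
  let d : ℕ → T → B := fun k => c k (seq k).1 (seq k).2
  let u : ℕ → PowerSeries B := fun k =>
    (seq k).1 - ∑ t, PowerSeries.mk (fun j => d (k + j) t) * G t
  have hu : ∀ k, u k = PowerSeries.X * u (k + 1) := by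
    intro k
    have shift : ∀ t, PowerSeries.mk (fun j => d (k + j) t) =
        PowerSeries.C (d k t) + PowerSeries.X * PowerSeries.mk (fun j => d (k + 1 + j) t) := by
      intro t
      rw [PowerSeries.eq_X_mul_shift_add_const (PowerSeries.mk _), add_comm]
      simp [add_assoc, add_comm 1]
    have hk : (seq k).1 = ∑ t, PowerSeries.C (d k t) * G t + PowerSeries.X * (seq (k + 1)).1 :=
      heq k _ (seq k).2
    simp only [u, shift, hk, add_mul, Finset.sum_add_distrib, mul_sub, Finset.mul_sum, mul_assoc]
    ring
  have hu0 : ∀ i k, PowerSeries.coeff i (u k) = 0 := by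
    intro i
    induction i with
    | zero => intro k; rw [hu, PowerSeries.coeff_zero_X_mul]
    | succ i ih => intro k; rw [hu, PowerSeries.coeff_succ_X_mul, ih]
  refine ⟨d, fun k => hQ k _ _, sub_eq_zero.mp (PowerSeries.ext fun i => ?_)⟩
  have h := hu0 i 0
  simp only [u, zero_add] at h
  rwa [map_zero]

variable [Algebra ℚ B] {B₀ : Subring B} {δ : DenomSeq} {l : T → ℕ}
  {N : Submodule (PowerSeries B₀) (PowerSeries B)}

lemma exists_natCast_mul_eq_one {n : ℕ} (hn : n ≠ 0) : ∃ e : B, (n : B) * e = 1 :=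
  ⟨algebraMap ℚ B (n : ℚ)⁻¹, by
    rw [← map_natCast (algebraMap ℚ B), ← map_mul, mul_inv_cancel₀ (by exact_mod_cast hn), map_one]⟩

lemma IsInitialBasis.exists_division_step (H : IsInitialBasis N l G) {C : ℕ}
    (hG : ∀ t k, PowerSeries.coeff (k + 1) (G t) ∈ withDenom B₀ δ (C * (k + 1)))
    {D k : ℕ} {z : PowerSeries B} (hz : z ∈ seriesWithDenom B₀ δ D C)
    (hzN : PowerSeries.C (δ D : B) * (PowerSeries.X ^ k * z) ∈ N) :
    ∃ (c : T → B) (z' : PowerSeries B),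
      (∀ t, c t ∈ withDenom B₀ δ D ∧ (k < l t → c t = 0)) ∧
      z = ∑ t, PowerSeries.C (c t) * G t + PowerSeries.X * z' ∧
      z' ∈ seriesWithDenom B₀ δ (D + C) C ∧
      PowerSeries.C (δ (D + C) : B) * (PowerSeries.X ^ (k + 1) * z') ∈ N := by
  obtain ⟨e, he⟩ := exists_natCast_mul_eq_one (B := B) (δ.ne_zero D)
  obtain ⟨c, hck, hsum⟩ := H.exists_coeff_zero_eq (z := PowerSeries.C (δ D : B) * z)
    (by rwa [mul_left_comm]) (by rw [PowerSeries.coeff_C_mul]; exact hz 0)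
  rw [PowerSeries.coeff_C_mul] at hsum
  have hec : ∀ t, (δ D : B) * (e * c t) = c t := fun t => by rw [← mul_assoc, he, one_mul]
  have hc : ∀ t, e * c t ∈ withDenom B₀ δ D := fun t => by
    rw [mem_withDenom, hec]; exact (c t).2
  obtain ⟨z', hz'⟩ : PowerSeries.X ∣ z - ∑ t, PowerSeries.C (e * c t) * G t := by
    rw [PowerSeries.X_dvd_iff, ← PowerSeries.coeff_zero_eq_constantCoeff_apply, map_sub, map_sum]
    simp only [PowerSeries.coeff_C_mul, mul_assoc, ← Finset.mul_sum]
    rw [← hsum, ← mul_assoc, mul_comm e, he, one_mul, sub_self]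
  refine ⟨fun t => e * c t, z', fun t => ⟨hc t, fun h => by simp [hck t h]⟩, by
    rw [← hz', add_sub_cancel], fun i => ?_, ?_⟩
  · rw [← PowerSeries.coeff_succ_X_mul, ← hz', map_sub, map_sum]
    refine withDenom_mono (by rw [mul_add]; omega) (sub_mem (hz (i + 1)) (sum_mem fun t _ => ?_))
    rw [PowerSeries.coeff_C_mul]
    exact mul_mem_withDenom (hc t) (hG t i)
  · obtain ⟨q, hq⟩ := δ.dvd_of_le (Nat.le_add_right D C)
    have hterm : ∀ t, PowerSeries.C (c t : B) * (PowerSeries.X ^ k * G t) ∈ N := by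
      intro t
      rcases lt_or_ge k (l t) with h | h
      · simp [hck t h]
      · rw [← Nat.sub_add_cancel h, pow_add, mul_assoc]
        exact C_mul_mem (c t).2 (X_pow_mul_mem _ (H.mem t))
    have expand : PowerSeries.C (δ (D + C) : B) * (PowerSeries.X ^ (k + 1) * z') =
        PowerSeries.C (q : B) * (PowerSeries.C (δ D : B) * (PowerSeries.X ^ k * z) -
          ∑ t, PowerSeries.C (c t : B) * (PowerSeries.X ^ k * G t)) := by
      have hterms : ∀ t, PowerSeries.C (c t : B) * (PowerSeries.X ^ k * G t) =
          PowerSeries.C (δ D : B) * (PowerSeries.X ^ k * (PowerSeries.C (e * c t) * G t)) := by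
        intro t
        conv_lhs => rw [← hec, map_mul]
        ring
      simp only [hterms, pow_succ, mul_assoc, ← hz', hq, Nat.cast_mul, map_mul, ← Finset.mul_sum,
        ← mul_sub]
      ring
    rw [expand]
    exact C_mul_mem (natCast_mem _ _) (sub_mem hzN (sum_mem fun t _ => hterm t))

lemma IsInitialBasis.exists_eq_sum_mul (H : IsInitialBasis N l G) {C : ℕ}
    (hG : ∀ t k, PowerSeries.coeff (k + 1) (G t) ∈ withDenom B₀ δ (C * (k + 1)))
    {D : ℕ} {z : PowerSeries B} (hz : z ∈ seriesWithDenom B₀ δ D C) (hzN : z ∈ N) :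
    ∃ w : T → PowerSeries B, z = ∑ t, w t * (PowerSeries.X ^ l t * G t) ∧
      ∀ t, w t ∈ seriesWithDenom B₀ δ (D + C * l t) C := by
  obtain ⟨d, hd, hz_eq⟩ := exists_eq_sum_mul_of_step (G := G)
    (P := fun k y => y ∈ seriesWithDenom B₀ δ (D + C * k) C ∧
      PowerSeries.C (δ (D + C * k) : B) * (PowerSeries.X ^ k * y) ∈ N)
    (Q := fun k c => ∀ t, c t ∈ withDenom B₀ δ (D + C * k) ∧ (k < l t → c t = 0))
    (fun k _ hy => by
      rw [mul_add_one, ← add_assoc]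
      exact H.exists_division_step hG hy.1 hy.2)
    (z := z) ⟨hz, by simpa using C_mul_mem (natCast_mem _ _) hzN⟩
  refine ⟨fun t => PowerSeries.mk fun k => d (k + l t) t, ?_, fun t k => ?_⟩
  · rw [hz_eq]
    refine Finset.sum_congr rfl fun t _ => ?_
    rw [← mul_assoc]
    congr 1
    ext k
    rw [PowerSeries.coeff_mul_X_pow', PowerSeries.coeff_mk]
    split_ifs with h
    · rw [PowerSeries.coeff_mk, Nat.sub_add_cancel h]
    · exact (hd k t).2 (not_le.mp h)
  · rw [PowerSeries.coeff_mk, add_assoc, ← mul_add, add_comm (l t)]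
    exact (hd (k + l t) t).1

lemma exists_uniform_division [IsNoetherianRing B₀] {C : ℕ} {ι : Type*} (a : ι → ℕ)
    (g : ι → PowerSeries B) (hg : ∀ ν, g ν ∈ seriesWithDenom B₀ δ (C * a ν) C) :
    ∃ (S : Finset ι) (C' : ℕ) (h : ι → ι → PowerSeries B), ∀ ν, 1 ≤ a ν →
      g ν = ∑ μ ∈ S, h ν μ * g μ ∧ ∀ μ, h ν μ ∈ seriesWithDenom B₀ δ (C' * a ν) C' := by
  classical
  set N : Submodule (PowerSeries B₀) (PowerSeries B) := Submodule.span _ (Set.range g)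
  obtain ⟨T, _, l, G, H⟩ := exists_isInitialBasis N
  choose A hA using fun t => Finsupp.mem_span_range_iff_exists_finsupp.mp (H.mem t)
  set S : Finset ι := Finset.univ.biUnion fun t => (A t).support
  have hAS : ∀ t, PowerSeries.X ^ l t * G t = ∑ μ ∈ S, A t μ • g μ := fun t => by
    rw [← hA t]
    exact Finsupp.sum_of_support_subset _ (Finset.subset_biUnion_of_mem
      (fun t => (A t).support) (Finset.mem_univ t)) _ fun _ _ => zero_smul _ _
  set M := S.sup a + Finset.univ.sup l
  set C₁ := C * (1 + M)
  have hC : C ≤ C₁ := Nat.le_mul_of_pos_right _ (by omega)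
  have hlM : ∀ t, l t ≤ Finset.univ.sup l := fun t => Finset.le_sup (Finset.mem_univ t)
  have hG : ∀ t k, PowerSeries.coeff (k + 1) (G t) ∈ withDenom B₀ δ (C₁ * (k + 1)) := fun t =>
    coeff_succ_mem_of_X_pow_mul_eq_sum hg
      (fun μ hμ => add_le_add (Finset.le_sup hμ) (hlM t)) (hAS t)
  have hN : ∀ ν, 1 ≤ a ν → ∃ w : T → PowerSeries B,
      g ν = ∑ t, w t * (PowerSeries.X ^ l t * G t) ∧
      ∀ t, w t ∈ seriesWithDenom B₀ δ (C₁ * (1 + M) * a ν) (C₁ * (1 + M)) := by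
    intro ν hν
    obtain ⟨w, hgw, hw⟩ := H.exists_eq_sum_mul hG (z := g ν) (D := C₁ * a ν)
      (seriesWithDenom_mono (Nat.mul_le_mul_right _ hC) hC (hg ν))
      (Submodule.subset_span ⟨ν, rfl⟩)
    refine ⟨w, hgw, fun t => seriesWithDenom_mono ?_ (Nat.le_mul_of_pos_right _ (by omega)) (hw t)⟩
    have h : l t ≤ M * a ν := ((hlM t).trans (by omega)).trans (Nat.le_mul_of_pos_right M hν)
    calc C₁ * a ν + C₁ * l t ≤ C₁ * a ν + C₁ * (M * a ν) := by gcongr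
      _ = C₁ * (1 + M) * a ν := by ring
  choose! w hgw hw using hN
  refine ⟨S, C₁ * (1 + M), fun ν μ => ∑ t, A t μ • w ν t, fun ν hν =>
    ⟨?_, fun μ => sum_mem fun t _ => smul_mem_seriesWithDenom _ (hw ν hν t)⟩⟩
  conv_lhs => rw [hgw ν hν]
  simp only [hAS, Finset.mul_sum, Finset.sum_mul, mul_smul_comm, smul_mul_assoc]
  exact Finset.sum_comm

end Division

/-! ### Choice of weights -/

section Weights

lemma exists_le_apply_succ_eq {f : ℕ → ℕ} (hf : Monotone f) {M : ℕ} (hM : ∀ t, f t ≤ M) :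
    ∃ t ≤ M, f t = f (t + 1) := by
  by_contra! hne
  have self_le : ∀ t ≤ M + 1, t ≤ f t := by
    intro t
    induction t with
    | zero => exact fun _ => Nat.zero_le _
    | succ t ih =>
      intro ht
      have hlt : f t < f (t + 1) := (hf t.le_succ).lt_of_ne (hne t (by lia))
      have := ih (by lia)
      lia
  have := self_le (M + 1) le_rfl
  have := hM (M + 1)
  lia

variable {T : Type*} {N : T → ℕ} {γ : T → ℝ} {Q : ℝ} {w w' : ℕ}

lemma exponent_le_of_maximizers {m m' : T} (hQ : 1 < Q) (hm0 : 0 < γ m) (hm0' : 0 < γ m')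
    (hw : w < w') (hm : γ m' * Q ^ (w * N m') ≤ γ m * Q ^ (w * N m))
    (hm' : γ m * Q ^ (w' * N m) ≤ γ m' * Q ^ (w' * N m')) : N m ≤ N m' := by
  by_contra! hlt
  have hprod := mul_le_mul hm hm' (by positivity) (by positivity)
  have hpow : Q ^ (w * N m' + w' * N m) ≤ Q ^ (w * N m + w' * N m') := by
    refine le_of_mul_le_mul_left ?_ (mul_pos hm0 hm0')
    rw [pow_add, pow_add]
    linarith
  have := (pow_le_pow_iff_right₀ hQ).mp hpow
  nlinarith

lemma gap_of_maximizer {m μ : T} (hQ : 1 < Q) (hm0 : 0 < γ m)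
    (hw : γ μ * Q ^ (w * N μ) ≤ γ m * Q ^ (w * N m))
    (hw' : γ μ * Q ^ ((w + 2) * N μ) ≤ γ m * Q ^ ((w + 2) * N m)) (hne : N μ ≠ N m) :
    Q * (γ μ * Q ^ ((w + 1) * N μ)) ≤ γ m * Q ^ ((w + 1) * N m) := by
  have hQ0 : 0 < Q := by linarith
  rcases hne.lt_or_gt with h | h
  · calc Q * (γ μ * Q ^ ((w + 1) * N μ))
        = γ μ * Q ^ (w * N μ) * Q ^ (N μ + 1) := by ring
      _ ≤ γ m * Q ^ (w * N m) * Q ^ (N μ + 1) := by gcongr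
      _ ≤ γ m * Q ^ (w * N m) * Q ^ N m := by
          gcongr
          · exact hQ.le
          · exact h
      _ = γ m * Q ^ ((w + 1) * N m) := by ring
  · refine le_of_mul_le_mul_right ?_ (pow_pos hQ0 (N μ))
    calc Q * (γ μ * Q ^ ((w + 1) * N μ)) * Q ^ N μ
        = γ μ * Q ^ ((w + 2) * N μ) * Q := by ring
      _ ≤ γ m * Q ^ ((w + 2) * N m) * Q := by gcongr
      _ = γ m * Q ^ ((w + 1) * N m) * Q ^ (N m + 1) := by ring
      _ ≤ γ m * Q ^ ((w + 1) * N m) * Q ^ N μ := by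
          gcongr
          · exact hQ.le
          · exact h

/-- Any nonzero system of coefficients acquires a gap after a rescaling by a bounded weight. The
exponent of a maximizer for the weight `2 t` is nondecreasing in `t` and bounded, hence stationary
at some `t`; the gap occurs at the weight `2 t + 1` in between. -/
lemma exists_gap [Finite T] (hN : Function.Injective N) {M : ℕ} (hM : ∀ μ, N μ ≤ M)
    (hγ : ∀ μ, 0 ≤ γ μ) (hγ0 : ∃ μ, γ μ ≠ 0) (hQ : 1 < Q) :
    ∃ x ≤ 2 * M + 1, ∃ m, 0 < γ m ∧
      ∀ μ, μ ≠ m → Q * (γ μ * Q ^ (x * N μ)) ≤ γ m * Q ^ (x * N m) := by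
  obtain ⟨μ₁, hμ₁⟩ := hγ0
  have hQ0 : 0 < Q := by linarith
  have : Nonempty T := ⟨μ₁⟩
  choose m hm using fun t : ℕ => Finite.exists_max fun μ => γ μ * Q ^ (2 * t * N μ)
  have hpos (t : ℕ) : 0 < γ (m t) := by
    have hμ₁pos : 0 < γ μ₁ * Q ^ (2 * t * N μ₁) := mul_pos ((hγ _).lt_of_ne' hμ₁) (pow_pos hQ0 _)
    exact pos_of_mul_pos_left (hμ₁pos.trans_le (hm t μ₁)) (pow_nonneg hQ0.le _)
  have hmono : Monotone fun t => N (m t) := monotone_nat_of_le_succ fun t =>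
    exponent_le_of_maximizers hQ (hpos t) (hpos (t + 1)) (by lia) (hm t _) (hm (t + 1) _)
  obtain ⟨t, ht, hstat⟩ := exists_le_apply_succ_eq hmono fun t => hM (m t)
  refine ⟨2 * t + 1, by lia, m t, hpos t, fun μ hμ => ?_⟩
  have hm' := hm (t + 1) μ
  rw [← hN hstat] at hm'
  exact gap_of_maximizer hQ (hpos t) (hm t μ) hm' (hN.ne hμ)

lemma sum_mul_pow_eq_add_mul {n : ℕ} (μ : Fin (n + 1) →₀ ℕ) (b : ℕ) :
    ∑ i, μ i * b ^ (i : ℕ) = μ 0 + b * ∑ i, μ.tail i * b ^ (i : ℕ) := by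
  rw [Fin.sum_univ_succ, Fin.val_zero, pow_zero, mul_one, Finset.mul_sum]
  refine congrArg _ (Finset.sum_congr rfl fun i _ => ?_)
  rw [Finsupp.tail_apply, Fin.val_succ, pow_succ]
  ring

lemma degree_eq_add_degree_tail {n : ℕ} (μ : Fin (n + 1) →₀ ℕ) :
    μ.degree = μ 0 + μ.tail.degree := by
  simp only [Finsupp.degree_eq_sum, Fin.sum_univ_succ, Finsupp.tail_apply]

lemma eq_of_sum_mul_pow_eq {n d : ℕ} {μ ν : Fin n →₀ ℕ} (hμ : μ.degree ≤ d) (hν : ν.degree ≤ d)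
    (h : ∑ i, μ i * (d + 1) ^ (i : ℕ) = ∑ i, ν i * (d + 1) ^ (i : ℕ)) : μ = ν := by
  induction n with
  | zero => exact Subsingleton.elim _ _
  | succ n ih =>
    rw [sum_mul_pow_eq_add_mul, sum_mul_pow_eq_add_mul] at h
    rw [degree_eq_add_degree_tail] at hμ hν
    have head_eq : μ 0 = ν 0 := by
      have := congrArg (· % (d + 1)) h
      simpa [Nat.add_mul_mod_self_left, Nat.mod_eq_of_lt (show μ 0 < d + 1 by lia),
        Nat.mod_eq_of_lt (show ν 0 < d + 1 by lia)] using this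
    have tail_eq : μ.tail = ν.tail := ih (by lia) (by lia) <|
      Nat.eq_of_mul_eq_mul_left d.succ_pos (Nat.add_left_cancel (head_eq ▸ h))
    rw [← Finsupp.cons_tail μ, ← Finsupp.cons_tail ν, head_eq, tail_eq]

end Weights

/-! ### Series in several variables from their coefficients -/

section SeriesWithDenom

variable {B : Type*} [CommRing B] {B₀ : Subring B} {δ : DenomSeq} {C : ℕ}

lemma X_pow_mul_expand_mem_seriesWithDenom {r e L : ℕ} (hL : L ≠ 0) (he : r ≤ e)
    {f : PowerSeries B} (hf : f ∈ seriesWithDenom B₀ δ (C * r) C) :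
    PowerSeries.X ^ e * PowerSeries.expand L hL f ∈ seriesWithDenom B₀ δ 0 C := by
  intro k
  rw [PowerSeries.coeff_X_pow_mul', PowerSeries.coeff_expand]
  split_ifs with hek hdvd
  · refine withDenom_mono ?_ (hf ((k - e) / L))
    have := Nat.div_le_self (k - e) L
    rw [← mul_add, zero_add]
    exact Nat.mul_le_mul_left C (by lia)
  · exact zero_mem _
  · exact zero_mem _

variable {K : Type*} [NormedField K] {s : K} {φ : B →+* K}

lemma convergesAt_of_mem_seriesWithDenom {a : ℕ} {f : PowerSeries B} (hs : Absorbs δ C s)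
    (hφ : ∀ b ∈ B₀, ‖φ b‖ ≤ 1) (hf : f ∈ seriesWithDenom B₀ δ (C * a) C) :
    ConvergesAt φ s f := by
  refine Summable.of_nonneg_of_le (fun _ => norm_nonneg _) (fun k => ?_)
    ((summable_geometric_of_lt_one (Real.sqrt_nonneg _) (sqrt_lt_one hs.norm_lt_one)).mul_left
      ((‖s‖ ^ a)⁻¹ * √‖s‖ ^ a))
  have hfk := hf k
  rw [← mul_add] at hfk
  have hterm := hs.norm_mul_pow_le (norm_le_one_of_mem_withDenom hφ hfk)
  rw [mul_assoc, ← div_eq_inv_mul, le_div_iff₀ (pow_pos hs.norm_pos a), ← pow_add]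
  refine (le_of_eq ?_).trans hterm
  simp only [norm_mul, norm_pow]
  ring

end SeriesWithDenom

section SeriesOfCoeffs

variable {B : Type*} [CommRing B] {σ : Type*}

/-- The monomials, given by their exponents, of degree at most `d`. -/
noncomputable def exponentsLE (σ : Type*) [Finite σ] (d : ℕ) : Finset (σ →₀ ℕ) :=
  (Finsupp.finite_of_degree_le d).toFinset

@[simp] lemma mem_exponentsLE [Finite σ] {d : ℕ} {ν : σ →₀ ℕ} :
    ν ∈ exponentsLE σ d ↔ ν.degree ≤ d := by
  simp [exponentsLE]

/-- The families `F` of series in one variable `s` for which `∑ F ν X ^ ν` is a controlled series: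
the order in `s` of `F ν` grows with the degree of `ν`. -/
structure IsCoeffFamily (B₀ : Subring B) (δ : DenomSeq) (C d : ℕ)
    (F : (σ →₀ ℕ) → PowerSeries B) : Prop where
  mem_seriesWithDenom : ∀ ν, F ν ∈ seriesWithDenom B₀ δ 0 C
  X_pow_dvd : ∀ ν, PowerSeries.X ^ (ν.degree - d) ∣ F ν

/-- The power series `∑ F ν X ^ ν` of a coefficient family `F` with parameter `d`, whose terms with
`|ν| > k + d` do not contribute in degree `k`. -/
noncomputable def seriesOfCoeffs [Finite σ] (d : ℕ) (F : (σ →₀ ℕ) → PowerSeries B) :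
    PowerSeries (MvPolynomial σ B) :=
  PowerSeries.mk fun k => ∑ ν ∈ exponentsLE σ (k + d), monomial ν (PowerSeries.coeff k (F ν))

variable {B₀ : Subring B} {δ : DenomSeq} {C d : ℕ} {F : (σ →₀ ℕ) → PowerSeries B}

lemma IsCoeffFamily.coeff_mem_withDenom (h : IsCoeffFamily B₀ δ C d F) (ν : σ →₀ ℕ) (k : ℕ) :
    PowerSeries.coeff k (F ν) ∈ withDenom B₀ δ (C * k) := by
  simpa only [zero_add] using h.mem_seriesWithDenom ν k

lemma IsCoeffFamily.degree_le (h : IsCoeffFamily B₀ δ C d F) {ν : σ →₀ ℕ} {k : ℕ}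
    (hk : PowerSeries.coeff k (F ν) ≠ 0) : ν.degree ≤ k + d := by
  by_contra! hlt
  exact hk (PowerSeries.X_pow_dvd_iff.mp (h.X_pow_dvd ν) k (by lia))

lemma IsCoeffFamily.seriesOfCoeffs_mem [Finite σ] (h : IsCoeffFamily B₀ δ C d F) :
    seriesOfCoeffs d F ∈ controlledSeries B₀ δ C σ := by
  refine ⟨d + 1, fun k => ?_⟩
  rw [seriesOfCoeffs, PowerSeries.coeff_mk]
  refine sum_mem fun ν hν => monomial_mem_polyWithDenom (h.coeff_mem_withDenom ν k) fun _ =>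
    (mem_exponentsLE.mp hν).trans ?_
  nlinarith

variable {K : Type*} [NormedField K] [Fintype σ] {s : K} {φ : B →+* K} {v : σ → K}

lemma norm_prod_pow_le_one (hv : ∀ i, ‖v i‖ ≤ 1) (ν : σ →₀ ℕ) : ‖∏ i, v i ^ ν i‖ ≤ 1 := by
  rw [norm_prod]
  exact Finset.prod_le_one (fun _ _ => norm_nonneg _) fun i _ => by
    rw [norm_pow]
    exact pow_le_one₀ (norm_nonneg _) (hv i)

variable [IsUltrametricDist K] [CompleteSpace K]

lemma IsCoeffFamily.summable (h : IsCoeffFamily B₀ δ C d F) (hs : Absorbs δ C s)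
    (hφ : ∀ b ∈ B₀, ‖φ b‖ ≤ 1) (hv : ∀ i, ‖v i‖ ≤ 1) :
    Summable (Function.uncurry fun k (ν : σ →₀ ℕ) =>
      φ (PowerSeries.coeff k (F ν)) * s ^ k * ∏ i, v i ^ ν i) := by
  refine NonarchimedeanAddGroup.summable_of_tendsto_cofinite_zero ?_
  rw [NormedAddGroup.tendsto_nhds_zero]
  intro ε hε
  have hroot := sqrt_lt_one hs.norm_lt_one
  obtain ⟨k₀, hk₀⟩ := exists_pow_lt_of_lt_one hε hroot
  refine (Finset.finite_toSet (Finset.range k₀ ×ˢ exponentsLE σ (k₀ + d))).subset ?_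
  rintro ⟨k, ν⟩ hkν
  simp only [Set.mem_compl_iff, Set.mem_ofPred_eq, not_lt, Function.uncurry] at hkν
  have hterm : ε ≤ √‖s‖ ^ k := by
    rw [norm_mul] at hkν
    exact hkν.trans <| (mul_le_of_le_one_right (norm_nonneg _) (norm_prod_pow_le_one hv ν)).trans
      (hs.norm_mul_pow_le (norm_le_one_of_mem_withDenom hφ (h.coeff_mem_withDenom ν k)))
  have hk : k < k₀ := by
    by_contra! hle
    exact absurd (hterm.trans (pow_le_pow_of_le_one (Real.sqrt_nonneg _) hroot.le hle)) hk₀.not_ge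
  have hne : PowerSeries.coeff k (F ν) ≠ 0 := by
    intro hzero
    simp only [hzero, map_zero, zero_mul, norm_zero] at hkν
    exact hkν.not_gt hε
  have := h.degree_le hne
  simp only [Finset.coe_product, Set.mem_prod, Finset.mem_coe, Finset.mem_range, mem_exponentsLE]
  exact ⟨hk, by lia⟩

lemma IsCoeffFamily.seriesEval_seriesOfCoeffs (h : IsCoeffFamily B₀ δ C d F) (hs : Absorbs δ C s)
    (hφ : ∀ b ∈ B₀, ‖φ b‖ ≤ 1) (hv : ∀ i, ‖v i‖ ≤ 1) :
    seriesEval (eval₂Hom φ v) s (seriesOfCoeffs d F) =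
      ∑' ν, seriesEval φ s (F ν) * ∏ i, v i ^ ν i := by
  have hcoeff (k : ℕ) : eval₂Hom φ v (PowerSeries.coeff k (seriesOfCoeffs d F)) * s ^ k =
      ∑' ν, φ (PowerSeries.coeff k (F ν)) * s ^ k * ∏ i, v i ^ ν i := by
    rw [tsum_eq_sum (s := exponentsLE σ (k + d)), seriesOfCoeffs, PowerSeries.coeff_mk, map_sum,
      Finset.sum_mul]
    · refine Finset.sum_congr rfl fun ν _ => ?_
      rw [coe_eval₂Hom, eval₂_monomial, Finsupp.prod_fintype _ _ (by simp)]
      ring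
    · intro ν hν
      have hzero : PowerSeries.coeff k (F ν) = 0 := by
        by_contra hne
        exact hν (mem_exponentsLE.mpr (h.degree_le hne))
      simp [hzero]
  simp only [seriesEval, ← tsum_mul_right]
  rw [tsum_congr hcoeff]
  exact (h.summable hs hφ hv).tsum_comm.symm

end SeriesOfCoeffs

section ScaledCoeff

variable {B : Type*} [CommRing B] {σ : Type*}

/-- The series whose `k`-th coefficient is a polynomial of degree at most `k` with denominators
dividing `δ (C k)`. They are the series in the products `s ^ |ν| X ^ ν` and `s`. -/
def IsNormalizedSeries (B₀ : Subring B) (δ : DenomSeq) (C : ℕ)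
    (f : PowerSeries (MvPolynomial σ B)) : Prop :=
  ∀ k, PowerSeries.coeff k f ∈ polyWithDenom B₀ δ σ (C * k) k

/-- The coefficient of `s ^ |ν| X ^ ν` in `f`, as a power series in `s`. -/
noncomputable def scaledCoeff (f : PowerSeries (MvPolynomial σ B)) (ν : σ →₀ ℕ) : PowerSeries B :=
  PowerSeries.mk fun k => coeff ν (PowerSeries.coeff (k + ν.degree) f)

variable {B₀ : Subring B} {δ : DenomSeq} {C : ℕ} {f : PowerSeries (MvPolynomial σ B)}

lemma IsNormalizedSeries.mono {C' : ℕ} (hf : IsNormalizedSeries B₀ δ C f) (hC : C ≤ C') :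
    IsNormalizedSeries B₀ δ C' f :=
  fun k => polyWithDenom_mono (Nat.mul_le_mul_right k hC) le_rfl (hf k)

lemma IsNormalizedSeries.scaledCoeff_mem (hf : IsNormalizedSeries B₀ δ C f) (ν : σ →₀ ℕ) :
    scaledCoeff f ν ∈ seriesWithDenom B₀ δ (C * ν.degree) C := by
  intro k
  rw [scaledCoeff, PowerSeries.coeff_mk, ← mul_add, add_comm]
  exact (hf _ ν).1

lemma IsNormalizedSeries.isCoeffFamily (hf : IsNormalizedSeries B₀ δ C f) :
    IsCoeffFamily B₀ δ C 0 fun ν => PowerSeries.X ^ ν.degree * scaledCoeff f ν where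
  mem_seriesWithDenom ν := by
    have := X_pow_mul_expand_mem_seriesWithDenom one_ne_zero le_rfl (hf.scaledCoeff_mem ν)
    rwa [PowerSeries.expand_one_apply] at this
  X_pow_dvd ν := Dvd.intro _ rfl

lemma IsNormalizedSeries.seriesOfCoeffs_eq [Finite σ] (hf : IsNormalizedSeries B₀ δ C f) :
    seriesOfCoeffs 0 (fun ν => PowerSeries.X ^ ν.degree * scaledCoeff f ν) = f := by
  classical
  ext k μ
  simp only [seriesOfCoeffs, PowerSeries.coeff_mk, coeff_sum, coeff_monomial]
  rw [Finset.sum_ite_eq', PowerSeries.coeff_X_pow_mul']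
  by_cases hμ : μ.degree ≤ k
  · rw [if_pos (mem_exponentsLE.mpr (by lia)), if_pos hμ, scaledCoeff, PowerSeries.coeff_mk,
      Nat.sub_add_cancel hμ]
  · rw [if_neg (by rw [mem_exponentsLE]; lia)]
    by_contra hne
    exact hμ ((hf k μ).2 (Ne.symm hne))

lemma IsNormalizedSeries.seriesEval_eq_tsum {K : Type*} [NormedField K] [IsUltrametricDist K]
    [CompleteSpace K] [Fintype σ] (hf : IsNormalizedSeries B₀ δ C f) {s : K} {φ : B →+* K}
    (hs : Absorbs δ C s) (hφ : ∀ b ∈ B₀, ‖φ b‖ ≤ 1) {v : σ → K} (hv : ∀ i, ‖v i‖ ≤ 1) :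
    seriesEval (eval₂Hom φ v) s f =
      ∑' ν, s ^ ν.degree * seriesEval φ s (scaledCoeff f ν) * ∏ i, v i ^ ν i := by
  conv_lhs => rw [← hf.seriesOfCoeffs_eq]
  rw [hf.isCoeffFamily.seriesEval_seriesOfCoeffs hs hφ hv]
  simp only [seriesEval_X_pow_mul]

end ScaledCoeff

/-! ### Generic coefficients -/

section PolySubring

variable {B : Type*} [CommRing B] {B₀ : Subring B} {τ : Type*}

variable (B₀ τ) in
/-- The polynomials with coefficients in `B₀`, as a subring of `MvPolynomial τ B`. -/
noncomputable def polySubring : Subring (MvPolynomial τ B) :=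
  (MvPolynomial.map (σ := τ) B₀.subtype).range

instance [Finite τ] [IsNoetherianRing B₀] : IsNoetherianRing (polySubring B₀ τ) :=
  isNoetherianRing_range _

lemma C_mem_polySubring {b : B} (hb : b ∈ B₀) : (C b : MvPolynomial τ B) ∈ polySubring B₀ τ :=
  ⟨C ⟨b, hb⟩, by simp⟩

lemma X_mem_polySubring (i : τ) : (X i : MvPolynomial τ B) ∈ polySubring B₀ τ := ⟨X i, by simp⟩

lemma map_C_mem_seriesWithDenom {δ : DenomSeq} {D C' : ℕ} {f : PowerSeries B}
    (hf : f ∈ seriesWithDenom B₀ δ D C') :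
    PowerSeries.map (C (σ := τ)) f ∈ seriesWithDenom (polySubring B₀ τ) δ D C' := by
  intro k
  have := C_mem_polySubring (τ := τ) (hf k)
  rwa [C_mul, map_natCast, ← PowerSeries.coeff_map] at this

lemma norm_eval₂Hom_le_one_of_mem_polySubring {K : Type*} [NormedField K] [IsUltrametricDist K]
    {φ : B →+* K} (hφ : ∀ b ∈ B₀, ‖φ b‖ ≤ 1) {w : τ → K} (hw : ∀ i, ‖w i‖ ≤ 1)
    {q : MvPolynomial τ B} (hq : q ∈ polySubring B₀ τ) : ‖eval₂Hom φ w q‖ ≤ 1 := by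
  obtain ⟨q, rfl⟩ := hq
  have hmem : MvPolynomial.map B₀.subtype q ∈ polyWithDenom B₀ .one τ 0 q.totalDegree := fun ν => by
    rw [coeff_map]
    refine ⟨mem_withDenom_zero.mpr (coeff ν q).2, fun hν => ?_⟩
    exact le_totalDegree (mem_support_iff.mpr fun h => hν (by rw [h, map_zero]))
  simpa using norm_le_one_of_mem_polyWithDenom hφ hw hmem

end PolySubring

section GenericCoeff

variable (B : Type*) [CommRing B] {σ : Type*} (T : Finset (σ →₀ ℕ))

open Classical in
/-- The generic coefficient of `X ^ μ` in a series with dominant monomial `X ^ μ₀`: it is `1` for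
`μ = μ₀`, and otherwise `s` times an indeterminate. -/
noncomputable def genericCoeff (μ₀ μ : σ →₀ ℕ) : PowerSeries (MvPolynomial T B) :=
  if μ = μ₀ then 1
  else if h : μ ∈ T then PowerSeries.X ^ 1 * PowerSeries.C (X ⟨μ, h⟩) else 0

variable {B T} {μ₀ μ : σ →₀ ℕ}

lemma genericCoeff_self : genericCoeff B T μ₀ μ₀ = 1 := if_pos rfl

lemma genericCoeff_of_ne (hne : μ ≠ μ₀) (hμ : μ ∈ T) :
    genericCoeff B T μ₀ μ = PowerSeries.X ^ 1 * PowerSeries.C (X ⟨μ, hμ⟩) := by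
  rw [genericCoeff, if_neg hne, dif_pos hμ]

lemma genericCoeff_mem (B₀ : Subring B) (δ : DenomSeq) (C' : ℕ) :
    genericCoeff B T μ₀ μ ∈ seriesWithDenom (polySubring B₀ T) δ 0 C' := by
  have C_mem {q : MvPolynomial T B} (hq : q ∈ polySubring B₀ T) :
      PowerSeries.C q ∈ seriesWithDenom (polySubring B₀ T) δ 0 C' :=
    C_mem_seriesWithDenom (mem_withDenom_of_mem hq)
  unfold genericCoeff
  split_ifs with heq hμ
  · rw [← map_one PowerSeries.C]
    exact C_mem (one_mem _)
  · rw [← PowerSeries.expand_one_apply (PowerSeries.C _)]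
    exact X_pow_mul_expand_mem_seriesWithDenom (r := 0) one_ne_zero zero_le_one
      (C_mem (X_mem_polySubring _))
  · exact zero_mem _

lemma genericCoeff_mul_mem {B₀ : Subring B} {δ : DenomSeq} {C' : ℕ}
    {f : PowerSeries (MvPolynomial T B)} (hf : f ∈ seriesWithDenom (polySubring B₀ T) δ 0 C') :
    genericCoeff B T μ₀ μ * f ∈ seriesWithDenom (polySubring B₀ T) δ 0 C' := by
  have hprod := mul_mem_seriesWithDenom (genericCoeff_mem (μ₀ := μ₀) (μ := μ) B₀ δ C') hf
  rwa [zero_add] at hprod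

lemma coeff_zero_genericCoeff_of_ne (hne : μ ≠ μ₀) :
    PowerSeries.coeff 0 (genericCoeff B T μ₀ μ) = 0 := by
  unfold genericCoeff
  rw [if_neg hne]
  split_ifs <;> simp

lemma exists_specialization {K : Type*} [NormedField K] (φ : B →+* K) {ϖ : K} (hϖ : ϖ ≠ 0)
    {a : (σ →₀ ℕ) → K} (ha : a μ₀ ≠ 0)
    (hdom : ∀ μ ∈ T, μ ≠ μ₀ → ‖a μ‖ ≤ ‖ϖ‖ * ‖a μ₀‖) :
    ∃ w : T → K, (∀ μ, ‖w μ‖ ≤ 1) ∧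
      ∀ μ ∈ T, a μ₀ * seriesEval (eval₂Hom φ w) ϖ (genericCoeff B T μ₀ μ) = a μ := by
  classical
  refine ⟨fun μ => if μ.1 = μ₀ then 0 else a μ / (ϖ * a μ₀), fun μ => ?_, fun μ hμ => ?_⟩
  · dsimp only
    split_ifs with h
    · simp
    · rw [norm_div, norm_mul, div_le_one (by positivity)]
      exact hdom μ μ.2 h
  · obtain rfl | hne := eq_or_ne μ μ₀
    · rw [genericCoeff_self, seriesEval_one, mul_one]
    · rw [genericCoeff_of_ne hne hμ, seriesEval_X_pow_mul, seriesEval_C, coe_eval₂Hom, eval₂_X,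
        if_neg hne]
      field_simp

end GenericCoeff

/-! ### Systems with a dominant monomial -/

section Weight

variable {σ : Type*} [Fintype σ]

/-- The exponent of `s ^ (1 / L)` in front of `X ^ ν` when `s ^ |ν| X ^ ν` is written in the
variables `s ^ (b i / L) X i`. -/
noncomputable def weight (L : ℕ) (b : σ → ℕ) (ν : σ →₀ ℕ) : ℕ := L * ν.degree - ∑ i, b i * ν i

lemma sum_mul_le_mul_degree {b : σ → ℕ} {m : ℕ} (hb : ∀ i, b i ≤ m) (ν : σ →₀ ℕ) :
    ∑ i, b i * ν i ≤ m * ν.degree := by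
  rw [Finsupp.degree_eq_sum, Finset.mul_sum]
  exact Finset.sum_le_sum fun i _ => Nat.mul_le_mul_right _ (hb i)

variable {L d : ℕ} {b : σ → ℕ}

lemma mul_sum_add_degree_le (hb : ∀ i, (b i + 1) * (d + 1) ≤ L) (ν : σ →₀ ℕ) :
    (d + 1) * (∑ i, b i * ν i + ν.degree) ≤ L * ν.degree := by
  calc (d + 1) * (∑ i, b i * ν i + ν.degree) = ∑ i, (b i + 1) * (d + 1) * ν i := by
        rw [Finsupp.degree_eq_sum, ← Finset.sum_add_distrib, Finset.mul_sum]
        exact Finset.sum_congr rfl fun i _ => by ring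
    _ ≤ L * ν.degree := sum_mul_le_mul_degree hb ν

lemma weight_add_sum (hb : ∀ i, (b i + 1) * (d + 1) ≤ L) (ν : σ →₀ ℕ) :
    weight L b ν + ∑ i, b i * ν i = L * ν.degree := by
  refine Nat.sub_add_cancel (le_trans ?_ (mul_sum_add_degree_le hb ν))
  exact (Nat.le_add_right _ _).trans (Nat.le_mul_of_pos_left _ d.succ_pos)

lemma degree_le_weight (hb : ∀ i, (b i + 1) * (d + 1) ≤ L) (ν : σ →₀ ℕ) :
    ν.degree ≤ weight L b ν := by
  have hweight := weight_add_sum hb ν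
  have hsum := (Nat.le_mul_of_pos_left _ d.succ_pos).trans (mul_sum_add_degree_le hb ν)
  lia

lemma weight_add_degree_le (hb : ∀ i, (b i + 1) * (d + 1) ≤ L) {μ ν : σ →₀ ℕ}
    (hμ : μ.degree ≤ d) (hν : d < ν.degree) : weight L b μ + ν.degree ≤ weight L b ν := by
  have hweight := weight_add_sum hb ν
  have hsum := mul_sum_add_degree_le hb ν
  have hμL : weight L b μ ≤ L * d := (Nat.sub_le _ _).trans (Nat.mul_le_mul_left L hμ)
  have hdeg : L * (d + 1) ≤ L * ν.degree := Nat.mul_le_mul_left L hν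
  nlinarith

lemma pow_weight_mul_prod {K : Type*} [Field K] (hb : ∀ i, (b i + 1) * (d + 1) ≤ L) (ϖ : K)
    (u : σ → K) (ν : σ →₀ ℕ) :
    ϖ ^ weight L b ν * ∏ i, (ϖ ^ b i * u i) ^ ν i = (ϖ ^ L) ^ ν.degree * ∏ i, u i ^ ν i := by
  rw [← pow_mul, ← weight_add_sum hb ν, pow_add, ← Finset.prod_pow_eq_pow_sum]
  simp only [mul_pow, Finset.prod_mul_distrib, ← pow_mul]
  ring

end Weight

section CoeffDivision

variable {B : Type*} [CommRing B] {σ : Type*} [Finite σ]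

/-- The matrix `h` expresses the members `g ν` with `|ν| > d` of a family through those with
`|ν| ≤ d`, with control of the denominators. -/
structure IsCoeffDivision (B₀ : Subring B) (δ : DenomSeq) (C d : ℕ)
    (g : (σ →₀ ℕ) → PowerSeries B) (h : (σ →₀ ℕ) → (σ →₀ ℕ) → PowerSeries B) : Prop where
  mem_seriesWithDenom : ∀ ν, d < ν.degree → ∀ μ, h ν μ ∈ seriesWithDenom B₀ δ (C * ν.degree) C
  eq_sum : ∀ ν, d < ν.degree → g ν = ∑ μ ∈ exponentsLE σ d, h ν μ * g μ

variable {B₀ : Subring B} {δ : DenomSeq} {C d : ℕ} {g : (σ →₀ ℕ) → PowerSeries B}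
  {h : (σ →₀ ℕ) → (σ →₀ ℕ) → PowerSeries B}

lemma IsCoeffDivision.seriesEval_eq_sum {K : Type*} [NormedField K] [CompleteSpace K] {s : K}
    {φ : B →+* K} (hdiv : IsCoeffDivision B₀ δ C d g h)
    (hg : ∀ ν, g ν ∈ seriesWithDenom B₀ δ (C * ν.degree) C) (hs : Absorbs δ C s)
    (hφ : ∀ b ∈ B₀, ‖φ b‖ ≤ 1) {ν : σ →₀ ℕ} (hν : d < ν.degree) :
    seriesEval φ s (g ν) =
      ∑ μ ∈ exponentsLE σ d, seriesEval φ s (h ν μ) * seriesEval φ s (g μ) := by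
  have hprod (μ : σ →₀ ℕ) : h ν μ * g μ ∈ seriesWithDenom B₀ δ (C * (ν.degree + μ.degree)) C := by
    rw [mul_add]
    exact mul_mem_seriesWithDenom (hdiv.mem_seriesWithDenom ν hν μ) (hg μ)
  rw [hdiv.eq_sum ν hν,
    seriesEval_sum fun μ _ => convergesAt_of_mem_seriesWithDenom hs hφ (hprod μ)]
  exact Finset.sum_congr rfl fun μ _ => seriesEval_mul
    (convergesAt_of_mem_seriesWithDenom hs hφ (hdiv.mem_seriesWithDenom ν hν μ))
    (convergesAt_of_mem_seriesWithDenom hs hφ (hg μ))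

lemma exists_isCoeffDivision [Algebra ℚ B] [IsNoetherianRing B₀]
    (hg : ∀ ν, g ν ∈ seriesWithDenom B₀ δ (C * ν.degree) C) :
    ∃ (d C' : ℕ) (h : (σ →₀ ℕ) → (σ →₀ ℕ) → PowerSeries B),
      ∀ d' C'', d ≤ d' → C' ≤ C'' → IsCoeffDivision B₀ δ C'' d' g h := by
  classical
  obtain ⟨S, C', h, hS⟩ := exists_uniform_division (fun ν : σ →₀ ℕ => ν.degree) g hg
  refine ⟨S.sup fun ν => ν.degree, C', fun ν μ => if μ ∈ S then h ν μ else 0,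
    fun d' C'' hd hC => ⟨fun ν hν μ => ?_, fun ν hν => ?_⟩⟩
  · split_ifs
    · exact seriesWithDenom_mono (Nat.mul_le_mul_right _ hC) hC ((hS ν (by lia)).2 μ)
    · exact zero_mem _
  · have hsub : S ⊆ exponentsLE σ d' := fun μ hμ => mem_exponentsLE.mpr <|
      (Finset.le_sup (f := fun ν : σ →₀ ℕ => ν.degree) hμ).trans hd
    simp only [ite_mul, zero_mul]
    rw [← Finset.sum_filter, Finset.filter_mem_eq_inter, Finset.inter_eq_right.mpr hsub]
    exact (hS ν (by lia)).1

end CoeffDivision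

section RescaledFamily

variable {B : Type*} [CommRing B] {σ : Type*} [Fintype σ]

/-- The coefficients, in the variables `s ^ (b i / L) X i` and in terms of `s ^ (1 / L)`, of the
series `∑ g ν s ^ |ν| X ^ ν`. -/
noncomputable def rescaledFamily (T : Finset (σ →₀ ℕ)) {L : ℕ} (hL : L ≠ 0) (b : σ → ℕ)
    (g : (σ →₀ ℕ) → PowerSeries B) (ν : σ →₀ ℕ) : PowerSeries (MvPolynomial T B) :=
  PowerSeries.X ^ weight L b ν * PowerSeries.expand L hL (PowerSeries.map C (g ν))

/-- The family `rescaledFamily` divided by its dominant member, whose index is `μ₀`. The quotients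
of the members of degree at most `d` are replaced by the generic coefficients, and the members of
higher degree are expressed through them by means of `h`. -/
noncomputable def dominantFamily {L : ℕ} (hL : L ≠ 0) (b : σ → ℕ) (d : ℕ) (μ₀ : σ →₀ ℕ)
    (h : (σ →₀ ℕ) → (σ →₀ ℕ) → PowerSeries B) (ν : σ →₀ ℕ) :
    PowerSeries (MvPolynomial (exponentsLE σ d) B) :=
  if ν.degree ≤ d then genericCoeff B (exponentsLE σ d) μ₀ ν
  else ∑ μ ∈ exponentsLE σ d, genericCoeff B (exponentsLE σ d) μ₀ μ *
    (PowerSeries.X ^ (weight L b ν - weight L b μ) *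
      PowerSeries.expand L hL (PowerSeries.map MvPolynomial.C (h ν μ)))

variable {B₀ : Subring B} {δ : DenomSeq} {C d L : ℕ} {hL : L ≠ 0} {b : σ → ℕ}
  {g : (σ →₀ ℕ) → PowerSeries B} {h : (σ →₀ ℕ) → (σ →₀ ℕ) → PowerSeries B} {μ₀ : σ →₀ ℕ}

lemma isCoeffFamily_rescaledFamily (T : Finset (σ →₀ ℕ))
    (hb : ∀ i, (b i + 1) * (d + 1) ≤ L)
    (hg : ∀ ν, g ν ∈ seriesWithDenom B₀ δ (C * ν.degree) C) :
    IsCoeffFamily (polySubring B₀ T) δ C d (rescaledFamily T hL b g) where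
  mem_seriesWithDenom ν := X_pow_mul_expand_mem_seriesWithDenom hL (degree_le_weight hb ν)
    (map_C_mem_seriesWithDenom (hg ν))
  X_pow_dvd ν := dvd_mul_of_dvd_left
    (pow_dvd_pow _ ((Nat.sub_le _ _).trans (degree_le_weight hb ν))) _

lemma dominantFamily_of_le {ν : σ →₀ ℕ} (hν : ν.degree ≤ d) :
    dominantFamily hL b d μ₀ h ν = genericCoeff B (exponentsLE σ d) μ₀ ν :=
  if_pos hν

lemma isCoeffFamily_dominantFamily (hb : ∀ i, (b i + 1) * (d + 1) ≤ L)
    (hdiv : IsCoeffDivision B₀ δ C d g h) :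
    IsCoeffFamily (polySubring B₀ (exponentsLE σ d)) δ C d (dominantFamily hL b d μ₀ h) := by
  refine ⟨fun ν => ?_, fun ν => ?_⟩ <;> unfold dominantFamily <;> split_ifs with hν
  · exact genericCoeff_mem B₀ δ C
  · refine sum_mem fun μ hμ => genericCoeff_mul_mem <|
      X_pow_mul_expand_mem_seriesWithDenom (r := ν.degree) hL ?_ <|
        map_C_mem_seriesWithDenom (hdiv.mem_seriesWithDenom ν (by lia) μ)
    have := weight_add_degree_le hb (mem_exponentsLE.mp hμ) (not_le.mp hν)
    lia
  · rw [Nat.sub_eq_zero_of_le hν, pow_zero]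
    exact one_dvd _
  · refine Finset.dvd_sum fun μ hμ => dvd_mul_of_dvd_right (dvd_mul_of_dvd_left ?_ _) _
    have := weight_add_degree_le hb (mem_exponentsLE.mp hμ) (not_le.mp hν)
    exact pow_dvd_pow _ (by lia)

lemma coeff_zero_seriesOfCoeffs_dominantFamily (hμ₀ : μ₀.degree ≤ d) :
    PowerSeries.coeff 0 (seriesOfCoeffs d (dominantFamily hL b d μ₀ h)) = monomial μ₀ 1 := by
  rw [seriesOfCoeffs, PowerSeries.coeff_mk, zero_add, Finset.sum_eq_single μ₀]
  · rw [dominantFamily_of_le hμ₀, genericCoeff_self, PowerSeries.coeff_zero_one]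
  · intro ν hν hne
    rw [dominantFamily_of_le (mem_exponentsLE.mp hν), coeff_zero_genericCoeff_of_ne hne, map_zero]
  · exact fun hmem => absurd (mem_exponentsLE.mpr hμ₀) hmem

variable {K : Type*} [NormedField K] {ϖ : K} {φ : B →+* K}

/-- The value of the member of index `ν` of `rescaledFamily` at `s = ϖ ^ L`. -/
noncomputable def rescaledValue (L : ℕ) (b : σ → ℕ) (g : (σ →₀ ℕ) → PowerSeries B) (ϖ : K)
    (φ : B →+* K) (ν : σ →₀ ℕ) : K :=
  ϖ ^ weight L b ν * seriesEval φ (ϖ ^ L) (g ν)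

lemma eval₂Hom_comp_C {τ : Type*} (φ : B →+* K) (w : τ → K) :
    (eval₂Hom φ w).comp MvPolynomial.C = φ :=
  RingHom.ext fun x => eval₂Hom_C φ w x

lemma seriesEval_rescaledFamily {T : Finset (σ →₀ ℕ)} (w : T → K) (ν : σ →₀ ℕ) :
    seriesEval (eval₂Hom φ w) ϖ (rescaledFamily T hL b g ν) = rescaledValue L b g ϖ φ ν := by
  rw [rescaledFamily, seriesEval_X_pow_mul, seriesEval_expand, seriesEval_map, eval₂Hom_comp_C,
    rescaledValue]

variable [IsUltrametricDist K] [CompleteSpace K]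

lemma mul_seriesEval_dominantFamily (hb : ∀ i, (b i + 1) * (d + 1) ≤ L)
    (hdiv : IsCoeffDivision B₀ δ C d g h)
    (hg : ∀ ν, g ν ∈ seriesWithDenom B₀ δ (C * ν.degree) C) (hs : Absorbs δ C (ϖ ^ L))
    (hϖ : Absorbs δ C ϖ) (hφ : ∀ b ∈ B₀, ‖φ b‖ ≤ 1) {w : exponentsLE σ d → K}
    (hw : ∀ μ, ‖w μ‖ ≤ 1) {c : K}
    (hc : ∀ μ ∈ exponentsLE σ d, c * seriesEval (eval₂Hom φ w) ϖ
      (genericCoeff B (exponentsLE σ d) μ₀ μ) = rescaledValue L b g ϖ φ μ) (ν : σ →₀ ℕ) :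
    c * seriesEval (eval₂Hom φ w) ϖ (dominantFamily hL b d μ₀ h ν) =
      rescaledValue L b g ϖ φ ν := by
  obtain hν | hν := le_or_gt ν.degree d
  · rw [dominantFamily_of_le hν, hc ν (mem_exponentsLE.mpr hν)]
  have hφw (q) (hq : q ∈ polySubring B₀ (exponentsLE σ d)) : ‖eval₂Hom φ w q‖ ≤ 1 :=
    norm_eval₂Hom_le_one_of_mem_polySubring hφ hw hq
  have hconv {f} (hf : f ∈ seriesWithDenom (polySubring B₀ (exponentsLE σ d)) δ 0 C) :
      ConvergesAt (eval₂Hom φ w) ϖ f :=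
    convergesAt_of_mem_seriesWithDenom (a := 0) hϖ hφw hf
  have hgap {μ} (hμ : μ ∈ exponentsLE σ d) : weight L b μ + ν.degree ≤ weight L b ν :=
    weight_add_degree_le hb (mem_exponentsLE.mp hμ) hν
  have hquot {μ} (hμ : μ ∈ exponentsLE σ d) :
      PowerSeries.X ^ (weight L b ν - weight L b μ) * PowerSeries.expand L hL
        (PowerSeries.map MvPolynomial.C (h ν μ)) ∈
      seriesWithDenom (polySubring B₀ (exponentsLE σ d)) δ 0 C :=
    X_pow_mul_expand_mem_seriesWithDenom (r := ν.degree) hL (by have := hgap hμ; lia)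
      (map_C_mem_seriesWithDenom (hdiv.mem_seriesWithDenom ν hν μ))
  rw [dominantFamily, if_neg hν.not_ge, seriesEval_sum fun μ hμ => hconv
    (genericCoeff_mul_mem (hquot hμ)), rescaledValue,
    hdiv.seriesEval_eq_sum hg hs hφ hν, Finset.mul_sum, Finset.mul_sum]
  refine Finset.sum_congr rfl fun μ hμ => ?_
  rw [seriesEval_mul (hconv (genericCoeff_mem B₀ δ C)) (hconv (hquot hμ)), ← mul_assoc, hc μ hμ,
    seriesEval_X_pow_mul, seriesEval_expand, seriesEval_map, eval₂Hom_comp_C, rescaledValue,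
    ← Nat.sub_add_cancel (le_of_add_le_left (hgap hμ)), pow_add, Nat.add_sub_cancel]
  ring

lemma mul_seriesEval_seriesOfCoeffs {T : Finset (σ →₀ ℕ)}
    {F : (σ →₀ ℕ) → PowerSeries (MvPolynomial T B)} {f : PowerSeries (MvPolynomial σ B)}
    (hf : IsNormalizedSeries B₀ δ C f) (hF : IsCoeffFamily (polySubring B₀ T) δ C d F)
    (hb : ∀ i, (b i + 1) * (d + 1) ≤ L) (hs : Absorbs δ C (ϖ ^ L)) (hϖ : Absorbs δ C ϖ)
    (hφ : ∀ b ∈ B₀, ‖φ b‖ ≤ 1) {w : T → K} (hw : ∀ μ, ‖w μ‖ ≤ 1) {c : K}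
    (hc : ∀ ν, c * seriesEval (eval₂Hom φ w) ϖ (F ν) = rescaledValue L b (scaledCoeff f) ϖ φ ν)
    {u : σ → K} (hu : ∀ i, ‖u i‖ ≤ 1) (hu' : ∀ i, ‖ϖ ^ b i * u i‖ ≤ 1) :
    c * seriesEval (eval₂Hom (eval₂Hom φ w) fun i => ϖ ^ b i * u i) ϖ (seriesOfCoeffs d F) =
      seriesEval (eval₂Hom φ u) (ϖ ^ L) f := by
  rw [hF.seriesEval_seriesOfCoeffs hϖ
    (fun q hq => norm_eval₂Hom_le_one_of_mem_polySubring hφ hw hq) hu',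
    hf.seriesEval_eq_tsum hs hφ hu, ← tsum_mul_left]
  refine tsum_congr fun ν => ?_
  rw [← mul_assoc, hc, rescaledValue, mul_right_comm, pow_weight_mul_prod hb]
  ring

end RescaledFamily

section Dominant

lemma card_le_of_rescaling {K : Type*} [NormedField K] [IsUltrametricDist K] {σ : Type*} [Finite σ]
    {Z Z' : Set (σ → K)} {a : σ → K} (ha : ∀ i, a i ≠ 0) (hZ : ∀ u ∈ Z, ∀ i, ‖u i‖ ≤ 1)
    (hZZ' : ∀ u : σ → K, (∀ i, ‖u i‖ ≤ 1) → ((fun i => a i * u i) ∈ Z' ↔ u ∈ Z)) {N : ℕ}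
    (hN : ∀ S : Finset (σ → K), (∀ z ∈ S, IsIsolatedIn Z' z) → S.card ≤ N)
    {S : Finset (σ → K)} (hS : ∀ z ∈ S, IsIsolatedIn Z z) : S.card ≤ N := by
  classical
  let θ : (σ → K) → σ → K := fun u i => a i * u i
  let ψ : (σ → K) → σ → K := fun v i => (a i)⁻¹ * v i
  have left_inv : Function.LeftInverse ψ θ := fun u =>
    funext fun i => inv_mul_cancel_left₀ (ha i) (u i)
  have right_inv : Function.RightInverse ψ θ := fun v =>
    funext fun i => mul_inv_cancel_left₀ (ha i) (v i)
  have hψc : Continuous ψ := by fun_prop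
  rw [← Finset.card_image_of_injective S left_inv.injective]
  refine hN _ fun z hz => ?_
  obtain ⟨u, hu, rfl⟩ := Finset.mem_image.mp hz
  have hu1 := hZ u (hS u hu).1
  refine IsIsolatedIn.of_map (ψ := ψ) (by rw [left_inv]; exact hS u hu) right_inv.injective
    hψc.continuousAt ((hZZ' u hu1).mpr (hS u hu).1) ?_
  have hpoly := hψc.continuousAt.eventually
    (eventually_norm_le_one (u := ψ (θ u)) (by rwa [left_inv]))
  filter_upwards [hpoly] with v hv hvZ
  exact (hZZ' _ hv).mp (by rwa [← right_inv v] at hvZ)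

/-- After the rescaling by `b`, the coefficient of index `μ₀` of the specialization is larger than
all others of degree at most `d` by a factor `‖ϖ‖⁻¹`. -/
def IsDominant {B : Type*} [CommRing B] {σ : Type*} [Fintype σ] {K : Type*} [NormedField K]
    (L : ℕ) (b : σ → ℕ) (d : ℕ) (g : (σ →₀ ℕ) → PowerSeries B) (ϖ : K) (φ : B →+* K)
    (μ₀ : σ →₀ ℕ) : Prop :=
  rescaledValue L b g ϖ φ μ₀ ≠ 0 ∧ ∀ μ ∈ exponentsLE σ d, μ ≠ μ₀ →
    ‖rescaledValue L b g ϖ φ μ‖ ≤ ‖ϖ‖ * ‖rescaledValue L b g ϖ φ μ₀‖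

/-- The rescaled system `f`, with the series of index `i₀` adjoined a second time after division by
its dominant coefficient, so that `hasUniformBound_of_monomial` applies. -/
noncomputable def dominantSystem {B : Type*} [CommRing B] {σ : Type*} [Fintype σ] {ι : Type*}
    {L : ℕ} (hL : L ≠ 0) (b : σ → ℕ) (d : ℕ) (μ₀ : σ →₀ ℕ)
    (h : (σ →₀ ℕ) → (σ →₀ ℕ) → PowerSeries B) (f : ι → PowerSeries (MvPolynomial σ B)) :
    Option ι → PowerSeries (MvPolynomial σ (MvPolynomial (exponentsLE σ d) B))
  | none => seriesOfCoeffs d (dominantFamily hL b d μ₀ h)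
  | some i => seriesOfCoeffs d (rescaledFamily (exponentsLE σ d) hL b (scaledCoeff (f i)))

lemma mem_polydiscZeros_dominantSystem_iff {B : Type*} [CommRing B] {B₀ : Subring B} {δ : DenomSeq}
    {C d L : ℕ} {σ ι : Type*} [Fintype σ] {f : ι → PowerSeries (MvPolynomial σ B)}
    (hf : ∀ i, IsNormalizedSeries B₀ δ C (f i)) {i₀ : ι}
    {h : (σ →₀ ℕ) → (σ →₀ ℕ) → PowerSeries B}
    (hdiv : IsCoeffDivision B₀ δ C d (scaledCoeff (f i₀)) h) {b : σ → ℕ} (hL : L ≠ 0)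
    (hb : ∀ i, (b i + 1) * (d + 1) ≤ L) {μ₀ : σ →₀ ℕ}
    {K : Type*} [NormedField K] [IsUltrametricDist K] [CompleteSpace K] {ϖ : K} {φ : B →+* K}
    (hs : Absorbs δ C (ϖ ^ L)) (hϖ : Absorbs δ C ϖ) (hφ : ∀ b ∈ B₀, ‖φ b‖ ≤ 1)
    {w : exponentsLE σ d → K} (hw : ∀ μ, ‖w μ‖ ≤ 1) {c : K} (hc0 : c ≠ 0)
    (hc : ∀ μ ∈ exponentsLE σ d,
      c * seriesEval (eval₂Hom φ w) ϖ (genericCoeff B (exponentsLE σ d) μ₀ μ) =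
        rescaledValue L b (scaledCoeff (f i₀)) ϖ φ μ) {u : σ → K} (hu : ∀ i, ‖u i‖ ≤ 1) :
    (fun i => ϖ ^ b i * u i) ∈
        polydiscZeros ϖ (eval₂Hom φ w) (dominantSystem hL b d μ₀ h f) ↔
      u ∈ polydiscZeros (ϖ ^ L) φ f := by
  have hu' (i : σ) : ‖ϖ ^ b i * u i‖ ≤ 1 := by
    rw [norm_mul, norm_pow]
    exact mul_le_one₀ (pow_le_one₀ (norm_nonneg _) hϖ.norm_lt_one.le) (norm_nonneg _) (hu i)
  have eval_none := mul_seriesEval_seriesOfCoeffs (hf i₀)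
    (isCoeffFamily_dominantFamily (hL := hL) (μ₀ := μ₀) hb hdiv) hb hs hϖ hφ hw
    (mul_seriesEval_dominantFamily hb hdiv (hf i₀).scaledCoeff_mem hs hϖ hφ hw hc) hu hu'
  have eval_some (i : ι) := mul_seriesEval_seriesOfCoeffs (c := 1) (hf i)
    (isCoeffFamily_rescaledFamily (hL := hL) (exponentsLE σ d) hb (hf i).scaledCoeff_mem) hb hs hϖ
    hφ hw (fun ν => by rw [one_mul, seriesEval_rescaledFamily]) hu hu'
  simp only [one_mul] at eval_some
  constructor
  · exact fun hmem => ⟨hu, fun i => (eval_some i).symm.trans (hmem.2 (some i))⟩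
  · refine fun hmem => ⟨hu', fun o => ?_⟩
    cases o with
    | none => exact (mul_eq_zero.mp (eval_none.trans (hmem.2 i₀))).resolve_left hc0
    | some i => exact (eval_some i).trans (hmem.2 i)

lemma exists_card_le_of_isDominant {B : Type} [CommRing B] [Nontrivial B] [Algebra ℚ B]
    {B₀ : Subring B} [IsNoetherianRing B₀] {δ : DenomSeq} {n : ℕ} (H : UniformFiniteness δ n)
    {C d L : ℕ} {ι : Type} [Finite ι] {f : ι → PowerSeries (MvPolynomial (Fin (n + 1)) B)}
    (hf : ∀ i, IsNormalizedSeries B₀ δ C (f i)) {i₀ : ι}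
    {h : (Fin (n + 1) →₀ ℕ) → (Fin (n + 1) →₀ ℕ) → PowerSeries B}
    (hdiv : IsCoeffDivision B₀ δ C d (scaledCoeff (f i₀)) h) {b : Fin (n + 1) → ℕ}
    (hb : ∀ i, (b i + 1) * (d + 1) ≤ L) {μ₀ : Fin (n + 1) →₀ ℕ} (hμ₀ : μ₀.degree ≤ d) :
    ∃ N C' : ℕ, ∀ (K : Type) [NormedField K] [IsUltrametricDist K] [CompleteSpace K]
      [IsAlgClosed K] (ϖ : K) (φ : B →+* K), Absorbs δ (C' * L) (ϖ ^ L) →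
      (∀ b ∈ B₀, ‖φ b‖ ≤ 1) → IsDominant L b d (scaledCoeff (f i₀)) ϖ φ μ₀ →
      ∀ S : Finset (Fin (n + 1) → K),
        (∀ z ∈ S, IsIsolatedIn (polydiscZeros (ϖ ^ L) φ f) z) → S.card ≤ N := by
  have hL : L ≠ 0 := ((by positivity : 0 < (b 0 + 1) * (d + 1)).trans_le (hb 0)).ne'
  have hmem (o : Option ι) : dominantSystem hL b d μ₀ h f o ∈
      controlledSeries (polySubring B₀ (exponentsLE (Fin (n + 1)) d)) δ C (Fin (n + 1)) := by
    cases o with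
    | none => exact (isCoeffFamily_dominantFamily hb hdiv).seriesOfCoeffs_mem
    | some i => exact (isCoeffFamily_rescaledFamily _ hb (hf i).scaledCoeff_mem).seriesOfCoeffs_mem
  obtain ⟨N, C', hN⟩ := hasUniformBound_of_monomial H hmem none μ₀
    (coeff_zero_seriesOfCoeffs_dominantFamily hμ₀)
  refine ⟨N, C' + C, fun K _ _ _ _ ϖ φ hs hφ ⟨hne, hdom⟩ S hS => ?_⟩
  have hϖ : Absorbs δ (C' + C) ϖ := hs.root hL rfl
  have hsC : Absorbs δ C (ϖ ^ L) := hs.mono (by nlinarith [Nat.one_le_iff_ne_zero.mpr hL])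
  have hϖ0 : ϖ ≠ 0 := norm_pos_iff.mp hϖ.norm_pos
  obtain ⟨w, hw, hc⟩ := exists_specialization φ hϖ0 hne hdom
  exact card_le_of_rescaling (fun i => pow_ne_zero (b i) hϖ0) (fun u hu => hu.1)
    (fun u hu => mem_polydiscZeros_dominantSystem_iff hf hdiv hL hb hsC (hϖ.mono (by lia)) hφ hw
      hne hc hu)
    (hN K ϖ _ (hϖ.mono (by lia)) fun q hq => norm_eval₂Hom_le_one_of_mem_polySubring hφ hw hq) hS

end Dominant

/-! ### Induction on the number of variables -/

section Normalization

variable {B : Type} [CommRing B] {B₀ : Subring B} {δ : DenomSeq} {C n : ℕ}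

lemma isNormalizedSeries_X_pow_mul_expand {σ : Type*} {f : PowerSeries (MvPolynomial σ B)}
    {E₁ E : ℕ} (hE : E ≠ 0) (hE₁ : E₁ ≤ E)
    (hf : ∀ k, PowerSeries.coeff k f ∈ polyWithDenom B₀ δ σ (C * k) (E₁ * (k + 1))) :
    IsNormalizedSeries B₀ δ C (PowerSeries.X ^ E * PowerSeries.expand E hE f) := by
  intro k
  rw [PowerSeries.coeff_X_pow_mul']
  split_ifs with hk
  · rw [PowerSeries.coeff_expand]
    split_ifs with hdvd
    · obtain ⟨j, hj⟩ := hdvd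
      have hkj : k = E * (j + 1) := by rw [mul_add, mul_one, ← hj, Nat.sub_add_cancel hk]
      rw [hj, Nat.mul_div_cancel_left _ (Nat.pos_of_ne_zero hE), hkj]
      have hjE : j ≤ E * (j + 1) := by nlinarith [Nat.pos_of_ne_zero hE]
      exact polyWithDenom_mono (Nat.mul_le_mul_left C hjE) (Nat.mul_le_mul_right _ hE₁) (hf j)
    · exact zero_mem _
  · exact zero_mem _

/-- The substitution `s ↦ s ^ E` and a multiplication by `s ^ E` make the degree of the coefficient
of `s ^ k` at most `k`. -/
lemma hasUniformBound_of_normalized {ι : Type} [Finite ι]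
    {f : ι → PowerSeries (MvPolynomial (Fin n) B)}
    (hf : ∀ i, f i ∈ controlledSeries B₀ δ C (Fin n))
    (H : ∀ f' : ι → PowerSeries (MvPolynomial (Fin n) B),
      (∀ i, IsNormalizedSeries B₀ δ C (f' i)) → HasUniformBound B₀ δ f') :
    HasUniformBound B₀ δ f := by
  have := Fintype.ofFinite ι
  choose E₁ hE₁ using hf
  let E := 1 + ∑ i, E₁ i
  have hE : E ≠ 0 := by lia
  have hle (i : ι) : E₁ i ≤ E :=
    (Finset.single_le_sum (fun _ _ => Nat.zero_le _) (Finset.mem_univ i)).trans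
      (Nat.le_add_left _ _)
  obtain ⟨N, C', hN⟩ := H (fun i => PowerSeries.X ^ E * PowerSeries.expand E hE (f i))
    fun i => isNormalizedSeries_X_pow_mul_expand hE (hle i) (hE₁ i)
  refine ⟨N, C' * E, fun K _ _ _ _ s φ hs hφ S hS => ?_⟩
  obtain ⟨ϖ, rfl⟩ := IsAlgClosed.exists_pow_nat_eq s (Nat.pos_of_ne_zero hE)
  have zeros_eq : polydiscZeros ϖ φ (fun i => PowerSeries.X ^ E * PowerSeries.expand E hE (f i)) =
      polydiscZeros (ϖ ^ E) φ f := by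
    ext u
    simp only [polydiscZeros, seriesEval_X_pow_mul, seriesEval_expand, mul_eq_zero,
      norm_pos_iff.mp hs.norm_pos, false_or]
  exact hN K ϖ φ (hs.root hE rfl) hφ S fun z hz => zeros_eq ▸ hS z hz

end Normalization

section VanishingSystem

variable {B : Type*} [CommRing B]

lemma not_isIsolatedIn_polydiscZeros {K : Type*} [NormedField K] [IsUltrametricDist K] {s : K}
    {φ : B →+* K} {ι σ : Type*} [Finite σ] [Nonempty σ] {f : ι → PowerSeries (MvPolynomial σ B)}
    (hs0 : 0 < ‖s‖) (hs1 : ‖s‖ < 1)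
    (hf : ∀ u : σ → K, (∀ i, ‖u i‖ ≤ 1) → ∀ i, seriesEval (eval₂Hom φ u) s (f i) = 0)
    (z : σ → K) : ¬ IsIsolatedIn (polydiscZeros s φ f) z := by
  rintro ⟨hz, hev⟩
  have tendsto_z : Tendsto (fun (k : ℕ) i => z i + s ^ k) atTop (𝓝 z) := by
    refine tendsto_pi_nhds.mpr fun i => ?_
    simpa using (tendsto_pow_atTop_nhds_zero_of_norm_lt_one hs1).const_add (z i)
  obtain ⟨k, heq, hpoly⟩ :=
    ((tendsto_z.eventually hev).and (tendsto_z.eventually (eventually_norm_le_one hz.1))).exists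
  have hpow : s ^ k = 0 := by
    simpa using congrFun (heq ⟨hpoly, hf _ hpoly⟩) (Classical.arbitrary σ)
  exact pow_ne_zero k (norm_pos_iff.mp hs0) hpow

lemma seriesEval_eq_zero_of_isCoeffDivision {σ : Type*} [Finite σ] {B₀ : Subring B}
    {δ : DenomSeq} {C d : ℕ} {f : PowerSeries (MvPolynomial σ B)}
    (hf : IsNormalizedSeries B₀ δ C f) {h : (σ →₀ ℕ) → (σ →₀ ℕ) → PowerSeries B}
    (hdiv : IsCoeffDivision B₀ δ C d (scaledCoeff f) h) {K : Type*} [NormedField K]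
    [IsUltrametricDist K] [CompleteSpace K] {s : K} {φ : B →+* K} (hs : Absorbs δ C s)
    (hφ : ∀ b ∈ B₀, ‖φ b‖ ≤ 1)
    (h0 : ∀ μ ∈ exponentsLE σ d, seriesEval φ s (scaledCoeff f μ) = 0) {u : σ → K}
    (hu : ∀ i, ‖u i‖ ≤ 1) : seriesEval (eval₂Hom φ u) s f = 0 := by
  have := Fintype.ofFinite σ
  have hall (ν : σ →₀ ℕ) : seriesEval φ s (scaledCoeff f ν) = 0 := by
    obtain hν | hν := le_or_gt ν.degree d
    · exact h0 ν (mem_exponentsLE.mpr hν)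
    · rw [hdiv.seriesEval_eq_sum hf.scaledCoeff_mem hs hφ hν]
      exact Finset.sum_eq_zero fun μ hμ => by rw [h0 μ hμ, mul_zero]
  simp only [hf.seriesEval_eq_tsum hs hφ hu, hall, mul_zero, zero_mul, tsum_zero]

end VanishingSystem

section InductionStep

lemma norm_rescaledValue {B : Type*} [CommRing B] {σ : Type*} [Fintype σ] {K : Type*}
    [NormedField K] {L d : ℕ} {b : σ → ℕ} (hb : ∀ i, (b i + 1) * (d + 1) ≤ L)
    (g : (σ →₀ ℕ) → PowerSeries B) {ϖ : K} (hϖ : ϖ ≠ 0) (φ : B →+* K) (ν : σ →₀ ℕ) :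
    ‖rescaledValue L b g ϖ φ ν‖ = ‖ϖ‖ ^ (L * ν.degree) * ‖seriesEval φ (ϖ ^ L) (g ν)‖ *
      ‖ϖ‖⁻¹ ^ ∑ i, b i * ν i := by
  rw [rescaledValue, ← weight_add_sum hb ν, norm_mul, norm_pow, pow_add, inv_pow]
  have := norm_ne_zero_iff.mpr hϖ
  field_simp

lemma exists_isDominant {B : Type*} [CommRing B] {n d L M : ℕ} {g : (Fin n →₀ ℕ) → PowerSeries B}
    {K : Type*} [NormedField K] {ϖ : K} {φ : B →+* K} (hϖ : ϖ ≠ 0) (hϖ1 : ‖ϖ‖ < 1)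
    (hM : ∀ μ : Fin n →₀ ℕ, μ.degree ≤ d → ∑ j, μ j * (d + 1) ^ (j : ℕ) ≤ M)
    (hL : ∀ x ≤ 2 * M + 1, ∀ j : Fin n, (x * (d + 1) ^ (j : ℕ) + 1) * (d + 1) ≤ L)
    {μ₁ : Fin n →₀ ℕ} (hμ₁ : μ₁.degree ≤ d) (hne : seriesEval φ (ϖ ^ L) (g μ₁) ≠ 0) :
    ∃ x ≤ 2 * M + 1, ∃ μ₀ ∈ exponentsLE (Fin n) d,
      IsDominant L (fun j : Fin n => x * (d + 1) ^ (j : ℕ)) d g ϖ φ μ₀ := by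
  have hpos : 0 < ‖ϖ‖ := norm_pos_iff.mpr hϖ
  obtain ⟨x, hx, μ₀, hγ, hgap⟩ := exists_gap
    (N := fun μ : exponentsLE (Fin n) d => ∑ j, μ.1 j * (d + 1) ^ (j : ℕ))
    (γ := fun μ => ‖ϖ‖ ^ (L * μ.1.degree) * ‖seriesEval φ (ϖ ^ L) (g μ.1)‖) (Q := ‖ϖ‖⁻¹)
    (fun μ ν h => Subtype.ext <|
      eq_of_sum_mul_pow_eq (mem_exponentsLE.mp μ.2) (mem_exponentsLE.mp ν.2) h)
    (fun μ => hM μ (mem_exponentsLE.mp μ.2)) (fun μ => by positivity)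
    ⟨⟨μ₁, mem_exponentsLE.mpr hμ₁⟩,
      mul_ne_zero (pow_ne_zero _ hpos.ne') (norm_ne_zero_iff.mpr hne)⟩ ((one_lt_inv₀ hpos).mpr hϖ1)
  have norm_value (μ : Fin n →₀ ℕ) :
      ‖rescaledValue L (fun j : Fin n => x * (d + 1) ^ (j : ℕ)) g ϖ φ μ‖ =
        ‖ϖ‖ ^ (L * μ.degree) * ‖seriesEval φ (ϖ ^ L) (g μ)‖ *
          ‖ϖ‖⁻¹ ^ (x * ∑ j, μ j * (d + 1) ^ (j : ℕ)) := by
    rw [norm_rescaledValue (hL x hx) g hϖ, Finset.mul_sum]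
    simp only [mul_assoc, mul_comm, mul_left_comm]
  refine ⟨x, hx, μ₀, μ₀.2, ?_, fun μ hμ hμne => ?_⟩
  · rw [← norm_pos_iff, norm_value]
    positivity
  · rw [norm_value, norm_value, ← inv_mul_le_iff₀ hpos]
    exact hgap ⟨μ, hμ⟩ fun h => hμne (congrArg Subtype.val h)

variable {B : Type} [CommRing B] [Algebra ℚ B] {B₀ : Subring B} [IsNoetherianRing B₀]
  {δ : DenomSeq} {n C : ℕ} {ι : Type} [Finite ι]

lemma exists_common_isCoeffDivision {σ : Type*} [Finite σ]
    {g : ι → (σ →₀ ℕ) → PowerSeries B}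
    (hg : ∀ i ν, g i ν ∈ seriesWithDenom B₀ δ (C * ν.degree) C) :
    ∃ d C', C ≤ C' ∧ ∃ h : ι → (σ →₀ ℕ) → (σ →₀ ℕ) → PowerSeries B,
      ∀ i, IsCoeffDivision B₀ δ C' d (g i) (h i) := by
  have := Fintype.ofFinite ι
  choose d C₁ h hdiv using fun i => exists_isCoeffDivision (hg i)
  refine ⟨∑ i, d i, C + ∑ i, C₁ i, Nat.le_add_right _ _, h, fun i => hdiv i _ _ ?_ ?_⟩
  · exact Finset.single_le_sum (fun _ _ => Nat.zero_le _) (Finset.mem_univ i)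
  · exact (Finset.single_le_sum (fun _ _ => Nat.zero_le _) (Finset.mem_univ i)).trans
      (Nat.le_add_left _ _)

variable [Nontrivial B] {f : ι → PowerSeries (MvPolynomial (Fin (n + 1)) B)}

/-- Unless the system vanishes identically, some member has a dominant monomial for one of finitely
many choices of weights. -/
lemma hasUniformBound_of_isCoeffDivision (H : UniformFiniteness δ n) {d : ℕ}
    (hf : ∀ i, IsNormalizedSeries B₀ δ C (f i))
    {h : ι → (Fin (n + 1) →₀ ℕ) → (Fin (n + 1) →₀ ℕ) → PowerSeries B}
    (hdiv : ∀ i, IsCoeffDivision B₀ δ C d (scaledCoeff (f i)) (h i)) :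
    HasUniformBound B₀ δ f := by
  classical
  have := Fintype.ofFinite ι
  set M := (d + 1) ^ n * d
  set L := ((2 * M + 1) * (d + 1) ^ n + 1) * (d + 1)
  have hpow (j : Fin (n + 1)) : (d + 1) ^ (j : ℕ) ≤ (d + 1) ^ n :=
    Nat.pow_le_pow_right d.succ_pos (Nat.lt_succ_iff.mp j.2)
  have hM (μ : Fin (n + 1) →₀ ℕ) (hμ : μ.degree ≤ d) : ∑ j, μ j * (d + 1) ^ (j : ℕ) ≤ M := by
    simp only [mul_comm (μ _)]
    exact (sum_mul_le_mul_degree hpow μ).trans (Nat.mul_le_mul_left _ hμ)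
  have hL (x : ℕ) (hx : x ≤ 2 * M + 1) (j : Fin (n + 1)) :
      (x * (d + 1) ^ (j : ℕ) + 1) * (d + 1) ≤ L :=
    Nat.mul_le_mul_right _ (Nat.succ_le_succ (Nat.mul_le_mul hx (hpow j)))
  choose N C' hN using fun c : ι × Fin (2 * M + 2) × exponentsLE (Fin (n + 1)) d =>
    exists_card_le_of_isDominant H hf (hdiv c.1) (hL c.2.1 (Nat.lt_succ_iff.mp c.2.1.2))
      (mem_exponentsLE.mp c.2.2.2)
  refine ⟨∑ c, N c, C + (∑ c, C' c) * L, fun K _ _ _ _ s φ hs hφ S hS => ?_⟩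
  by_cases hzero : ∀ i, ∀ μ ∈ exponentsLE (Fin (n + 1)) d, seriesEval φ s (scaledCoeff (f i) μ) = 0
  · have hempty : S = ∅ := Finset.eq_empty_of_forall_notMem fun z hz =>
      not_isIsolatedIn_polydiscZeros hs.norm_pos hs.norm_lt_one
        (fun u hu i => seriesEval_eq_zero_of_isCoeffDivision (hf i) (hdiv i)
          (hs.mono (Nat.le_add_right _ _)) hφ (hzero i) hu) z (hS z hz)
    rw [hempty]
    exact Nat.zero_le _
  push Not at hzero
  obtain ⟨i, μ₁, hμ₁, hne⟩ := hzero
  have hL0 : 0 < L := Nat.mul_pos (Nat.succ_pos _) d.succ_pos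
  obtain ⟨ϖ, rfl⟩ := IsAlgClosed.exists_pow_nat_eq s hL0
  have hϖ : Absorbs δ (∑ c, C' c) ϖ := (hs.mono (Nat.le_add_left _ _)).root hL0.ne' rfl
  obtain ⟨x, hx, μ₀, hμ₀, hdom⟩ := exists_isDominant (norm_pos_iff.mp hϖ.norm_pos)
    hϖ.norm_lt_one hM hL (mem_exponentsLE.mp hμ₁) hne
  let c : ι × Fin (2 * M + 2) × exponentsLE (Fin (n + 1)) d := ⟨i, ⟨x, by lia⟩, ⟨μ₀, hμ₀⟩⟩
  have le_sum (F : _ → ℕ) : F c ≤ ∑ c, F c :=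
    Finset.single_le_sum (fun _ _ => Nat.zero_le _) (Finset.mem_univ c)
  exact (hN c K ϖ φ (hs.mono ((Nat.mul_le_mul_right L (le_sum C')).trans (Nat.le_add_left _ _)))
    hφ hdom S hS).trans (le_sum N)

lemma hasUniformBound_of_isNormalizedSeries (H : UniformFiniteness δ n)
    (hf : ∀ i, IsNormalizedSeries B₀ δ C (f i)) : HasUniformBound B₀ δ f := by
  obtain ⟨d, C', hC', h, hdiv⟩ := exists_common_isCoeffDivision fun i => (hf i).scaledCoeff_mem
  exact hasUniformBound_of_isCoeffDivision H (fun i => (hf i).mono hC') hdiv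

lemma uniformFiniteness (δ : DenomSeq) (n : ℕ) : UniformFiniteness δ n := by
  induction n with
  | zero => exact uniformFiniteness_zero δ
  | succ n ih =>
    intro B _ _ _ B₀ _ C ι _ f hf
    exact hasUniformBound_of_normalized hf fun f' => hasUniformBound_of_isNormalizedSeries ih

end InductionStep

/-! ### Sparse systems -/

section BinomialSeries

variable {R : Type*} [CommRing R] {R₀ : Subring R} {δ : DenomSeq} {σ τ : Type*}

lemma aeval_X_mem_polyWithDenom (Y : Polynomial ℤ) (l : σ) :
    Polynomial.aeval (X l) Y ∈ polyWithDenom R₀ δ σ 0 Y.natDegree := by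
  rw [Polynomial.aeval_eq_sum_range]
  refine sum_mem fun j hj => zsmul_mem ?_ _
  refine polyWithDenom_mono le_rfl ?_ (pow_mem_polyWithDenom (X_mem_polyWithDenom 0 l) j)
  rw [mul_one]
  exact Finset.mem_range_succ_iff.mp hj

lemma X_pow_mul_C_X_mem_controlledSeries {C : ℕ} (a : ℕ) (l : σ) :
    PowerSeries.X ^ a * PowerSeries.C (X l) ∈ controlledSeries R₀ δ C σ := by
  refine ⟨1, fun k => ?_⟩
  rw [PowerSeries.coeff_X_pow_mul', PowerSeries.coeff_C]
  split_ifs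
  · exact polyWithDenom_mono le_rfl (by lia) (X_mem_polyWithDenom _ l)
  · exact zero_mem _
  · exact zero_mem _

lemma C_C_X_mem_controlledSeries {C : ℕ} (x : τ) :
    PowerSeries.C (MvPolynomial.C (X x)) ∈ controlledSeries (polySubring R₀ τ) δ C σ :=
  C_mem_controlledSeries (m := 0) (C_mem_polyWithDenom (mem_withDenom_of_mem (X_mem_polySubring x)))

variable [Algebra ℚ R]

variable (R) in
/-- The binomial series `∑ tʲ / j! * e (e - 1) ⋯ (e - j + 1) * Y(u)ʲ * sʲ` in `s`, where the
variable `u = X l` and the exponent `e` are indeterminates; its value is `(1 + t s Y(u)) ^ e`. -/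
noncomputable def binomSeries (t : ℕ) (Y : Polynomial ℤ) (e : τ) (l : σ) :
    PowerSeries (MvPolynomial σ (MvPolynomial τ R)) :=
  PowerSeries.mk fun j =>
    C (C (algebraMap ℚ R (t ^ j / j.factorial)) * (descPochhammer _ j).eval (X e)) *
      (Polynomial.aeval (X l) Y) ^ j

lemma binomSeries_mem_controlledSeries {t : ℕ}
    (ht : ∀ j : ℕ, algebraMap ℚ R (t ^ j / j.factorial) ∈ withDenom R₀ δ j) (Y : Polynomial ℤ)
    (e : τ) (l : σ) : binomSeries R t Y e l ∈ controlledSeries (polySubring R₀ τ) δ 1 σ := by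
  refine ⟨Y.natDegree, fun j => ?_⟩
  rw [binomSeries, PowerSeries.coeff_mk]
  have hκ : C (algebraMap ℚ R (t ^ j / j.factorial)) ∈ withDenom (polySubring R₀ τ) δ j := by
    have := C_mem_polySubring (τ := τ) (ht j)
    rwa [C_mul, map_natCast] at this
  have he : (descPochhammer (MvPolynomial τ R) j).eval (X e) ∈ polySubring R₀ τ := by
    rw [descPochhammer_eval_eq_prod_range]
    exact prod_mem fun i _ => sub_mem (X_mem_polySubring e) (natCast_mem _ _)
  refine polyWithDenom_mono (N := j + 0 + 0) (by lia) (by lia)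
    (mul_mem_polyWithDenom (m := 0)
      (C_mem_polyWithDenom (mul_mem_withDenom hκ (mem_withDenom_of_mem he)))
      (pow_mem_polyWithDenom (aeval_X_mem_polyWithDenom Y l) j))

lemma seriesEval_binomSeries {K : Type*} [NormedField K] {t : ℕ} {Y : Polynomial ℤ} {e : τ} {l : σ}
    {s : K} {ρ : R →+* K} {w : τ → K} {a : ℕ} (hw : w e = a) (u : σ → K) :
    seriesEval (eval₂Hom (eval₂Hom ρ w) u) s (binomSeries R t Y e l) =
      (1 + t * s * Polynomial.aeval (u l) Y) ^ a := by
  have hκ (j : ℕ) : ρ (algebraMap ℚ R (t ^ j / j.factorial)) * j.factorial = (t : K) ^ j := by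
    rw [← RingHom.comp_apply, ← map_natCast (ρ.comp (algebraMap ℚ R)), ← map_mul,
      div_mul_cancel₀ _ (Nat.cast_ne_zero.mpr j.factorial_ne_zero), map_pow, map_natCast]
  have hY : eval₂Hom (eval₂Hom ρ w) u (Polynomial.aeval (X l) Y) = Polynomial.aeval (u l) Y := by
    rw [Polynomial.aeval_def, Polynomial.hom_eval₂, Polynomial.aeval_def, coe_eval₂Hom, eval₂_X]
    exact congrArg (Polynomial.eval₂ · (u l) Y) (RingHom.ext_int _ _)
  have hterm (j : ℕ) :
      eval₂Hom (eval₂Hom ρ w) u (PowerSeries.coeff j (binomSeries R t Y e l)) * s ^ j =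
        (t * s * Polynomial.aeval (u l) Y) ^ j * (a.choose j : K) := by
    have hdesc : eval₂Hom ρ w ((descPochhammer _ j).eval (X e)) = j.factorial * a.choose j := by
      rw [← Nat.cast_mul, ← Nat.descFactorial_eq_factorial_mul_choose,
        ← descPochhammer_eval_eq_descFactorial, descPochhammer_eval_eq_prod_range,
        descPochhammer_eval_eq_prod_range]
      simp [hw]
    rw [binomSeries, PowerSeries.coeff_mk, map_mul, map_pow, hY, coe_eval₂Hom, eval₂_C, map_mul,
      hdesc, coe_eval₂Hom, eval₂_C, ← mul_assoc, hκ]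
    ring
  simp only [seriesEval, hterm]
  rw [tsum_eq_sum (s := Finset.range (a + 1)), add_comm (1 : K), add_pow]
  · simp only [one_pow, mul_one]
  · intro j hj
    rw [Nat.choose_eq_zero_of_lt (by simpa using hj), Nat.cast_zero, mul_zero]

end BinomialSeries

section SparseSeries

/-- The common zeros, in the unit polydisc, of the sums `∑ cᵢⱼ xᵃʲ` of powers, in the coordinates
`u` given by `x = 1 + s u`. -/
def sparseZeros {K : Type*} [NormedField K] {k n m : ℕ} (s : K) (c : Fin k → Fin m → K)
    (a : Fin m → Fin n → ℕ) : Set (Fin n → K) :=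
  {u | (∀ i, ‖u i‖ ≤ 1) ∧ ∀ i, ∑ j, c i j * ∏ l, (1 + s * u l) ^ a j l = 0}

/-- The bound `N` on the number of isolated points of `sparseZeros s c a`, for all exponents `a`
and all coefficients `c` in the unit ball. -/
def SparseBoundAt {K : Type*} [NormedField K] (s : K) (k n m N : ℕ) : Prop :=
  ∀ (c : Fin k → Fin m → K), (∀ i j, ‖c i j‖ ≤ 1) → ∀ (a : Fin m → Fin n → ℕ)
    (S : Finset (Fin n → K)), (∀ z ∈ S, IsIsolatedIn (sparseZeros s c a) z) → S.card ≤ N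

lemma SparseBoundAt.mono {K : Type*} [NormedField K] {s : K} {k n m N N' : ℕ}
    (h : SparseBoundAt s k n m N) (hN : N ≤ N') : SparseBoundAt s k n m N' :=
  fun c hc a S hS => (h c hc a S hS).trans hN

/-- The indeterminates standing for the coefficients `c i j` and the exponents `a j l` of a sparse
system. -/
abbrev SparseParam (k n m : ℕ) : Type := (Fin k × Fin m) ⊕ (Fin m × Fin n)

variable {R : Type*} [CommRing R] [Algebra ℚ R] {R₀ : Subring R} {δ : DenomSeq} {k n m t : ℕ}

variable (R) in
/-- The `i`-th equation of a sparse system as a power series in `s`, with indeterminate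
coefficients and exponents. Each power `(1 + s u) ^ a` is split into `(1 + s u) ^ r` and a binomial
series, whose exponent is the quotient of `a` by some `P` if `r` is the remainder. -/
noncomputable def sparseSeries (t : ℕ) (Y : Polynomial ℤ) (r : Fin m → Fin n → ℕ) (i : Fin k) :
    PowerSeries (MvPolynomial (Fin n) (MvPolynomial (SparseParam k n m) R)) :=
  ∑ j, PowerSeries.C (C (X (Sum.inl (i, j)))) *
    ∏ l, (1 + PowerSeries.X * PowerSeries.C (X l)) ^ r j l *
      binomSeries R t Y (Sum.inr (j, l)) l

lemma sparseSeries_mem_controlledSeries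
    (ht : ∀ j : ℕ, algebraMap ℚ R (t ^ j / j.factorial) ∈ withDenom R₀ δ j) (Y : Polynomial ℤ)
    (r : Fin m → Fin n → ℕ) (i : Fin k) : sparseSeries R t Y r i ∈
      controlledSeries (polySubring R₀ (SparseParam k n m)) δ 1 (Fin n) :=
  sum_mem fun _ _ => mul_mem (C_C_X_mem_controlledSeries _) <| prod_mem fun l _ =>
    mul_mem (pow_mem (add_mem (one_mem _)
        (by simpa using X_pow_mul_C_X_mem_controlledSeries 1 l)) _)
      (binomSeries_mem_controlledSeries ht Y _ l)

variable {K : Type*} [NormedField K] [IsUltrametricDist K] [CompleteSpace K] {s : K} {ρ : R →+* K}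

lemma seriesEval_sparseSeries
    (ht : ∀ j : ℕ, algebraMap ℚ R (t ^ j / j.factorial) ∈ withDenom R₀ δ j) {Y : Polynomial ℤ}
    (hs : Absorbs δ 1 s) (hρ : ∀ b ∈ R₀, ‖ρ b‖ ≤ 1) {c : Fin k → Fin m → K}
    (hc : ∀ i j, ‖c i j‖ ≤ 1) (r q : Fin m → Fin n → ℕ) {u : Fin n → K} (hu : ∀ i, ‖u i‖ ≤ 1)
    (i : Fin k) :
    seriesEval (eval₂Hom (eval₂Hom ρ (Sum.elim (fun x => c x.1 x.2) fun x => (q x.1 x.2 : K))) u) s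
        (sparseSeries R t Y r i) =
      ∑ j, c i j * ∏ l,
        (1 + s * u l) ^ r j l * (1 + t * s * Polynomial.aeval (u l) Y) ^ q j l := by
  set w : SparseParam k n m → K := Sum.elim (fun x => c x.1 x.2) fun x => (q x.1 x.2 : K)
  have hw : ∀ x, ‖w x‖ ≤ 1 := by
    rintro (x | x)
    · exact hc _ _
    · exact IsUltrametricDist.norm_natCast_le_one K _
  set ev := seriesEvalHom (σ := Fin n) hs
    (fun b hb => norm_eval₂Hom_le_one_of_mem_polySubring hρ hw hb) hu
  have ev_apply f : ev f = seriesEval (eval₂Hom (eval₂Hom ρ w) u) s f := rfl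
  have hsum : (⟨_, sparseSeries_mem_controlledSeries ht Y r i⟩ : controlledSeries _ δ 1 (Fin n)) =
      ∑ j, ⟨_, C_C_X_mem_controlledSeries (Sum.inl (i, j))⟩ * ∏ l,
        ((1 + ⟨_, X_pow_mul_C_X_mem_controlledSeries 1 l⟩) ^ r j l *
          ⟨_, binomSeries_mem_controlledSeries ht Y (Sum.inr (j, l)) l⟩) := by
    ext1
    simp [sparseSeries]
  rw [← ev_apply ⟨_, sparseSeries_mem_controlledSeries ht Y r i⟩, hsum]
  simp only [map_sum, map_mul, map_prod, map_pow, map_add, map_one]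
  simp only [ev_apply, seriesEval_X_pow_mul, seriesEval_C, coe_eval₂Hom, eval₂_C, eval₂_X]
  refine Finset.sum_congr rfl fun j _ => congrArg (c i j * ·) <| Finset.prod_congr rfl fun l _ => ?_
  rw [pow_one, ← seriesEval_binomSeries (ρ := ρ) (e := Sum.inr (j, l)) (w := w) rfl]

lemma polydiscZeros_sparseSeries
    (ht : ∀ j : ℕ, algebraMap ℚ R (t ^ j / j.factorial) ∈ withDenom R₀ δ j) {Y : Polynomial ℤ}
    {P : ℕ} (hs : Absorbs δ 1 s) (hρ : ∀ b ∈ R₀, ‖ρ b‖ ≤ 1)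
    (hY : ∀ u : K, (1 + s * u) ^ P = 1 + t * s * Polynomial.aeval u Y) {c : Fin k → Fin m → K}
    (hc : ∀ i j, ‖c i j‖ ≤ 1) (a : Fin m → Fin n → ℕ) :
    polydiscZeros s
        (eval₂Hom ρ (Sum.elim (fun x => c x.1 x.2) fun x => ((a x.1 x.2 / P : ℕ) : K)))
        (sparseSeries R t Y fun j l => a j l % P) = sparseZeros s c a := by
  ext u
  refine and_congr_right fun hu => forall_congr' fun i => ?_
  rw [seriesEval_sparseSeries ht hs hρ hc _ (fun j l => a j l / P) hu]
  simp only [← hY, ← pow_mul, ← pow_add, Nat.mod_add_div]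

end SparseSeries

lemma exists_uniform_sparseBoundAt {R : Type} [CommRing R] [Nontrivial R] [Algebra ℚ R]
    {R₀ : Subring R} [IsNoetherianRing R₀] {δ : DenomSeq} {t P : ℕ} (hP : 0 < P)
    (ht : ∀ j : ℕ, algebraMap ℚ R (t ^ j / j.factorial) ∈ withDenom R₀ δ j) (Y : Polynomial ℤ)
    (k n m : ℕ) :
    ∃ N C : ℕ, ∀ (K : Type) [NormedField K] [IsUltrametricDist K] [CompleteSpace K]
      [IsAlgClosed K] (s : K) (ρ : R →+* K), Absorbs δ C s → (∀ b ∈ R₀, ‖ρ b‖ ≤ 1) →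
      (∀ u : K, (1 + s * u) ^ P = 1 + t * s * Polynomial.aeval u Y) → SparseBoundAt s k n m N := by
  choose N C hN using fun r : Fin m → Fin n → Fin P =>
    uniformFiniteness δ n _ (polySubring R₀ (SparseParam k n m)) 1 (Fin k) _
      (sparseSeries_mem_controlledSeries ht Y fun j l => (r j l : ℕ))
  refine ⟨∑ r, N r, 1 + ∑ r, C r, fun K _ _ _ _ s ρ hs hρ hY c hc a S hS => ?_⟩
  let r : Fin m → Fin n → Fin P := fun j l => ⟨a j l % P, Nat.mod_lt _ hP⟩
  have le_sum (f : (Fin m → Fin n → Fin P) → ℕ) : f r ≤ ∑ r, f r :=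
    Finset.single_le_sum (fun _ _ => Nat.zero_le _) (Finset.mem_univ r)
  have hw : ∀ x : SparseParam k n m,
      ‖Sum.elim (fun x => c x.1 x.2) (fun x => ((a x.1 x.2 / P : ℕ) : K)) x‖ ≤ 1 := by
    rintro (x | x)
    · exact hc _ _
    · exact IsUltrametricDist.norm_natCast_le_one K _
  refine (hN r K s _ (hs.mono ((le_sum C).trans (Nat.le_add_left _ _)))
    (fun b hb => norm_eval₂Hom_le_one_of_mem_polySubring hρ hw hb) S fun z hz => ?_).trans
    (le_sum N)
  rw [polydiscZeros_sparseSeries ht (hs.mono (Nat.le_add_right _ _)) hρ hY hc]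
  exact hS z hz

/-! ### `p`-adic estimates -/

section Padic

variable {p : ℕ} [hp : Fact p.Prime]

lemma norm_factorial_eq_norm_p_pow (N : ℕ) :
    ‖(N.factorial : ℚ_[p])‖ = ‖(p : ℚ_[p])‖ ^ padicValNat p N.factorial := by
  rw [Padic.norm_eq_zpow_neg_valuation (Nat.cast_ne_zero.mpr N.factorial_ne_zero),
    Padic.valuation_natCast, Padic.norm_p, zpow_neg, zpow_natCast, inv_pow]

lemma sub_one_mul_padicValNat_factorial_le (N : ℕ) :
    (p - 1) * padicValNat p N.factorial ≤ N :=
  (sub_one_mul_padicValNat_factorial N).trans_le (Nat.sub_le _ _)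

lemma norm_p_pow_le_norm_p_pow {v w : ℕ} (h : v ≤ w) : ‖(p : ℚ_[p])‖ ^ w ≤ ‖(p : ℚ_[p])‖ ^ v :=
  pow_le_pow_of_le_one (norm_nonneg _) Padic.norm_p_lt_one.le h

lemma pow_div_factorial_mem_withDenom_one (j : ℕ) :
    algebraMap ℚ ℚ_[p] (p ^ j / j.factorial) ∈ withDenom (PadicInt.subring p) .one j := by
  rw [mem_withDenom, PadicInt.mem_subring_iff]
  simp only [DenomSeq.one, Nat.cast_one, one_mul, map_div₀, map_pow, map_natCast, norm_div,
    norm_pow]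
  refine div_le_one_of_le₀ ?_ (norm_nonneg _)
  rw [norm_factorial_eq_norm_p_pow]
  refine norm_p_pow_le_norm_p_pow ?_
  calc padicValNat p j.factorial ≤ (p - 1) * padicValNat p j.factorial :=
        Nat.le_mul_of_pos_left _ (Nat.sub_pos_of_lt hp.out.one_lt)
    _ ≤ j := sub_one_mul_padicValNat_factorial_le j

variable {K : Type*} [NormedField K] [Algebra ℚ_[p] K]

lemma norm_natCast_of_isometry (hi : Isometry (algebraMap ℚ_[p] K)) (k : ℕ) :
    ‖(k : K)‖ = ‖(k : ℚ_[p])‖ := by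
  rw [← map_natCast (algebraMap ℚ_[p] K), hi.norm_map_of_map_zero (map_zero _)]

lemma absorbs_natCast_prime (hi : Isometry (algebraMap ℚ_[p] K)) {δ : DenomSeq} {C : ℕ}
    (h : ∀ k, ‖(p : ℚ_[p])‖ ^ k ≤ ‖(δ (C * k) : ℚ_[p])‖ ^ 2) : Absorbs δ C (p : K) where
  norm_pos := by
    rw [norm_natCast_of_isometry hi, norm_pos_iff]
    exact Nat.cast_ne_zero.mpr hp.out.ne_zero
  norm_lt_one := (norm_natCast_of_isometry hi p).trans_lt Padic.norm_p_lt_one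
  norm_pow_le k := by simpa only [norm_natCast_of_isometry hi] using h k

lemma absorbs_factorial_natCast_prime (hi : Isometry (algebraMap ℚ_[p] K)) {C : ℕ}
    (hC : 2 * C + 1 ≤ p) : Absorbs .factorial C (p : K) := by
  refine absorbs_natCast_prime hi fun k => ?_
  rw [DenomSeq.factorial, norm_factorial_eq_norm_p_pow, ← pow_mul]
  refine norm_p_pow_le_norm_p_pow ?_
  rcases C.eq_zero_or_pos with rfl | hC0
  · simp
  · refine Nat.le_of_mul_le_mul_left ?_ hC0
    calc C * (padicValNat p (C * k).factorial * 2)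
        = 2 * C * padicValNat p (C * k).factorial := by ring
      _ ≤ (p - 1) * padicValNat p (C * k).factorial :=
          Nat.mul_le_mul_right _ (Nat.le_sub_one_of_lt hC)
      _ ≤ C * k := sub_one_mul_padicValNat_factorial_le (p := p) _

lemma absorbs_one_natCast_prime (hi : Isometry (algebraMap ℚ_[p] K)) (C : ℕ) :
    Absorbs .one C (p : K) :=
  absorbs_natCast_prime hi fun k => by
    simpa [DenomSeq.one] using pow_le_one₀ (n := k) (norm_nonneg (p : ℚ_[p])) Padic.norm_p_lt_one.le

end Padic

lemma div_factorial_mem_withDenom_factorial (j : ℕ) :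
    algebraMap ℚ ℚ ((1 : ℕ) ^ j / j.factorial) ∈
      withDenom (Int.castRingHom ℚ).range .factorial j :=
  ⟨1, by simp [DenomSeq.factorial, Nat.factorial_ne_zero]⟩

lemma exists_one_add_mul_X_pow_eq (p : ℕ) : ∃ Y : Polynomial ℤ,
    (1 + (p : Polynomial ℤ) * Polynomial.X) ^ p =
      1 + (p : Polynomial ℤ) * (p : Polynomial ℤ) * Y := by
  obtain ⟨Y, hY⟩ := dvd_sub_pow_of_dvd_sub (p := p) (a := 1 + (p : Polynomial ℤ) * Polynomial.X)
    (b := 1) ⟨Polynomial.X, add_sub_cancel_left _ _⟩ 1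
  simp only [pow_one, one_pow, sub_eq_iff_eq_add] at hY
  exact ⟨Y, by rw [hY]; ring⟩

section SparseBound

lemma exists_sparseBoundAt_of_le (k n m : ℕ) : ∃ N C : ℕ, ∀ (p : ℕ) [Fact p.Prime], C ≤ p →
    ∀ (K : Type) [NormedField K] [IsUltrametricDist K] [CompleteSpace K] [IsAlgClosed K]
      [Algebra ℚ_[p] K], Isometry (algebraMap ℚ_[p] K) → SparseBoundAt (p : K) k n m N := by
  obtain ⟨N, C, h⟩ := exists_uniform_sparseBoundAt one_pos div_factorial_mem_withDenom_factorial
    Polynomial.X k n m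
  refine ⟨N, 2 * C + 1, fun p _ hC K _ _ _ _ _ hi => ?_⟩
  refine h K p ((algebraMap ℚ_[p] K).comp (algebraMap ℚ ℚ_[p]))
    (absorbs_factorial_natCast_prime hi hC) ?_ fun u => by simp
  rintro _ ⟨b, rfl⟩
  simpa using IsUltrametricDist.norm_intCast_le_one K b

lemma exists_sparseBoundAt_prime (p : ℕ) [hp : Fact p.Prime] (k n m : ℕ) : ∃ N : ℕ,
    ∀ (K : Type) [NormedField K] [IsUltrametricDist K] [CompleteSpace K] [IsAlgClosed K]
      [Algebra ℚ_[p] K], Isometry (algebraMap ℚ_[p] K) → SparseBoundAt (p : K) k n m N := by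
  obtain ⟨Y, hY⟩ := exists_one_add_mul_X_pow_eq p
  have : IsNoetherianRing (PadicInt.subring p) := inferInstanceAs (IsNoetherianRing ℤ_[p])
  obtain ⟨N, C, h⟩ := exists_uniform_sparseBoundAt hp.out.pos
    (pow_div_factorial_mem_withDenom_one (p := p)) Y k n m
  refine ⟨N, fun K _ _ _ _ _ hi => h K p (algebraMap ℚ_[p] K) (absorbs_one_natCast_prime hi C)
    (fun b hb => ?_) fun u => ?_⟩
  · rw [hi.norm_map_of_map_zero (map_zero _)]
    exact (PadicInt.mem_subring_iff p).mp hb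
  · simpa using congrArg (Polynomial.aeval u) hY

lemma exists_sparseBoundAt (k n m : ℕ) : ∃ N : ℕ, ∀ (p : ℕ) [Fact p.Prime] (K : Type)
    [NormedField K] [IsUltrametricDist K] [CompleteSpace K] [IsAlgClosed K] [Algebra ℚ_[p] K],
    Isometry (algebraMap ℚ_[p] K) → SparseBoundAt (p : K) k n m N := by
  obtain ⟨N, C, hN⟩ := exists_sparseBoundAt_of_le k n m
  choose M hM using fun p : Nat.Primes =>
    haveI : Fact (p : ℕ).Prime := ⟨p.2⟩
    exists_sparseBoundAt_prime p k n m
  have hfin : {p : Nat.Primes | (p : ℕ) < C}.Finite :=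
    (Set.finite_lt_nat C).preimage Subtype.val_injective.injOn
  refine ⟨N + ∑ p ∈ hfin.toFinset, M p, fun p hp K _ _ _ _ _ hi => ?_⟩
  rcases le_or_gt C p with hC | hC
  · exact (hN p hC K hi).mono (Nat.le_add_right _ _)
  · have hle : M ⟨p, hp.out⟩ ≤ ∑ p ∈ hfin.toFinset, M p :=
      Finset.single_le_sum (fun _ _ => Nat.zero_le _) (hfin.mem_toFinset.mpr hC)
    exact (hM ⟨p, hp.out⟩ K hi).mono (hle.trans (Nat.le_add_left _ _))

end SparseBound

/-! ### Roots of sparse polynomial systems -/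

section Roots

variable {K : Type*} [NormedField K]

lemma isIsolatedIn_of_isIsolatedRoot {k n : ℕ} {G : Fin k → MvPolynomial (Fin n) K}
    {ζ : Fin n → K} (h : IsIsolatedRoot G ζ) : IsIsolatedIn (zeroSet G) ζ := by
  refine ⟨h.1, ?_⟩
  have hempty : ∀ᶠ _ in 𝓝[zeroSet G \ {ζ}] ζ, False := h.2 ▸ Filter.eventually_bot
  filter_upwards [eventually_nhdsWithin_iff.mp hempty] with _ hw hwZ
  by_contra hne
  exact hw ⟨hwZ, hne⟩

lemma exists_ne_zero_forall_norm_coeff_div_le_one {σ : Type*} (g : MvPolynomial σ K) :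
    ∃ D : K, D ≠ 0 ∧ ∀ a, ‖g.coeff a / D‖ ≤ 1 := by
  rcases eq_or_ne g 0 with rfl | hg
  · exact ⟨1, one_ne_zero, by simp⟩
  obtain ⟨b, hb, hmax⟩ := Finset.exists_max_image g.support (fun a => ‖g.coeff a‖)
    (support_nonempty.mpr hg)
  refine ⟨g.coeff b, mem_support_iff.mp hb, fun a => ?_⟩
  rw [norm_div]
  refine div_le_one_of_le₀ ?_ (norm_nonneg _)
  by_cases ha : a ∈ g.support
  · exact hmax a ha
  · rw [notMem_support_iff.mp ha, norm_zero]
    exact norm_nonneg _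

lemma sum_coeff_mul_prod_eq_eval {R σ ι : Type*} [CommSemiring R] [Fintype σ] [Fintype ι]
    {U : Finset (σ →₀ ℕ)} (e : U ≃ ι) {g : MvPolynomial σ R} (hg : g.support ⊆ U) (x : σ → R) :
    ∑ j, g.coeff (e.symm j).1 * ∏ l, x l ^ (e.symm j).1 l = eval x g := by
  rw [eval_eq', Finset.sum_subset hg fun a _ ha => by rw [notMem_support_iff.mp ha, zero_mul],
    e.symm.sum_comp fun a : U => g.coeff a.1 * ∏ l, x l ^ a.1 l, Finset.sum_coe_sort U fun a =>
      g.coeff a * ∏ l, x l ^ a l]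

variable {s : K} {k n m N : ℕ} {G : Fin k → MvPolynomial (Fin n) K}

lemma isIsolatedIn_sparseZeros (hs : s ≠ 0) {c : Fin k → Fin m → K} {a : Fin m → Fin n → ℕ}
    (hG : zeroSet G = {x | ∀ i, ∑ j, c i j * ∏ l, x l ^ a j l = 0}) {x : Fin n → K}
    (hx : IsIsolatedRoot G x) (hxs : ∀ i, ‖x i - 1‖ ≤ ‖s‖) :
    IsIsolatedIn (sparseZeros s c a) fun l => (x l - 1) / s := by
  let ψ : (Fin n → K) → Fin n → K := fun u l => 1 + s * u l
  have hψx : ψ (fun l => (x l - 1) / s) = x := by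
    funext l
    simp only [ψ, mul_div_cancel₀ _ hs, add_sub_cancel]
  have hψ : Function.Injective ψ := fun u v h => funext fun l =>
    mul_left_cancel₀ hs (add_left_cancel (congrFun h l))
  have hmem (u : Fin n → K) : u ∈ sparseZeros s c a ↔ (∀ i, ‖u i‖ ≤ 1) ∧ ψ u ∈ zeroSet G := by
    rw [hG]; rfl
  refine IsIsolatedIn.of_map (ψ := ψ) (Z := zeroSet G) ?_ hψ (by fun_prop) ?_
    (.of_forall fun u hu => ((hmem u).mp hu).2)
  · exact hψx.symm ▸ isIsolatedIn_of_isIsolatedRoot hx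
  · refine (hmem _).mpr ⟨fun i => ?_, hψx.symm ▸ hx.1⟩
    rw [norm_div]
    exact div_le_one_of_le₀ (hxs i) (norm_nonneg _)

lemma SparseBoundAt.card_isIsolatedRoot_le (hs : s ≠ 0) (hN : SparseBoundAt s k n m N)
    (hm : (Finset.univ.biUnion fun i => (G i).support).card = m) {S : Finset (Fin n → K)}
    (hS : ∀ x ∈ S, IsIsolatedRoot G x ∧ ∀ i, ‖x i - 1‖ ≤ ‖s‖) : S.card ≤ N := by
  classical
  let e := Finset.equivFinOfCardEq hm
  choose D hD0 hD using fun i => exists_ne_zero_forall_norm_coeff_div_le_one (G i)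
  have hG : zeroSet G = {x | ∀ i, ∑ j, (G i).coeff (e.symm j).1 / D i *
      ∏ l, x l ^ (e.symm j).1 l = 0} := by
    ext x
    refine forall_congr' fun i => ?_
    simp only [div_mul_eq_mul_div, ← Finset.sum_div, div_eq_zero_iff, hD0 i, or_false,
      sum_coeff_mul_prod_eq_eval e
        (Finset.subset_biUnion_of_mem (fun i => (G i).support) (Finset.mem_univ i))]
  have hinj : Function.Injective fun (x : Fin n → K) l => (x l - 1) / s := fun x y h =>
    funext fun l => sub_left_injective ((div_left_inj' hs).mp (congrFun h l))
  rw [← Finset.card_image_of_injective S hinj]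
  refine hN (fun i j => (G i).coeff (e.symm j).1 / D i) (fun i _ => hD i _)
    (fun j l => (e.symm j).1 l) _ fun z hz => ?_
  obtain ⟨x, hx, rfl⟩ := Finset.mem_image.mp hz
  exact isIsolatedIn_sparseZeros hs hG (hS x hx).1 (hS x hx).2

lemma finite_and_ncard_le_of_forall_card_le {α : Type*} {A : Set α} {N : ℕ}
    (h : ∀ S : Finset α, ↑S ⊆ A → S.card ≤ N) : A.Finite ∧ A.ncard ≤ N := by
  have hfin : A.Finite := by
    by_contra hinf
    obtain ⟨S, hSA, hS⟩ := Set.Infinite.exists_subset_card_eq hinf (N + 1)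
    exact (h S hSA).not_gt (hS ▸ N.lt_succ_self)
  refine ⟨hfin, ?_⟩
  rw [Set.ncard_eq_toFinset_card A hfin]
  exact h _ fun x hx => hfin.mem_toFinset.mp hx

end Roots

end Lipshitz

theorem lipshitz_sparse_bound_general : ∃ β : ℕ → ℕ → ℕ → ℕ, ∀ (p : ℕ) [Fact p.Prime]
    (K : Type) [NormedField K] [IsUltrametricDist K] [CompleteSpace K] [IsAlgClosed K]
    [Algebra ℚ_[p] K], Isometry (algebraMap ℚ_[p] K) →
    ∀ (k n m : ℕ) (G : Fin k → MvPolynomial (Fin n) K),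
      (Finset.univ.biUnion fun i => (G i).support).card = m →
      {x : Fin n → K | IsIsolatedRoot G x ∧ ∀ i, ‖x i - 1‖ ≤ 1 / (p : ℝ)}.Finite ∧
      {x : Fin n → K | IsIsolatedRoot G x ∧ ∀ i, ‖x i - 1‖ ≤ 1 / (p : ℝ)}.ncard ≤ β k n m := by
  choose β hβ using Lipshitz.exists_sparseBoundAt
  refine ⟨β, fun p _ K _ _ _ _ _ hi k n m G hm => ?_⟩
  have hnorm : ‖(p : K)‖ = 1 / (p : ℝ) := by
    rw [Lipshitz.norm_natCast_of_isometry hi, Padic.norm_p, one_div]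
  have hp : (p : K) ≠ 0 := norm_pos_iff.mp (Lipshitz.absorbs_one_natCast_prime hi 0).norm_pos
  rw [← hnorm]
  exact Lipshitz.finite_and_ncard_le_of_forall_card_le fun S hS =>
    (hβ k n m p K hi).card_isIsolatedRoot_le hp hm fun x hx => hS hx

/-- **Lipshitz's Theorem.** There is a constant `β'(n,m)`, independent of the prime `p`, such
that any `n × n` `m`-sparse polynomial system over `ℂ_p` has at most `β'(n,m)` isolated roots
`x ∈ ℂ_pⁿ` with `|xᵢ - 1|_p ≤ 1/p` for all `i`. -/
theorem lipshitz_sparse_bound : ∃ β' : ℕ × ℕ → ℕ, LipshitzBound β' := by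
  obtain ⟨β, hβ⟩ := lipshitz_sparse_bound_general
  exact ⟨fun nm => β nm.1 nm.1 nm.2, fun p _ Cp _ _ _ _ _ hi _ n m G hG =>
    (hβ p Cp hi n n m G hG.2).imp_right Nat.cast_le.mpr⟩
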